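/- arXiv:1608.01915 — 2 statements merged into one kernel-verified Lean document; each statement's English description precedes it below -/
import Mathlib

section
/- Let (Y,‖·‖_Y) be a Banach space that admits an equivalent uniformly convex norm. Then there exists c = c(Y) ∈ (0,∞) such that for every n ∈ ℕ, every n-dimensional normed space (X,‖·‖_X), and every ε ∈ (0,1/2], one has r^{X→Y}(ε) ≥ exp(−1/ε^{cn}). -/
open MeasureTheory Metric Set

noncomputable section

/-- `N` is a norm on the real vector space `V`. -/
def IsNorm {V : Type*} [AddCommGroup V] [Module ℝ V] (N : V → ℝ) : Prop :=
  (∀ x, N x = 0 → x = 0) ∧ (∀ (a : ℝ) (x : V), N (a • x) = |a| * N x) ∧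
    (∀ x y : V, N (x + y) ≤ N x + N y)

/-- The norm `N` is uniformly convex. -/
def UniformlyConvexNorm {V : Type*} [AddCommGroup V] [Module ℝ V] (N : V → ℝ) : Prop :=
  ∀ ε ∈ Set.Ioc (0 : ℝ) 2, ∃ δ ∈ Set.Ioc (0 : ℝ) 1, ∀ x y : V,
    N x ≤ 1 → N y ≤ 1 → ε ≤ N (x - y) → N (x + y) ≤ 2 * (1 - δ)

/-- `Y` admits an equivalent uniformly convex norm. -/
def AdmitsEquivUniformlyConvexNorm (Y : Type*) [NormedAddCommGroup Y] [NormedSpace ℝ Y] : Prop :=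
  ∃ N : Y → ℝ, IsNorm N ∧
    (∃ a b : ℝ, 0 < a ∧ 0 < b ∧ ∀ y : Y, a * ‖y‖ ≤ N y ∧ N y ≤ b * ‖y‖) ∧
    UniformlyConvexNorm N

/-- The set of admissible radii `r ∈ (0,1)` in the definition of the modulus
`r^{X→Y}(ε)` of uniform approximation by affine maps. -/
def uaapSet (X Y : Type*) [NormedAddCommGroup X] [NormedSpace ℝ X]
    [NormedAddCommGroup Y] [NormedSpace ℝ Y] (ε : ℝ) : Set ℝ :=
  {r : ℝ | r ∈ Set.Ioo (0 : ℝ) 1 ∧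
    ∀ f : X → Y, LipschitzOnWith 1 f (closedBall (0 : X) 1) →
      ∃ ρ : ℝ, r ≤ ρ ∧ ∃ x : X, closedBall x ρ ⊆ closedBall (0 : X) 1 ∧
        ∃ Λ : X →ᵃ[ℝ] Y, ∀ y ∈ closedBall x ρ, ‖f y - Λ y‖ ≤ ε * ρ}

lemma IsNorm.zero' {V : Type*} [AddCommGroup V] [Module ℝ V] {N : V → ℝ} (h : IsNorm N) :
    N 0 = 0 := by
  have := h.2.1 0 0
  simpa using this

lemma IsNorm.neg' {V : Type*} [AddCommGroup V] [Module ℝ V] {N : V → ℝ} (h : IsNorm N) (x : V) :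
    N (-x) = N x := by
  have := h.2.1 (-1) x
  simpa using this

lemma IsNorm.nonneg' {V : Type*} [AddCommGroup V] [Module ℝ V] {N : V → ℝ} (h : IsNorm N) (x : V) :
    0 ≤ N x := by
  have := h.2.2 x (-x)
  rw [add_neg_cancel, h.zero', h.neg'] at this
  linarith

lemma IsNorm.sub_le' {V : Type*} [AddCommGroup V] [Module ℝ V] {N : V → ℝ} (h : IsNorm N)
    (x y : V) : N (x - y) ≤ N x + N y := by
  have := h.2.2 x (-y)
  rwa [h.neg', ← sub_eq_add_neg] at this

lemma IsNorm.sum_le' {V : Type*} [AddCommGroup V] [Module ℝ V] {N : V → ℝ} (h : IsNorm N)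
    {ι : Type*} (s : Finset ι) (Z : ι → V) : N (∑ i ∈ s, Z i) ≤ ∑ i ∈ s, N (Z i) := by
  classical
  induction s using Finset.induction_on with
  | empty => simp [h.zero']
  | insert a s ha ih =>
    rw [Finset.sum_insert ha, Finset.sum_insert ha]
    exact (h.2.2 _ _).trans (by linarith)

/-- Jensen for the square of a norm. -/
lemma IsNorm.jensen {V : Type*} [AddCommGroup V] [Module ℝ V] {N : V → ℝ} (h : IsNorm N)
    (b : ℕ) (hb : 0 < b) (Z : ℕ → V) :
    N ((1 / (b : ℝ)) • ∑ i ∈ Finset.range b, Z i) ^ 2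
      ≤ (1 / (b : ℝ)) * ∑ i ∈ Finset.range b, N (Z i) ^ 2 := by
  have hb' : (0 : ℝ) < b := by exact_mod_cast hb
  rw [h.2.1, abs_of_pos (by positivity), mul_pow]
  have h1 : N (∑ i ∈ Finset.range b, Z i) ^ 2 ≤ (∑ i ∈ Finset.range b, N (Z i)) ^ 2 :=
    pow_le_pow_left₀ (h.nonneg' _) (h.sum_le' _ _) 2
  have h2 : (∑ i ∈ Finset.range b, N (Z i)) ^ 2 ≤ b * ∑ i ∈ Finset.range b, N (Z i) ^ 2 := by
    simpa using (sq_sum_le_card_mul_sum_sq (s := Finset.range b) (f := fun i => N (Z i)))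
  calc (1 / (b : ℝ)) ^ 2 * N (∑ i ∈ Finset.range b, Z i) ^ 2
      ≤ (1 / (b : ℝ)) ^ 2 * (b * ∑ i ∈ Finset.range b, N (Z i) ^ 2) := by
        gcongr; exact h1.trans h2
    _ = _ := by field_simp

lemma two_point {V : Type*} [AddCommGroup V] [Module ℝ V] {N : V → ℝ} (h : IsNorm N)
    (hU : UniformlyConvexNorm N) : ∃ δ : ℝ, 0 < δ ∧ ∀ a b : V,
      N ((1 / 2 : ℝ) • (a + b)) ^ 2 ≤ (N a ^ 2 + N b ^ 2) / 2
        - δ * (N (a - b) ^ 2 - (1 / 16) * (N a ^ 2 + N b ^ 2)) := by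
  obtain ⟨δ, ⟨hδ0, hδ1⟩, hδ⟩ := hU (1 / 4) (by constructor <;> norm_num)
  refine ⟨δ ^ 2 / 16, by positivity, ?_⟩
  -- wlog N b ≤ N a
  have key : ∀ a b : V, N b ≤ N a →
      N ((1 / 2 : ℝ) • (a + b)) ^ 2 ≤ (N a ^ 2 + N b ^ 2) / 2
        - δ ^ 2 / 16 * (N (a - b) ^ 2 - (1 / 16) * (N a ^ 2 + N b ^ 2)) := by
    intro a b hba
    have ha0 := h.nonneg' a
    have hb0 := h.nonneg' b
    have hs0 := h.nonneg' (a + b)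
    have hd0 := h.nonneg' (a - b)
    have hs := h.2.2 a b
    have hd := h.sub_le' a b
    have e1 : N ((1 / 2 : ℝ) • (a + b)) = N (a + b) / 2 := by
      rw [h.2.1, abs_of_pos (by norm_num)]; ring
    rw [e1]
    have conv : (N (a + b) / 2) ^ 2 ≤ ((N a + N b) / 2) ^ 2 := by gcongr
    by_cases hc : N a / 4 ≤ N (a - b)
    · have hdd : N (a - b) ^ 2 ≤ 2 * (N a ^ 2 + N b ^ 2) := by nlinarith [sq_nonneg (N a - N b)]
      suffices hh : (N (a + b) / 2) ^ 2 ≤ (1 - δ ^ 2 / 4) * ((N a ^ 2 + N b ^ 2) / 2) by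
        nlinarith [mul_le_mul_of_nonneg_left hdd (sq_nonneg δ),
          mul_nonneg (sq_nonneg δ) (add_nonneg (sq_nonneg (N a)) (sq_nonneg (N b)))]
      rcases ha0.eq_or_lt with h0 | hpos
      · have hb00 : N b = 0 := by linarith
        have hab0 : N (a + b) = 0 := by linarith
        rw [hab0, ← h0, hb00]; norm_num
      by_cases hs' : (1 - δ) * N a ≤ N b
      · have hn : ∀ y : V, N ((1 / N a) • y) = N y / N a := by
          intro y; rw [h.2.1, abs_of_pos (by positivity)]; ring
        have := hδ ((1 / N a) • a) ((1 / N a) • b)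
          (by rw [hn, div_self hpos.ne']) (by rw [hn, div_le_one hpos]; exact hba)
          (by rw [← smul_sub, hn, le_div_iff₀ hpos]; linarith)
        rw [← smul_add, hn, div_le_iff₀ hpos] at this
        have h3 : (N (a + b) / 2) ^ 2 ≤ ((1 - δ) * N a) ^ 2 := by
          gcongr; linarith
        have h4 : ((1 - δ) * N a) ^ 2 ≤ N b ^ 2 :=
          pow_le_pow_left₀ (mul_nonneg (by linarith) ha0) hs' 2
        have h5 : (1 - δ) * N a ^ 2 ≤ (N a ^ 2 + N b ^ 2) / 2 := by
          nlinarith [mul_nonneg (sq_nonneg δ) (sq_nonneg (N a))]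
        have h6 : (1 - δ) * ((1 - δ) * N a ^ 2) ≤ (1 - δ) * ((N a ^ 2 + N b ^ 2) / 2) :=
          mul_le_mul_of_nonneg_left h5 (by linarith)
        have h7 : (1 - δ) ≤ 1 - δ ^ 2 / 4 := by nlinarith
        have h8 : (1 - δ) * ((N a ^ 2 + N b ^ 2) / 2) ≤
          (1 - δ ^ 2 / 4) * ((N a ^ 2 + N b ^ 2) / 2) :=
          mul_le_mul_of_nonneg_right h7 (by positivity)
        nlinarith
      · push Not at hs'
        have h3 : δ * N a ≤ N a - N b := by linarith
        have h4 : (δ * N a) ^ 2 ≤ (N a - N b) ^ 2 := pow_le_pow_left₀ (by positivity) h3 2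
        have h5 : (N a ^ 2 + N b ^ 2) / 2 ≤ N a ^ 2 := by nlinarith
        have h6 := mul_le_mul_of_nonneg_left h5 (sq_nonneg δ)
        nlinarith
    · push Not at hc
      have h1 : N (a - b) ^ 2 ≤ (N a / 4) ^ 2 := pow_le_pow_left₀ hd0 hc.le 2
      have h2 : N (a - b) ^ 2 - (1 / 16) * (N a ^ 2 + N b ^ 2) ≤ 0 := by nlinarith [sq_nonneg (N b)]
      have h3 : δ ^ 2 / 16 * (N (a - b) ^ 2 - (1 / 16) * (N a ^ 2 + N b ^ 2)) ≤ 0 :=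
        mul_nonpos_of_nonneg_of_nonpos (by positivity) h2
      nlinarith [sq_nonneg (N a - N b)]
  intro a b
  rcases le_total (N b) (N a) with hab | hab
  · exact key a b hab
  · have := key b a hab
    rw [add_comm b a, ← h.neg' (b - a), neg_sub] at this
    linarith

/-- Uniform convexity inequality for a finite average. -/
lemma block_ineq {V : Type*} [AddCommGroup V] [Module ℝ V] {N : V → ℝ} (h : IsNorm N)
    {δ : ℝ} (hδ : 0 < δ) (h2 : ∀ a b : V,
      N ((1 / 2 : ℝ) • (a + b)) ^ 2 ≤ (N a ^ 2 + N b ^ 2) / 2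
        - δ * (N (a - b) ^ 2 - (1 / 16) * (N a ^ 2 + N b ^ 2)))
    (b : ℕ) (hb : 0 < b) (Z : ℕ → V) (z : V)
    (hz : z = (1 / (b : ℝ)) • ∑ i ∈ Finset.range b, Z i) :
    b * N z ^ 2 + 2 * δ * ∑ i ∈ Finset.range b, N (Z i - z) ^ 2
      ≤ (1 + 2 * δ / 8) * ∑ i ∈ Finset.range b, N (Z i) ^ 2 := by
  have hb' : (0 : ℝ) < b := by exact_mod_cast hb
  have J1 : b * N z ^ 2 ≤ ∑ i ∈ Finset.range b, N (Z i) ^ 2 := by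
    have := h.jensen b hb Z
    rw [← hz] at this
    calc b * N z ^ 2 ≤ b * ((1 / (b : ℝ)) * ∑ i ∈ Finset.range b, N (Z i) ^ 2) := by gcongr
      _ = _ := by field_simp
  have J2 : b * N z ^ 2 ≤ ∑ i ∈ Finset.range b, N ((1 / 2 : ℝ) • (Z i + z)) ^ 2 := by
    have := h.jensen b hb (fun i => (1 / 2 : ℝ) • (Z i + z))
    have e : (1 / (b : ℝ)) • ∑ i ∈ Finset.range b, (1 / 2 : ℝ) • (Z i + z) = z := by
      rw [← Finset.smul_sum, Finset.sum_add_distrib, Finset.sum_const, Finset.card_range,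
        ← Nat.cast_smul_eq_nsmul ℝ, smul_comm, smul_add, ← hz, smul_smul,
        one_div_mul_cancel hb'.ne', one_smul, smul_add, ← add_smul]
      norm_num
    rw [e] at this
    calc b * N z ^ 2 ≤ b * ((1 / (b : ℝ)) * ∑ i ∈ Finset.range b, N ((1 / 2 : ℝ) • (Z i + z)) ^ 2) := by
            gcongr
      _ = _ := by field_simp
  have J3 : ∑ i ∈ Finset.range b, N ((1 / 2 : ℝ) • (Z i + z)) ^ 2 ≤
      ∑ i ∈ Finset.range b, ((N (Z i) ^ 2 + N z ^ 2) / 2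
        - δ * (N (Z i - z) ^ 2 - (1 / 16) * (N (Z i) ^ 2 + N z ^ 2))) :=
    Finset.sum_le_sum fun i _ => h2 _ _
  have e3 : ∑ i ∈ Finset.range b, ((N (Z i) ^ 2 + N z ^ 2) / 2
        - δ * (N (Z i - z) ^ 2 - (1 / 16) * (N (Z i) ^ 2 + N z ^ 2))) =
      (1 / 2 + δ / 16) * ∑ i ∈ Finset.range b, N (Z i) ^ 2 + (1 / 2 + δ / 16) * (b * N z ^ 2)
       - δ * ∑ i ∈ Finset.range b, N (Z i - z) ^ 2 := by
    have : ∀ i, ((N (Z i) ^ 2 + N z ^ 2) / 2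
        - δ * (N (Z i - z) ^ 2 - (1 / 16) * (N (Z i) ^ 2 + N z ^ 2))) =
        (1 / 2 + δ / 16) * N (Z i) ^ 2 + (1 / 2 + δ / 16) * N z ^ 2 - δ * N (Z i - z) ^ 2 := by
      intro i; ring
    simp_rw [this]
    rw [Finset.sum_sub_distrib, Finset.sum_add_distrib, Finset.sum_const, Finset.card_range,
      ← Finset.mul_sum, ← Finset.mul_sum, nsmul_eq_mul]
    ring
  rw [e3] at J3
  nlinarith [mul_le_mul_of_nonneg_left J1 hδ.le]

lemma sum_range_mul_block {M : Type*} [AddCommMonoid M] (a b : ℕ) (h : ℕ → M) :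
    ∑ j ∈ Finset.range (a * b), h j =
      ∑ j ∈ Finset.range a, ∑ i ∈ Finset.range b, h (j * b + i) := by
  induction a with
  | zero => simp
  | succ a ih => rw [Nat.succ_mul, Finset.sum_range_add, ih, Finset.sum_range_succ]

/-- energy of the martingale difference between level `k` and level `l`. -/
def wEn {V : Type*} [AddCommGroup V] (N : V → ℝ) (m : ℕ) (D : ℕ → ℕ → V) (k l : ℕ) : ℝ :=
  (1 / (m : ℝ) ^ l) * ∑ j ∈ Finset.range (m ^ l), N (D l j - D k (j / m ^ (l - k))) ^ 2

lemma wEn_nonneg {V : Type*} [AddCommGroup V] (N : V → ℝ) (m : ℕ) (D : ℕ → ℕ → V) (k l : ℕ) :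
    0 ≤ wEn N m D k l := by
  unfold wEn; positivity

lemma wEn_le {V : Type*} [AddCommGroup V] (N : V → ℝ) (m : ℕ) (hm : 0 < m)
    (D : ℕ → ℕ → V) (k l : ℕ) (C : ℝ)
    (hC : ∀ j < m ^ l, N (D l j - D k (j / m ^ (l - k))) ^ 2 ≤ C) :
    wEn N m D k l ≤ C := by
  unfold wEn
  have hm' : (0 : ℝ) < m := by exact_mod_cast hm
  have := Finset.sum_le_card_nsmul (Finset.range (m ^ l))
    (fun j => N (D l j - D k (j / m ^ (l - k))) ^ 2) C (fun j hj => hC j (Finset.mem_range.1 hj))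
  rw [Finset.card_range, nsmul_eq_mul] at this
  push_cast at this
  calc _ ≤ (1 / (m : ℝ) ^ l) * ((m : ℝ) ^ l * C) := by gcongr
    _ = C := by field_simp

lemma wEn_ineqs {V : Type*} [AddCommGroup V] [Module ℝ V] {N : V → ℝ} (h : IsNorm N)
    {δ : ℝ} (hδ : 0 < δ) (h2 : ∀ a b : V,
      N ((1 / 2 : ℝ) • (a + b)) ^ 2 ≤ (N a ^ 2 + N b ^ 2) / 2
        - δ * (N (a - b) ^ 2 - (1 / 16) * (N a ^ 2 + N b ^ 2)))
    (m : ℕ) (hm : 0 < m) (D : ℕ → ℕ → V)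
    (hD : ∀ l q j, D l j = (1 / ((m ^ q : ℕ) : ℝ)) •
      ∑ i ∈ Finset.range (m ^ q), D (l + q) (j * m ^ q + i))
    (k l p : ℕ) (hkl : k ≤ l) (hlp : l ≤ p) :
    wEn N m D k l ≤ wEn N m D k p ∧
    wEn N m D k l + 2 * δ * wEn N m D l p ≤ (1 + 2 * δ / 8) * wEn N m D k p := by
  obtain ⟨q, rfl⟩ := Nat.exists_eq_add_of_le hlp
  obtain ⟨s, rfl⟩ := Nat.exists_eq_add_of_le hkl
  have hm' : (0 : ℝ) < m := by exact_mod_cast hm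
  have hb : 0 < m ^ q := by positivity
  have hbb : (0 : ℝ) < (m ^ q : ℕ) := by exact_mod_cast hb
  have ekp : wEn N m D k (k + s + q) = (1 / (m : ℝ) ^ (k + s + q)) *
      ∑ j ∈ Finset.range (m ^ (k + s)), ∑ i ∈ Finset.range (m ^ q),
        N (D (k + s + q) (j * m ^ q + i) - D k (j / m ^ s)) ^ 2 := by
    unfold wEn
    rw [pow_add m (k + s) q, sum_range_mul_block]
    congr 1
    refine Finset.sum_congr rfl fun j _ => Finset.sum_congr rfl fun i hi => ?_
    have : k + s + q - k = q + s := by omega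
    rw [this, pow_add, ← Nat.div_div_eq_div_mul, add_comm (j * m ^ q) i,
      Nat.add_mul_div_right _ _ hb, Nat.div_eq_of_lt (Finset.mem_range.1 hi), zero_add]
  have elp : wEn N m D (k + s) (k + s + q) = (1 / (m : ℝ) ^ (k + s + q)) *
      ∑ j ∈ Finset.range (m ^ (k + s)), ∑ i ∈ Finset.range (m ^ q),
        N (D (k + s + q) (j * m ^ q + i) - D (k + s) j) ^ 2 := by
    unfold wEn
    rw [pow_add m (k + s) q, sum_range_mul_block]
    congr 1
    refine Finset.sum_congr rfl fun j _ => Finset.sum_congr rfl fun i hi => ?_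
    have : k + s + q - (k + s) = q := by omega
    rw [this, add_comm (j * m ^ q) i,
      Nat.add_mul_div_right _ _ hb, Nat.div_eq_of_lt (Finset.mem_range.1 hi), zero_add]
  have ekl : wEn N m D k (k + s) = (1 / (m : ℝ) ^ (k + s + q)) *
      ∑ j ∈ Finset.range (m ^ (k + s)), (m ^ q : ℕ) * N (D (k + s) j - D k (j / m ^ s)) ^ 2 := by
    unfold wEn
    rw [← Finset.mul_sum]
    have : k + s - k = s := by omega
    rw [this]
    push_cast
    rw [pow_add (m : ℝ) (k + s) q]
    field_simp
  have hz : ∀ j, D (k + s) j - D k (j / m ^ s) = (1 / ((m ^ q : ℕ) : ℝ)) •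
      ∑ i ∈ Finset.range (m ^ q), (D (k + s + q) (j * m ^ q + i) - D k (j / m ^ s)) := by
    intro j
    rw [Finset.sum_sub_distrib, smul_sub, ← hD, Finset.sum_const, Finset.card_range,
      ← Nat.cast_smul_eq_nsmul ℝ, smul_smul, one_div_mul_cancel hbb.ne', one_smul]
  constructor
  · rw [ekp, ekl]
    refine mul_le_mul_of_nonneg_left (Finset.sum_le_sum fun j _ => ?_) (by positivity)
    have := h.jensen (m ^ q) hb (fun i => D (k + s + q) (j * m ^ q + i) - D k (j / m ^ s))
    rw [← hz] at this
    calc _ ≤ ((m ^ q : ℕ) : ℝ) * ((1 / ((m ^ q : ℕ) : ℝ)) * ∑ i ∈ Finset.range (m ^ q),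
        N (D (k + s + q) (j * m ^ q + i) - D k (j / m ^ s)) ^ 2) := by gcongr
      _ = _ := by field_simp
  · rw [ekp, ekl, elp]
    have : ∀ j, ((m ^ q : ℕ) : ℝ) * N (D (k + s) j - D k (j / m ^ s)) ^ 2 +
        2 * δ * ∑ i ∈ Finset.range (m ^ q), N (D (k + s + q) (j * m ^ q + i) - D (k + s) j) ^ 2
        ≤ (1 + 2 * δ / 8) * ∑ i ∈ Finset.range (m ^ q),
          N (D (k + s + q) (j * m ^ q + i) - D k (j / m ^ s)) ^ 2 := by
      intro j
      have := block_ineq h hδ h2 (m ^ q) hb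
        (fun i => D (k + s + q) (j * m ^ q + i) - D k (j / m ^ s)) _ (hz j)
      simpa using this
    have h3 := Finset.sum_le_sum fun j (_ : j ∈ Finset.range (m ^ (k + s))) => this j
    rw [Finset.sum_add_distrib, ← Finset.mul_sum (a := 2 * δ), ← Finset.mul_sum (a := 1 + 2 * δ / 8)] at h3
    have h4 := mul_le_mul_of_nonneg_left h3 (show 0 ≤ 1 / (m : ℝ) ^ (k + s + q) by positivity)
    linarith

/-- Abstract self-improvement (James/Pisier): one of the scales has a tiny jump. -/
lemma small_jump (W : ℕ → ℕ → ℝ) (c C : ℝ) (hc : 0 < c) (hC : 0 ≤ C)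
    (h0 : ∀ k l, 0 ≤ W k l) (hle : ∀ k l, k ≤ l → W k l ≤ C)
    (hmono : ∀ k l p, k ≤ l → l ≤ p → W k l ≤ W k p)
    (hinc : ∀ k l p, k ≤ l → l ≤ p → W k l + c * W l p ≤ (1 + c / 8) * W k p)
    (N : ℕ) (hN : 8 / c ≤ N) (r : ℕ) :
    ∃ k < N ^ r, W k (k + 1) ≤ C / 4 ^ r := by
  have hNpos : 0 < N := by
    have : (0 : ℝ) < N := lt_of_lt_of_le (by positivity) hN
    exact_mod_cast this
  by_contra! hcon
  set d := C / 4 ^ r with hd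
  have hd0 : 0 ≤ d := by positivity
  have main : ∀ q ≤ r, ∀ k, k + N ^ q ≤ N ^ r → 4 ^ q * d < W k (k + N ^ q) := by
    intro q
    induction q with
    | zero => intro _ k hk; simpa using hcon k (by simpa using hk)
    | succ q ih =>
      intro hq k hk
      have ih' := ih (by omega)
      by_contra! hlt
      have hs : ∀ i ≤ N, (i : ℝ) * (c * (4 ^ q * d) / 2) ≤ W k (k + i * N ^ q) ∧
          (0 < i → (i : ℝ) * (c * (4 ^ q * d) / 2) < W k (k + i * N ^ q)) := by
        intro i
        induction i with
        | zero => intro _; simpa using h0 k k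
        | succ i ihi =>
          intro hi
          have hNi : (i + 1) * N ^ q ≤ N * N ^ q := Nat.mul_le_mul_right _ hi
          have e : k + (i + 1) * N ^ q = (k + i * N ^ q) + N ^ q := by ring
          have hNq : N ^ (q + 1) = N * N ^ q := by ring
          have h1 := (ihi (by omega)).1
          have h2 := ih' (k + i * N ^ q) (by rw [← e]; omega)
          rw [← e] at h2
          have h3 := hinc k (k + i * N ^ q) (k + (i + 1) * N ^ q) (by omega) (by rw [e]; omega)
          have h4 := hmono k (k + (i + 1) * N ^ q) (k + N ^ (q + 1)) (by omega) (by omega)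
          have h5 : W k (k + (i + 1) * N ^ q) ≤ 4 * (4 ^ q * d) := by
            rw [pow_succ (4 : ℝ) q] at hlt; linarith
          have h6 : (((i + 1 : ℕ) : ℝ)) * (c * (4 ^ q * d) / 2) < W k (k + (i + 1) * N ^ q) := by
            push_cast
            nlinarith
          exact ⟨h6.le, fun _ => h6⟩
      have h7 := (hs N le_rfl).2 hNpos
      have hNq : N ^ (q + 1) = N * N ^ q := by ring
      rw [← hNq] at h7
      rw [div_le_iff₀ hc] at hN
      have : (0 : ℝ) ≤ 4 ^ q * d := by positivity
      rw [pow_succ (4 : ℝ) q] at hlt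
      nlinarith
  have := main r le_rfl 0 (by simp)
  rw [zero_add, hd, mul_div_cancel₀ _ (by positivity)] at this
  exact absurd (hle 0 (N ^ r) (Nat.zero_le _)) (not_le.2 this)

/-- A 1-Lipschitz function on the ball agrees there with a globally 2-Lipschitz one. -/
lemma ext_lip {X Y : Type*} [NormedAddCommGroup X] [NormedSpace ℝ X]
    [NormedAddCommGroup Y] [NormedSpace ℝ Y] (f : X → Y)
    (hf : LipschitzOnWith 1 f (closedBall (0 : X) 1)) :
    ∃ g : X → Y, (∀ x y, ‖g x - g y‖ ≤ 2 * ‖x - y‖) ∧ ∀ x ∈ closedBall (0 : X) 1, g x = f x := by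
  set R : X → X := fun x => (max 1 ‖x‖)⁻¹ • x with hR
  have hpos : ∀ x : X, 0 < max 1 ‖x‖ := fun x => lt_of_lt_of_le one_pos (le_max_left _ _)
  have hRmem : ∀ x, R x ∈ closedBall (0 : X) 1 := by
    intro x
    rw [mem_closedBall_zero_iff, hR]
    simp only [norm_smul, norm_inv, Real.norm_eq_abs, abs_of_pos (hpos x)]
    rw [inv_mul_le_iff₀ (hpos x), mul_one]
    exact le_max_right _ _
  have hRl : ∀ x y, ‖R x - R y‖ ≤ 2 * ‖x - y‖ := by
    intro x y
    have e : R x - R y = (max 1 ‖x‖)⁻¹ • (x - y) +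
        ((max 1 ‖x‖)⁻¹ * (max 1 ‖y‖ - max 1 ‖x‖)) • R y := by
      simp only [hR, smul_sub, smul_smul]
      have : (max 1 ‖x‖)⁻¹ * (max 1 ‖y‖ - max 1 ‖x‖) * (max 1 ‖y‖)⁻¹ =
        (max 1 ‖x‖)⁻¹ - (max 1 ‖y‖)⁻¹ := by
        have := (hpos x).ne'
        have := (hpos y).ne'
        field_simp
      rw [this, sub_smul]; abel
    have h1 : (max 1 ‖x‖)⁻¹ ≤ 1 := inv_le_one_of_one_le₀ (le_max_left _ _)
    have h2 : |max 1 ‖y‖ - max 1 ‖x‖| ≤ ‖x - y‖ := by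
      have := abs_max_sub_max_le_abs ‖y‖ ‖x‖ 1
      rw [max_comm 1 ‖y‖, max_comm 1 ‖x‖]
      refine this.trans ?_
      rw [norm_sub_rev]
      exact abs_norm_sub_norm_le _ _
    have h3 : ‖R y‖ ≤ 1 := by simpa using hRmem y
    have h0 : 0 ≤ (max 1 ‖x‖)⁻¹ := (inv_pos.2 (hpos x)).le
    rw [e]
    refine (norm_add_le _ _).trans ?_
    rw [norm_smul, norm_smul, norm_mul, Real.norm_eq_abs, Real.norm_eq_abs, abs_of_nonneg h0]
    have h4 : (max 1 ‖x‖)⁻¹ * ‖x - y‖ ≤ 1 * ‖x - y‖ := by gcongr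
    have h5 : (max 1 ‖x‖)⁻¹ * |max 1 ‖y‖ - max 1 ‖x‖| * ‖R y‖ ≤ 1 * ‖x - y‖ * 1 := by gcongr
    linarith
  refine ⟨fun x => f (R x), fun x y => ?_, fun x hx => ?_⟩
  · have := hf.dist_le_mul _ (hRmem x) _ (hRmem y)
    rw [dist_eq_norm, dist_eq_norm] at this
    simp only [NNReal.coe_one, one_mul] at this
    exact this.trans (hRl x y)
  · have : max 1 ‖x‖ = 1 := max_eq_left (by simpa using hx)
    simp [hR, this]

/-- Almost additive maps with quadratic error are close to linear maps. -/
lemma almost_linear {X Y : Type*} [NormedAddCommGroup X] [NormedSpace ℝ X]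
    [NormedAddCommGroup Y] [NormedSpace ℝ Y] [CompleteSpace Y] (Δ : X → Y) (L : ℝ) (hL : 0 ≤ L)
    (hlip : ∀ v, ‖Δ v‖ ≤ 2 * ‖v‖)
    (hadd : ∀ a b, ‖Δ (a + b) - Δ a - Δ b‖ ≤ L * ‖a‖ * ‖b‖) :
    ∃ A : X →L[ℝ] Y, (∀ v, ‖A v‖ ≤ 2 * ‖v‖) ∧ ∀ v, ‖Δ v - A v‖ ≤ L * ‖v‖ ^ 2 := by
  set u : X → ℕ → Y := fun v k => (2 : ℝ) ^ k • Δ (((2 : ℝ) ^ k)⁻¹ • v) with hu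
  have hstep : ∀ v k, dist (u v k) (u v (k + 1)) ≤ (L * ‖v‖ ^ 2) / 2 / 2 ^ k := by
    intro v k
    set w : X := ((2 : ℝ) ^ (k + 1))⁻¹ • v with hw
    have e1 : ((2 : ℝ) ^ k)⁻¹ • v = w + w := by
      rw [hw, ← two_smul ℝ, smul_smul, pow_succ]
      congr 1; field_simp
    have e2 : u v k - u v (k + 1) = (2 : ℝ) ^ k • (Δ (w + w) - Δ w - Δ w) := by
      simp only [hu]
      rw [e1, ← hw, pow_succ, mul_smul, ← smul_sub, two_smul, sub_sub]
    have hwn : ‖w‖ = ‖v‖ / 2 ^ (k + 1) := by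
      rw [hw, norm_smul, norm_inv, norm_pow]; simp; ring
    rw [dist_eq_norm, e2, norm_smul, norm_pow, Real.norm_ofNat]
    calc (2 : ℝ) ^ k * ‖Δ (w + w) - Δ w - Δ w‖ ≤ 2 ^ k * (L * ‖w‖ * ‖w‖) := by
          gcongr; exact hadd w w
      _ = (L * ‖v‖ ^ 2) / 4 / 2 ^ k := by
          rw [hwn, pow_succ]; field_simp; norm_num
      _ ≤ (L * ‖v‖ ^ 2) / 2 / 2 ^ k := by
          gcongr; norm_num
  have hlim : ∀ v, ∃ y, Filter.Tendsto (u v) Filter.atTop (nhds y) := fun v =>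
    cauchySeq_tendsto_of_complete (cauchySeq_of_le_geometric_two (hstep v))
  choose A hA using hlim
  have hA0 : ∀ v, ‖Δ v - A v‖ ≤ L * ‖v‖ ^ 2 := by
    intro v
    have := dist_le_of_le_geometric_two_of_tendsto₀ (hstep v) (hA v)
    rw [dist_eq_norm] at this
    simpa [hu] using this
  have hAn : ∀ v, ‖A v‖ ≤ 2 * ‖v‖ := by
    intro v
    refine le_of_tendsto (hA v).norm (Filter.Eventually.of_forall fun k => ?_)
    simp only [hu]
    rw [norm_smul, norm_pow, Real.norm_ofNat]
    have := hlip (((2 : ℝ) ^ k)⁻¹ • v)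
    rw [norm_smul, norm_inv, norm_pow, Real.norm_ofNat] at this
    calc (2 : ℝ) ^ k * ‖Δ (((2 : ℝ) ^ k)⁻¹ • v)‖ ≤ 2 ^ k * (2 * (((2 : ℝ) ^ k)⁻¹ * ‖v‖)) := by gcongr
      _ = 2 * ‖v‖ := by field_simp
  have hAadd : ∀ a b, A (a + b) = A a + A b := by
    intro a b
    have h1 : Filter.Tendsto (fun k => u (a + b) k - u a k - u b k) Filter.atTop
        (nhds (A (a + b) - A a - A b)) := ((hA _).sub (hA _)).sub (hA _)
    have h2 : Filter.Tendsto (fun k => u (a + b) k - u a k - u b k) Filter.atTop (nhds 0) := by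
      refine squeeze_zero_norm (a := fun k : ℕ => (L * ‖a‖ * ‖b‖) * ((1 / 2 : ℝ)) ^ k) ?_ ?_
      · intro k
        simp only [hu]
        rw [← smul_sub, ← smul_sub, smul_add, norm_smul, norm_pow, Real.norm_ofNat]
        have := hadd (((2 : ℝ) ^ k)⁻¹ • a) (((2 : ℝ) ^ k)⁻¹ • b)
        rw [norm_smul, norm_smul, norm_inv, norm_pow, Real.norm_ofNat] at this
        calc _ ≤ (2 : ℝ) ^ k * (L * (((2 : ℝ) ^ k)⁻¹ * ‖a‖) * (((2 : ℝ) ^ k)⁻¹ * ‖b‖)) := by gcongr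
          _ = _ := by rw [one_div, inv_pow]; field_simp
      · have := (tendsto_pow_atTop_nhds_zero_of_lt_one (r := (1 / 2 : ℝ)) (by norm_num)
          (by norm_num)).const_mul (L * ‖a‖ * ‖b‖)
        simpa using this
    have := tendsto_nhds_unique h1 h2
    rw [sub_sub, sub_eq_zero] at this
    exact this
  let A' : X →+ Y := AddMonoidHom.mk' A hAadd
  have hcont : Continuous A' := by
    refine AddMonoidHomClass.continuous_of_bound A' 2 hAn
  exact ⟨A'.toRealLinearMap hcont, hAn, hA0⟩

section smoothing

set_option linter.unusedSectionVars false

variable {X Y : Type*} [NormedAddCommGroup X] [NormedSpace ℝ X] [FiniteDimensional ℝ X]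
  [MeasurableSpace X] [BorelSpace X] (μ : Measure X) [μ.IsAddHaarMeasure]
  [NormedAddCommGroup Y] [NormedSpace ℝ Y]

/-- average of `g` over the ball of radius `s` around `x` -/
def smo (g : X → Y) (s : ℝ) (x : X) : Y :=
  (μ.real (closedBall (0 : X) s))⁻¹ • ∫ u in closedBall (0 : X) s, g (x + u) ∂μ

lemma vol_pos (x : X) {s : ℝ} (hs : 0 < s) : 0 < μ.real (closedBall x s) :=
  ENNReal.toReal_pos (measure_closedBall_pos μ x hs).ne' (by
    have := FiniteDimensional.proper_real X
    exact measure_closedBall_lt_top.ne)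

lemma vol_scale (x : X) {s : ℝ} (hs : 0 ≤ s) :
    μ.real (closedBall x s) = s ^ Module.finrank ℝ X * μ.real (closedBall (0 : X) 1) :=
  Measure.addHaar_real_closedBall' μ x hs

lemma int_cont {E : Type*} [NormedAddCommGroup E] {g : X → E} (hg : Continuous g) (x : X) (s : ℝ) :
    IntegrableOn g (closedBall x s) μ := by
  have := FiniteDimensional.proper_real X
  exact hg.continuousOn.integrableOn_compact (isCompact_closedBall x s)

lemma shift_int {E : Type*} [NormedAddCommGroup E] [NormedSpace ℝ E] (g : X → E) (b x : X) (s : ℝ) :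
    ∫ u in closedBall x s, g (b + u) ∂μ = ∫ u in closedBall (b + x) s, g u ∂μ := by
  rw [← (measurePreserving_add_left μ b).setIntegral_preimage_emb (measurableEmbedding_addLeft b)
    g (closedBall (b + x) s)]
  have : (fun u => b + u) ⁻¹' closedBall (b + x) s = closedBall x s := by
    ext u
    simp [dist_eq_norm]
  rw [this]

lemma lip_cont {g : X → Y} (hg : ∀ x y, ‖g x - g y‖ ≤ 2 * ‖x - y‖) : Continuous g := by
  refine (LipschitzWith.of_dist_le_mul (K := 2) fun x y => ?_).continuous
  simpa [dist_eq_norm] using hg x y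

lemma ball_fin (x : X) (s : ℝ) : μ (closedBall x s) < ⊤ := by
  have := FiniteDimensional.proper_real X
  exact measure_closedBall_lt_top

lemma smo_bound (h : X → Y) (s C : ℝ) (hs : 0 < s)
    (hC : ∀ u ∈ closedBall (0 : X) s, ‖h u‖ ≤ C) :
    ‖(μ.real (closedBall (0 : X) s))⁻¹ • ∫ u in closedBall (0 : X) s, h u ∂μ‖ ≤ C := by
  have hV := vol_pos μ (0 : X) hs
  rw [norm_smul, norm_inv, Real.norm_of_nonneg hV.le, inv_mul_le_iff₀ hV, mul_comm]
  exact norm_setIntegral_le_of_norm_le_const (ball_fin μ _ _) hC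

lemma smo_sub (g : X → Y) (hg : Continuous g) (s : ℝ) (x y : X) :
    smo μ g s x - smo μ g s y = (μ.real (closedBall (0 : X) s))⁻¹ •
      ∫ u in closedBall (0 : X) s, (g (x + u) - g (y + u)) ∂μ := by
  unfold smo
  rw [integral_sub, smul_sub]
  · exact int_cont μ (by fun_prop) _ _
  · exact int_cont μ (by fun_prop) _ _

lemma smo_lip (g : X → Y) (hg : ∀ x y, ‖g x - g y‖ ≤ 2 * ‖x - y‖) (s : ℝ) (hs : 0 < s) (x y : X) :
    ‖smo μ g s x - smo μ g s y‖ ≤ 2 * ‖x - y‖ := by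
  rw [smo_sub μ g (lip_cont hg)]
  refine smo_bound μ _ s _ hs fun u _ => (hg _ _).trans ?_
  simp

lemma smo_close [CompleteSpace Y] (g : X → Y) (hg : ∀ x y, ‖g x - g y‖ ≤ 2 * ‖x - y‖) (s : ℝ) (hs : 0 < s) (x : X) :
    ‖smo μ g s x - g x‖ ≤ 2 * s := by
  have hV := vol_pos μ (0 : X) hs
  have e : smo μ g s x - g x = (μ.real (closedBall (0 : X) s))⁻¹ •
      ∫ u in closedBall (0 : X) s, (g (x + u) - g x) ∂μ := by
    have hc := lip_cont hg
    unfold smo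
    rw [integral_sub, smul_sub, setIntegral_const, smul_smul, inv_mul_cancel₀ hV.ne', one_smul]
    · exact int_cont μ (by fun_prop) _ _
    · exact int_cont μ (by fun_prop) _ _
  rw [e]
  refine smo_bound μ _ s _ hs fun u hu => (hg _ _).trans ?_
  simpa using hu

lemma vol_diff (b x : X) (s : ℝ) (hs : 0 < s) (hn : 0 < Module.finrank ℝ X) :
    μ.real (closedBall b s \ closedBall x s) ≤
      Module.finrank ℝ X * (‖b - x‖ / s) * μ.real (closedBall (0 : X) s) := by
  have hV := vol_pos μ (0 : X) hs
  have hn1 : (1 : ℝ) ≤ Module.finrank ℝ X := by exact_mod_cast hn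
  have hbs : μ.real (closedBall b s) = μ.real (closedBall (0 : X) s) := by
    rw [vol_scale μ b hs.le, vol_scale μ 0 hs.le]
  rcases le_total ‖b - x‖ s with hle | hle
  · have hsub : closedBall b (s - ‖b - x‖) ⊆ closedBall x s := by
      refine closedBall_subset_closedBall' ?_
      rw [dist_eq_norm]; linarith
    have hsub2 : closedBall b (s - ‖b - x‖) ⊆ closedBall b s :=
      closedBall_subset_closedBall (by linarith [norm_nonneg (b - x)])
    have h1 : μ.real (closedBall b s \ closedBall x s) ≤
        μ.real (closedBall b s \ closedBall b (s - ‖b - x‖)) :=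
      measureReal_mono (sdiff_subset_sdiff_right hsub)
        ((measure_mono sdiff_subset).trans_lt (ball_fin μ b s)).ne
    have h2 : μ.real (closedBall b s \ closedBall b (s - ‖b - x‖)) =
        μ.real (closedBall b s) - μ.real (closedBall b (s - ‖b - x‖)) :=
      measureReal_sdiff hsub2 measurableSet_closedBall (ball_fin μ _ _).ne
    have h3 : μ.real (closedBall b (s - ‖b - x‖)) =
        (1 - ‖b - x‖ / s) ^ Module.finrank ℝ X * μ.real (closedBall (0 : X) s) := by
      rw [vol_scale μ b (by linarith), vol_scale μ 0 hs.le, ← mul_assoc, ← mul_pow]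
      congr 2; field_simp
    have h4 : 1 + (Module.finrank ℝ X : ℝ) * (-(‖b - x‖ / s)) ≤
        (1 + (-(‖b - x‖ / s))) ^ Module.finrank ℝ X := by
      apply one_add_mul_le_pow
      have : ‖b - x‖ / s ≤ 1 := (div_le_one hs).2 hle
      linarith
    rw [h2, hbs, h3] at h1
    have h5 := mul_le_mul_of_nonneg_right h4 hV.le
    rw [← sub_eq_add_neg] at h5
    nlinarith
  · have h1 : μ.real (closedBall b s \ closedBall x s) ≤ μ.real (closedBall b s) :=
      measureReal_mono sdiff_subset (ball_fin μ b s).ne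
    have h2 : 1 ≤ ‖b - x‖ / s := (one_le_div hs).2 hle
    have h3 : (1 : ℝ) * 1 ≤ Module.finrank ℝ X * (‖b - x‖ / s) :=
      mul_le_mul hn1 h2 (by norm_num) (by positivity)
    rw [hbs] at h1
    nlinarith

lemma smo_second (g : X → Y) (hg : ∀ x y, ‖g x - g y‖ ≤ 2 * ‖x - y‖) (s : ℝ) (hs : 0 < s)
    (hn : 0 < Module.finrank ℝ X) (x a b : X) :
    ‖(smo μ g s (x + (a + b)) - smo μ g s x) - (smo μ g s (x + a) - smo μ g s x)
      - (smo μ g s (x + b) - smo μ g s x)‖ ≤ (4 * Module.finrank ℝ X / s) * ‖a‖ * ‖b‖ := by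
  have hV := vol_pos μ (0 : X) hs
  have hc := lip_cont hg
  set h : X → Y := fun u => g (x + a + u) - g (x + u) with hh
  have hhc : Continuous h := by fun_prop
  have hhb : ∀ u, ‖h u‖ ≤ 2 * ‖a‖ := fun u => (hg _ _).trans (by
    have : x + a + u - (x + u) = a := by abel
    rw [this])
  have e : (smo μ g s (x + (a + b)) - smo μ g s x) - (smo μ g s (x + a) - smo μ g s x)
      - (smo μ g s (x + b) - smo μ g s x) =
      (smo μ g s (x + (a + b)) - smo μ g s (x + b)) - (smo μ g s (x + a) - smo μ g s x) := by abel
  have e2 : ∫ u in closedBall (0 : X) s, (g (x + (a + b) + u) - g (x + b + u)) ∂μ =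
      ∫ u in closedBall b s, h u ∂μ := by
    have := shift_int μ h b 0 s
    rw [add_zero] at this
    rw [← this]
    congr 1
    ext u
    simp only [hh]
    congr 2 <;> abel
  rw [e, smo_sub μ g hc, smo_sub μ g hc, ← smul_sub, e2,
    ← integral_inter_add_sdiff (s := closedBall b s) (t := closedBall (0 : X) s)
      measurableSet_closedBall (int_cont μ hhc _ _),
    ← integral_inter_add_sdiff (s := closedBall (0 : X) s) (t := closedBall b s)
      measurableSet_closedBall (int_cont μ hhc _ _), inter_comm (closedBall (0 : X) s),
    add_sub_add_left_eq_sub]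
  rw [norm_smul, norm_inv, Real.norm_of_nonneg hV.le, inv_mul_le_iff₀ hV]
  have b1 : ‖∫ u in closedBall b s \ closedBall (0 : X) s, h u ∂μ‖ ≤
      2 * ‖a‖ * (Module.finrank ℝ X * (‖b‖ / s) * μ.real (closedBall (0 : X) s)) := by
    refine (norm_setIntegral_le_of_norm_le_const
      ((measure_mono sdiff_subset).trans_lt (ball_fin μ b s)) fun u _ => hhb u).trans ?_
    have := vol_diff μ b 0 s hs hn
    rw [sub_zero] at this
    gcongr
  have b2 : ‖∫ u in closedBall (0 : X) s \ closedBall b s, h u ∂μ‖ ≤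
      2 * ‖a‖ * (Module.finrank ℝ X * (‖b‖ / s) * μ.real (closedBall (0 : X) s)) := by
    refine (norm_setIntegral_le_of_norm_le_const
      ((measure_mono sdiff_subset).trans_lt (ball_fin μ 0 s)) fun u _ => hhb u).trans ?_
    have := vol_diff μ 0 b s hs hn
    rw [zero_sub, norm_neg] at this
    gcongr
  refine (norm_sub_le _ _).trans ((add_le_add b1 b2).trans (le_of_eq ?_))
  field_simp
  ring

end smoothing

section selection

set_option linter.unusedSectionVars false

variable {X Y : Type*} [NormedAddCommGroup X] [NormedSpace ℝ X] [FiniteDimensional ℝ X]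
  [MeasurableSpace X] [BorelSpace X] (μ : Measure X) [μ.IsAddHaarMeasure]
  [NormedAddCommGroup Y] [NormedSpace ℝ Y]

lemma int_cont_prod {E : Type*} [NormedAddCommGroup E] {g : X × X → E} (hg : Continuous g)
    (x y : X) (s r : ℝ) :
    IntegrableOn g (closedBall x s ×ˢ closedBall y r) (μ.prod μ) := by
  have := FiniteDimensional.proper_real X
  exact hg.continuousOn.integrableOn_compact
    ((isCompact_closedBall x s).prod (isCompact_closedBall y r))

lemma swap_ball (φ : X → X → ℝ) (hφ : Continuous (Function.uncurry φ)) (x y : X) (s r : ℝ) :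
    ∫ v in closedBall x s, ∫ u in closedBall y r, φ v u ∂μ ∂μ =
      ∫ u in closedBall y r, ∫ v in closedBall x s, φ v u ∂μ ∂μ := by
  have := FiniteDimensional.proper_real X
  apply integral_integral_swap
  rw [Measure.prod_restrict]
  exact int_cont_prod μ hφ _ _ _ _

lemma par_cont (φ : X → X → ℝ) (hφ : Continuous (Function.uncurry φ)) (y : X) (r : ℝ) :
    Continuous fun v => ∫ u in closedBall y r, φ v u ∂μ := by
  have := FiniteDimensional.proper_real X
  exact continuous_parametric_integral_of_continuous hφ (isCompact_closedBall y r)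

lemma exists_small (H : X → ℝ) (hH : Continuous H) (x : X) (s I : ℝ) (hs : 0 < s)
    (hI : ∫ u in closedBall x s, H u ∂μ ≤ I) :
    ∃ u ∈ closedBall x s, H u ≤ I / μ.real (closedBall x s) := by
  have hV := vol_pos μ x hs
  obtain ⟨u, hu, hle⟩ := exists_le_setAverage (μ := μ) (s := closedBall x s) (f := H)
    (measure_closedBall_pos μ x hs).ne' (ball_fin μ x s).ne (int_cont μ hH x s)
  refine ⟨u, hu, hle.trans ?_⟩
  rw [setAverage_eq, smul_eq_mul, div_eq_inv_mul]
  gcongr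

lemma select (φ : X → X → ℝ) (hφ : Continuous (Function.uncurry φ)) (hφ0 : ∀ v y, 0 ≤ φ v y)
    (I : ℝ) (hI : ∫ v in closedBall (0 : X) 1, ∫ y in closedBall (0 : X) (1 / 8), φ v y ∂μ ∂μ ≤ I)
    (s : ℝ) (hs' : s ≤ 1 / 16) (τ : ℝ) (hτ : 0 < τ) :
    ∃ x0 ∈ closedBall (0 : X) (1 / 16), ∀ v0 ∈ closedBall (0 : X) (1 - τ),
      ∃ v ∈ closedBall v0 τ, ∫ u in closedBall (0 : X) s, φ v (x0 + u) ∂μ ≤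
        μ.real (closedBall (0 : X) s) * I / μ.real (closedBall (0 : X) (1 / 16))
          / μ.real (closedBall (0 : X) τ) := by
  have hφ' : Continuous (Function.uncurry fun y v => φ v y) :=
    hφ.comp continuous_swap
  set H : X → ℝ := fun y => ∫ v in closedBall (0 : X) 1, φ v y ∂μ with hH
  have hHc : Continuous H := par_cont μ (fun y v => φ v y) hφ' 0 1
  have hH0 : ∀ y, 0 ≤ H y := fun y => integral_nonneg fun v => hφ0 v y
  have hHI : ∫ y in closedBall (0 : X) (1 / 8), H y ∂μ ≤ I := by
    rw [← swap_ball μ φ hφ]; exact hI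
  have hsum : Continuous (Function.uncurry fun x u : X => H (x + u)) := by
    have : (Function.uncurry fun x u : X => H (x + u)) = fun z : X × X => H (z.1 + z.2) := rfl
    rw [this]; fun_prop
  have hsum' : Continuous (Function.uncurry fun u x : X => H (x + u)) :=
    hsum.comp continuous_swap
  obtain ⟨x0, hx0, hx0'⟩ := exists_small μ (fun x => ∫ u in closedBall (0 : X) s, H (x + u) ∂μ)
    (par_cont μ (fun x u => H (x + u)) hsum 0 s) 0 (1 / 16) (μ.real (closedBall (0 : X) s) * I)
    (by norm_num) (by
      rw [swap_ball μ (fun x u => H (x + u)) hsum]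
      have : ∀ u ∈ closedBall (0 : X) s, ∫ x in closedBall (0 : X) (1 / 16), H (x + u) ∂μ ≤ I := by
        intro u hu
        simp_rw [add_comm _ u]
        rw [shift_int μ H u 0, add_zero]
        refine le_trans (setIntegral_mono_set (int_cont μ hHc _ _)
          (Filter.Eventually.of_forall hH0) (LE.le.eventuallyLE ?_)) hHI
        refine closedBall_subset_closedBall' ?_
        rw [mem_closedBall] at hu
        linarith
      calc _ ≤ ∫ u in closedBall (0 : X) s, I ∂μ := by
            refine setIntegral_mono_on (int_cont μ (par_cont μ (fun u x => H (x + u)) hsum' _ _) _ _)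
              (int_cont μ continuous_const _ _) measurableSet_closedBall this
        _ = _ := by rw [setIntegral_const, smul_eq_mul])
  refine ⟨x0, hx0, fun v0 hv0 => ?_⟩
  have hψ : Continuous (Function.uncurry fun v u : X => φ v (x0 + u)) := by
    have : (Function.uncurry fun v u : X => φ v (x0 + u)) =
      fun z : X × X => (Function.uncurry φ) (z.1, x0 + z.2) := rfl
    rw [this]; fun_prop
  have hψ' : Continuous (Function.uncurry fun u v : X => φ v (x0 + u)) := hψ.comp continuous_swap
  have hpc := par_cont μ (fun v u => φ v (x0 + u)) hψ 0 s
  obtain ⟨v, hv, hv'⟩ := exists_small μ (fun v => ∫ u in closedBall (0 : X) s, φ v (x0 + u) ∂μ)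
    hpc v0 τ (μ.real (closedBall (0 : X) s) * I / μ.real (closedBall (0 : X) (1 / 16))) hτ (by
      refine le_trans ?_ hx0'
      simp only [hH]
      rw [← swap_ball μ (fun v u => φ v (x0 + u)) hψ]
      refine setIntegral_mono_set (int_cont μ hpc _ _)
        (Filter.Eventually.of_forall fun v => integral_nonneg fun u => hφ0 _ _)
        (LE.le.eventuallyLE ?_)
      refine closedBall_subset_closedBall' ?_
      rw [mem_closedBall] at hv0
      linarith)
  refine ⟨v, hv, hv'.trans (le_of_eq ?_)⟩
  rw [vol_scale μ v0 hτ.le, vol_scale μ 0 hτ.le]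

/-- slopes along lines -/
def slo (g : X → Y) (m : ℕ) (v x : X) (l j : ℕ) : Y :=
  (8 * (m : ℝ) ^ l) • (g (x + (((j : ℝ) + 1) / (8 * (m : ℝ) ^ l)) • v)
    - g (x + ((j : ℝ) / (8 * (m : ℝ) ^ l)) • v))

lemma slo_avg (g : X → Y) (m : ℕ) (hm : 0 < m) (v x : X) (l q j : ℕ) :
    slo g m v x l j = (1 / ((m ^ q : ℕ) : ℝ)) •
      ∑ i ∈ Finset.range (m ^ q), slo g m v x (l + q) (j * m ^ q + i) := by
  have hm' : (0 : ℝ) < m := by exact_mod_cast hm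
  set P : ℕ → Y := fun i : ℕ => g (x + (((j : ℝ) * m ^ q + i) / (8 * (m : ℝ) ^ (l + q))) • v) with hP
  have h1 : ∀ i ∈ Finset.range (m ^ q), slo g m v x (l + q) (j * m ^ q + i) =
     (8 * (m : ℝ) ^ (l + q)) • (P (i + 1) - P i) := by
    intro i _
    simp only [hP]
    unfold slo
    push_cast
    rw [add_assoc ((j : ℝ) * m ^ q)]
  rw [Finset.sum_congr rfl h1, ← Finset.smul_sum, Finset.sum_range_sub, smul_smul]
  simp only [hP]
  unfold slo
  push_cast
  have e1 : 1 / (m : ℝ) ^ q * (8 * (m : ℝ) ^ (l + q)) = 8 * (m : ℝ) ^ l := by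
    rw [pow_add]; field_simp
  have e2 : ((j : ℝ) * m ^ q + m ^ q) / (8 * (m : ℝ) ^ (l + q)) = ((j : ℝ) + 1) / (8 * (m : ℝ) ^ l) := by
    rw [pow_add]; field_simp
  have e3 : ((j : ℝ) * m ^ q + 0) / (8 * (m : ℝ) ^ (l + q)) = (j : ℝ) / (8 * (m : ℝ) ^ l) := by
    rw [pow_add]; field_simp; ring
  rw [e1, e2, e3]

lemma slo_bound (g : X → Y) (hg : ∀ x y, ‖g x - g y‖ ≤ 2 * ‖x - y‖) (m : ℕ) (hm : 0 < m)
    (v x : X) (hv : ‖v‖ ≤ 1) (l j : ℕ) : ‖slo g m v x l j‖ ≤ 2 := by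
  have hm' : (0 : ℝ) < m := by exact_mod_cast hm
  unfold slo
  rw [norm_smul, Real.norm_of_nonneg (by positivity)]
  have := hg (x + (((j : ℝ) + 1) / (8 * (m : ℝ) ^ l)) • v) (x + ((j : ℝ) / (8 * (m : ℝ) ^ l)) • v)
  rw [add_sub_add_left_eq_sub, ← sub_smul, norm_smul, ← sub_div, add_sub_cancel_left,
    Real.norm_of_nonneg (by positivity)] at this
  calc _ ≤ 8 * (m : ℝ) ^ l * (2 * (1 / (8 * (m : ℝ) ^ l) * ‖v‖)) := by gcongr
    _ = 2 * ‖v‖ := by field_simp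
    _ ≤ 2 := by linarith

lemma slo_cont (g : X → Y) (hg : Continuous g) (m : ℕ) (l j : ℕ) :
    Continuous fun z : X × X => slo g m z.1 z.2 l j := by
  unfold slo; fun_prop

/-- difference of slopes at two scales -/
def Gd (g : X → Y) (m : ℕ) (t : ℝ) (v y : X) : Y :=
  (m / t) • (g (y + (t / m) • v) - g y) - (1 / t) • (g (y + t • v) - g y)

lemma energy_scale {N : Y → ℝ} (h : IsNorm N) (hNc : Continuous N)
    {δ : ℝ} (hδ : 0 < δ) (h2 : ∀ a b : Y,
      N ((1 / 2 : ℝ) • (a + b)) ^ 2 ≤ (N a ^ 2 + N b ^ 2) / 2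
        - δ * (N (a - b) ^ 2 - (1 / 16) * (N a ^ 2 + N b ^ 2)))
    (b : ℝ) (hb0 : 0 < b) (hb : ∀ y, N y ≤ b * ‖y‖)
    (g : X → Y) (hg : ∀ x y, ‖g x - g y‖ ≤ 2 * ‖x - y‖) (m : ℕ) (hm : 0 < m)
    (K : ℕ) (hK : 8 / (2 * δ) ≤ K) (r : ℕ) :
    ∃ k < K ^ r, ∫ v in closedBall (0 : X) 1, ∫ y in closedBall (0 : X) (1 / 8),
        N (Gd g m (1 / (8 * (m : ℝ) ^ k)) v y) ^ 2 ∂μ ∂μ ≤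
      m * ((16 * b ^ 2) *
        (μ.real (closedBall (0 : X) 1) * μ.real (closedBall (0 : X) (1 / 4))) / 4 ^ r) := by
  have hprop := FiniteDimensional.proper_real X
  have hm' : (0 : ℝ) < m := by exact_mod_cast hm
  have hgc := lip_cont hg
  set S : Set (X × X) := closedBall (0 : X) 1 ×ˢ closedBall (0 : X) (1 / 4) with hS
  have hSm : MeasurableSet S := measurableSet_closedBall.prod measurableSet_closedBall
  set w : ℕ → ℕ → X × X → ℝ := fun k l z => wEn N m (slo g m z.1 z.2) k l with hw
  have hwc : ∀ k l, Continuous (w k l) := by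
    intro k l
    simp only [hw]
    unfold wEn
    refine continuous_const.mul (continuous_finsetSum _ fun j _ => ?_)
    exact (hNc.comp ((slo_cont g hgc m l j).sub (slo_cont g hgc m k _))).pow 2
  have hwi : ∀ k l, IntegrableOn (w k l) S (μ.prod μ) := fun k l => int_cont_prod μ (hwc k l) _ _ _ _
  have hSr : (μ.prod μ).real S = μ.real (closedBall (0 : X) 1) * μ.real (closedBall (0 : X) (1 / 4)) :=
    measureReal_prod_prod _ _
  have hwle : ∀ k l, ∀ z ∈ S, w k l z ≤ 16 * b ^ 2 := by
    intro k l z hz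
    have hv : ‖z.1‖ ≤ 1 := by simpa using hz.1
    refine wEn_le N m hm _ k l _ fun j _ => ?_
    have h3 : ‖slo g m z.1 z.2 l j - slo g m z.1 z.2 k (j / m ^ (l - k))‖ ≤ 4 := by
      refine (norm_sub_le _ _).trans ?_
      linarith [slo_bound g hg m hm z.1 z.2 hv l j, slo_bound g hg m hm z.1 z.2 hv k (j / m ^ (l - k))]
    have h4 : N (slo g m z.1 z.2 l j - slo g m z.1 z.2 k (j / m ^ (l - k))) ≤ b * 4 :=
      (hb _).trans (by gcongr)
    calc _ ≤ (b * 4) ^ 2 := pow_le_pow_left₀ (h.nonneg' _) h4 2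
      _ = _ := by ring
  have hineq := fun k l p (hkl : k ≤ l) (hlp : l ≤ p) (z : X × X) =>
    wEn_ineqs h hδ h2 m hm (slo g m z.1 z.2) (slo_avg g m hm z.1 z.2) k l p hkl hlp
  obtain ⟨k, hk, hk'⟩ := small_jump (fun k l => ∫ z in S, w k l z ∂(μ.prod μ)) (2 * δ)
    ((16 * b ^ 2) * (μ.prod μ).real S) (by positivity) (by positivity)
    (fun k l => integral_nonneg fun z => wEn_nonneg _ _ _ _ _)
    (fun k l _ => by
      calc _ ≤ ∫ z in S, 16 * b ^ 2 ∂(μ.prod μ) :=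
            setIntegral_mono_on (hwi k l) (int_cont_prod μ continuous_const _ _ _ _) hSm (hwle k l)
        _ = _ := by rw [setIntegral_const, smul_eq_mul, mul_comm])
    (fun k l p hkl hlp => setIntegral_mono (hwi k l) (hwi k p) fun z => (hineq k l p hkl hlp z).1)
    (fun k l p hkl hlp => by
      rw [← integral_const_mul, ← integral_const_mul, ← integral_add (hwi k l) ((hwi l p).const_mul _)]
      exact setIntegral_mono ((hwi k l).add ((hwi l p).const_mul _)) ((hwi k p).const_mul _)
        fun z => (hineq k l p hkl hlp z).2)
    K hK r
  refine ⟨k, hk, ?_⟩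
  rw [hSr] at hk'
  set t : ℝ := 1 / (8 * (m : ℝ) ^ k) with ht
  have htpos : 0 < t := by positivity
  set φ : X → X → ℝ := fun v y => N (Gd g m t v y) ^ 2 with hφd
  have hφ0 : ∀ v y, 0 ≤ φ v y := fun v y => by positivity
  have hGc : Continuous fun z : X × X => Gd g m t z.1 z.2 := by unfold Gd; fun_prop
  have hφc : Continuous fun z : X × X => φ z.1 z.2 := (hNc.comp hGc).pow 2
  set I := ∫ v in closedBall (0 : X) 1, ∫ y in closedBall (0 : X) (1 / 8), φ v y ∂μ ∂μ with hI
  -- lower bound of the energy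
  have hlow : ∀ z : X × X, (1 / (m : ℝ) ^ (k + 1)) * ∑ i ∈ Finset.range (m ^ k),
      φ z.1 (((i : ℝ) * t) • z.1 + z.2) ≤ w k (k + 1) z := by
    intro z
    simp only [hw]
    unfold wEn
    rw [pow_succ m k, sum_range_mul_block]
    refine mul_le_mul_of_nonneg_left (Finset.sum_le_sum fun i _ => ?_) (by positivity)
    have h0mem : 0 ∈ Finset.range m := Finset.mem_range.2 hm
    refine le_trans (le_of_eq ?_) (Finset.single_le_sum
      (f := fun j => N (slo g m z.1 z.2 (k + 1) (i * m + j) -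
        slo g m z.1 z.2 k ((i * m + j) / m ^ (k + 1 - k))) ^ 2) (fun j _ => by positivity) h0mem)
    have e0 : k + 1 - k = 1 := by omega
    simp only [hφd, e0, pow_one, add_zero, Nat.mul_div_cancel _ hm]
    congr 2
    unfold Gd slo
    have hmk : (0 : ℝ) < m ^ k := by positivity
    have a1 : (m : ℝ) / t = 8 * (m : ℝ) ^ (k + 1) := by rw [ht, pow_succ]; field_simp
    have a2 : 1 / t = 8 * (m : ℝ) ^ k := by rw [ht]; field_simp
    have a3 : ((i : ℝ) * t) • z.1 + z.2 + (t / m) • z.1 =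
        z.2 + ((((i * m : ℕ) : ℝ) + 1) / (8 * (m : ℝ) ^ (k + 1))) • z.1 := by
      rw [add_right_comm, ← add_smul, add_comm]
      congr 2
      push_cast
      rw [ht, pow_succ]; field_simp
    have a4 : ((i : ℝ) * t) • z.1 + z.2 =
        z.2 + (((i * m : ℕ) : ℝ) / (8 * (m : ℝ) ^ (k + 1))) • z.1 := by
      rw [add_comm]
      congr 2
      push_cast
      rw [ht, pow_succ]; field_simp
    have a4' : ((i : ℝ) * t) • z.1 + z.2 =
        z.2 + ((i : ℝ) / (8 * (m : ℝ) ^ k)) • z.1 := by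
      rw [add_comm]
      congr 2
      rw [ht]; field_simp
    have a5 : ((i : ℝ) * t) • z.1 + z.2 + t • z.1 =
        z.2 + (((i : ℝ) + 1) / (8 * (m : ℝ) ^ k)) • z.1 := by
      rw [add_right_comm, ← add_smul, add_comm]
      congr 2
      rw [ht]; field_simp
    rw [a3, a5, ← a4, ← a4', a1, a2]
  have hφi : ∀ i : ℕ, Continuous fun z : X × X => φ z.1 (((i : ℝ) * t) • z.1 + z.2) := by
    intro i
    exact hφc.comp (g := fun z : X × X => φ z.1 z.2)
      (f := fun z : X × X => (z.1, ((i : ℝ) * t) • z.1 + z.2)) (by fun_prop)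
  have hshift : ∀ i ∈ Finset.range (m ^ k),
      I ≤ ∫ z in S, φ z.1 (((i : ℝ) * t) • z.1 + z.2) ∂(μ.prod μ) := by
    intro i hi
    rw [hS, setIntegral_prod _ (int_cont_prod μ (hφi i) _ _ _ _), hI]
    refine setIntegral_mono_on (int_cont μ (par_cont μ φ hφc _ _) _ _)
      (int_cont μ (par_cont μ (fun v y => φ v (((i : ℝ) * t) • v + y)) (hφi i) _ _) _ _)
      measurableSet_closedBall fun v hv => ?_
    dsimp only
    rw [shift_int μ (φ v) (((i : ℝ) * t) • v) 0]
    have hφv : Continuous (φ v) := hφc.comp (g := fun z : X × X => φ z.1 z.2)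
      (f := fun y => (v, y)) (by fun_prop)
    refine setIntegral_mono_set (int_cont μ hφv _ _) (Filter.Eventually.of_forall (hφ0 v))
      (LE.le.eventuallyLE ?_)
    refine closedBall_subset_closedBall' ?_
    rw [add_zero, dist_zero_left, norm_smul, Real.norm_of_nonneg (by positivity)]
    have hv' : ‖v‖ ≤ 1 := by simpa using hv
    have hi' : (i : ℝ) ≤ (m : ℝ) ^ k := by exact_mod_cast (Finset.mem_range.1 hi).le
    have : (i : ℝ) * t ≤ 1 / 8 := by
      calc (i : ℝ) * t ≤ (m : ℝ) ^ k * t := by gcongr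
        _ = 1 / 8 := by rw [ht]; field_simp
    have h5 : (i : ℝ) * t * ‖v‖ ≤ 1 / 8 * 1 := by gcongr
    linarith
  have hfin : (1 / (m : ℝ)) * I ≤ ∫ z in S, w k (k + 1) z ∂(μ.prod μ) := by
    calc (1 / (m : ℝ)) * I = (1 / (m : ℝ) ^ (k + 1)) * ∑ i ∈ Finset.range (m ^ k), I := by
          rw [Finset.sum_const, Finset.card_range, nsmul_eq_mul]
          push_cast
          rw [pow_succ]; field_simp
      _ ≤ (1 / (m : ℝ) ^ (k + 1)) * ∑ i ∈ Finset.range (m ^ k),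
            ∫ z in S, φ z.1 (((i : ℝ) * t) • z.1 + z.2) ∂(μ.prod μ) := by
          gcongr with i hi; exact hshift i hi
      _ = ∫ z in S, (1 / (m : ℝ) ^ (k + 1)) * ∑ i ∈ Finset.range (m ^ k),
            φ z.1 (((i : ℝ) * t) • z.1 + z.2) ∂(μ.prod μ) := by
          rw [integral_const_mul, integral_finsetSum]
          intro i _
          exact int_cont_prod μ (hφi i) _ _ _ _
      _ ≤ _ := by
          refine setIntegral_mono ?_ (hwi k (k + 1)) hlow
          exact int_cont_prod μ (continuous_const.mul (continuous_finsetSum _ fun i _ => hφi i)) _ _ _ _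
  have := hfin.trans hk'
  rw [one_div, inv_mul_le_iff₀ hm'] at this
  exact this

end selection

section final

set_option linter.unusedSectionVars false

variable {X Y : Type*} [NormedAddCommGroup X] [NormedSpace ℝ X] [FiniteDimensional ℝ X]
  [MeasurableSpace X] [BorelSpace X] (μ : Measure X) [μ.IsAddHaarMeasure]
  [NormedAddCommGroup Y] [NormedSpace ℝ Y]

lemma avg_Gd (g : X → Y) (hg : Continuous g) (m : ℕ) (t s : ℝ) (v x0 : X) :
    (μ.real (closedBall (0 : X) s))⁻¹ • ∫ u in closedBall (0 : X) s, Gd g m t v (x0 + u) ∂μ =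
      (m / t) • (smo μ g s (x0 + (t / m) • v) - smo μ g s x0) -
        (1 / t) • (smo μ g s (x0 + t • v) - smo μ g s x0) := by
  have e : ∀ u, Gd g m t v (x0 + u) =
      (m / t) • (g (x0 + (t / m) • v + u) - g (x0 + u)) -
        (1 / t) • (g (x0 + t • v + u) - g (x0 + u)) := by
    intro u
    unfold Gd
    rw [add_right_comm x0 u, add_right_comm x0 u]
  simp_rw [e]
  rw [integral_sub, integral_smul, integral_smul, smul_sub, smo_sub μ g hg, smo_sub μ g hg,
    smul_comm, smul_comm (1 / t)]
  · exact int_cont μ (by fun_prop) _ _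
  · exact int_cont μ (by fun_prop) _ _

lemma avg_Gd_bound {N : Y → ℝ} (hN : IsNorm N) (hNc : Continuous N) (a : ℝ) (ha : 0 < a)
    (haN : ∀ y, a * ‖y‖ ≤ N y)
    (G : X → Y) (hG : Continuous G) (s θ : ℝ) (hs : 0 < s) (hθ : 0 < θ)
    (h : ∫ u in closedBall (0 : X) s, N (G u) ^ 2 ∂μ ≤ μ.real (closedBall (0 : X) s) * θ ^ 2) :
    ‖(μ.real (closedBall (0 : X) s))⁻¹ • ∫ u in closedBall (0 : X) s, G u ∂μ‖ ≤ 2 * θ / a := by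
  have hV := vol_pos μ (0 : X) hs
  rw [norm_smul, norm_inv, Real.norm_of_nonneg hV.le, inv_mul_le_iff₀ hV]
  have hpt : ∀ u, ‖G u‖ ≤ θ / a + (1 / (a * θ)) * N (G u) ^ 2 := by
    intro u
    have h1 : N (G u) ≤ θ + N (G u) ^ 2 / θ := by
      rw [← sub_le_iff_le_add', le_div_iff₀ hθ]
      nlinarith [sq_nonneg (N (G u) - θ), hN.nonneg' (G u)]
    have h2 : ‖G u‖ ≤ N (G u) / a := by rw [le_div_iff₀ ha, mul_comm]; exact haN _
    calc ‖G u‖ ≤ (θ + N (G u) ^ 2 / θ) / a := h2.trans (by gcongr)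
      _ = _ := by field_simp
  have hc : Continuous fun u => N (G u) ^ 2 := (hNc.comp hG).pow 2
  calc ‖∫ u in closedBall (0 : X) s, G u ∂μ‖ ≤ ∫ u in closedBall (0 : X) s, ‖G u‖ ∂μ :=
        norm_integral_le_integral_norm _
    _ ≤ ∫ u in closedBall (0 : X) s, (θ / a + (1 / (a * θ)) * N (G u) ^ 2) ∂μ :=
        setIntegral_mono (int_cont μ hG.norm _ _) (int_cont μ (by fun_prop) _ _) hpt
    _ = μ.real (closedBall (0 : X) s) * (θ / a) + (1 / (a * θ)) *
          ∫ u in closedBall (0 : X) s, N (G u) ^ 2 ∂μ := by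
        have h0 : IntegrableOn (fun _ : X => θ / a) (closedBall (0 : X) s) μ :=
          int_cont μ continuous_const _ _
        have h1 : IntegrableOn (fun u => (1 / (a * θ)) * N (G u) ^ 2) (closedBall (0 : X) s) μ :=
          int_cont μ (continuous_const.mul hc) _ _
        rw [integral_add h0 h1, integral_const_mul, setIntegral_const, smul_eq_mul]
    _ ≤ μ.real (closedBall (0 : X) s) * (θ / a) + (1 / (a * θ)) *
          (μ.real (closedBall (0 : X) s) * θ ^ 2) := by gcongr
    _ = _ := by field_simp; norm_num

lemma affine_from [CompleteSpace Y] {N : Y → ℝ} (hN : IsNorm N) (hNc : Continuous N) (a : ℝ)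
    (ha : 0 < a) (haN : ∀ y, a * ‖y‖ ≤ N y)
    (g : X → Y) (hg : ∀ x y, ‖g x - g y‖ ≤ 2 * ‖x - y‖) (hn : 0 < Module.finrank ℝ X)
    (m : ℕ) (hm : 0 < m) (t σ τ θ ε : ℝ) (ht : 0 < t) (hσ : 0 < σ) (hτ : 0 < τ) (hτ' : τ ≤ 1 / 2)
    (hθ : 0 < θ) (x0 : X)
    (hsel : ∀ v0 ∈ closedBall (0 : X) (1 - τ), ∃ v ∈ closedBall v0 τ,
      ∫ u in closedBall (0 : X) (σ * t), N (Gd g m t v (x0 + u)) ^ 2 ∂μ ≤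
        μ.real (closedBall (0 : X) (σ * t)) * θ ^ 2)
    (hbud : 4 * σ + 4 * τ + 4 * Module.finrank ℝ X / (σ * m) + 2 * θ / a ≤ ε / 2) :
    ∃ A : X →L[ℝ] Y, ∀ y ∈ closedBall x0 (t / 2), ‖g y - (g x0 + A (y - x0))‖ ≤ ε * (t / 2) := by
  have hm' : (0 : ℝ) < m := by exact_mod_cast hm
  have hgc := lip_cont hg
  set s := σ * t with hs
  have hspos : 0 < s := by positivity
  set F := smo μ g s with hF
  obtain ⟨A, hA2, hA⟩ := almost_linear (fun w => F (x0 + w) - F x0)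
    (4 * Module.finrank ℝ X / s) (by positivity)
    (fun v => by
      have := smo_lip μ g hg s hspos (x0 + v) x0
      rwa [add_sub_cancel_left] at this)
    (fun a b => smo_second μ g hg s hspos hn x0 a b)
  refine ⟨A, fun y hy => ?_⟩
  set v0 : X := (1 / t) • (y - x0) with hv0
  have hyx : y - x0 = t • v0 := by
    rw [hv0, smul_smul, mul_one_div_cancel ht.ne', one_smul]
  have hv0n : ‖v0‖ ≤ 1 / 2 := by
    rw [mem_closedBall, dist_eq_norm] at hy
    rw [hv0, norm_smul, Real.norm_of_nonneg (by positivity), one_div, inv_mul_le_iff₀ ht]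
    linarith
  obtain ⟨v, hv, hsmall⟩ := hsel v0 (by rw [mem_closedBall_zero_iff]; linarith)
  rw [mem_closedBall, dist_eq_norm] at hv
  have hvn : ‖v‖ ≤ 1 := by
    have : ‖v‖ ≤ ‖v - v0‖ + ‖v0‖ := by simpa using norm_add_le (v - v0) v0
    linarith
  have h1 := avg_Gd_bound μ hN hNc a ha haN (fun u => Gd g m t v (x0 + u))
    (by unfold Gd; fun_prop) s θ hspos hθ hsmall
  rw [avg_Gd μ g hgc] at h1
  rw [← hF] at h1
  have h2 := hA ((t / m) • v)
  -- (iii)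
  have h3 : ‖F (x0 + t • v) - F x0 - A (t • v)‖ ≤
      t * (2 * θ / a) + t * (4 * Module.finrank ℝ X / (σ * m)) := by
    have e : F (x0 + t • v) - F x0 - A (t • v) =
        (m : ℝ) • (F (x0 + (t / m) • v) - F x0 - A ((t / m) • v)) -
        t • (((m : ℝ) / t) • (F (x0 + (t / m) • v) - F x0) -
        (1 / t) • (F (x0 + t • v) - F x0)) := by
      rw [smul_sub t, smul_smul, smul_smul, mul_one_div_cancel ht.ne', one_smul,
        mul_div_cancel₀ _ ht.ne', smul_sub (m : ℝ) _ (A _), ← A.map_smul, smul_smul,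
        mul_div_cancel₀ _ hm'.ne']
      abel
    rw [e]
    refine (norm_sub_le _ _).trans ?_
    rw [norm_smul, norm_smul, Real.norm_of_nonneg hm'.le, Real.norm_of_nonneg ht.le]
    have h4 : ‖(t / m) • v‖ ≤ t / m := by
      rw [norm_smul, Real.norm_of_nonneg (by positivity)]
      exact mul_le_of_le_one_right (by positivity) hvn
    have h5 : (m : ℝ) * ‖F (x0 + (t / m) • v) - F x0 - A ((t / m) • v)‖ ≤
        m * (4 * Module.finrank ℝ X / s * (t / m) ^ 2) := by
      gcongr
      exact h2.trans (by gcongr)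
    have h6 : (m : ℝ) * (4 * Module.finrank ℝ X / s * (t / m) ^ 2) =
        t * (4 * Module.finrank ℝ X / (σ * m)) := by
      rw [hs]; field_simp
    have h7 := mul_le_mul_of_nonneg_left h1 ht.le
    linarith
  have hy' : y = x0 + t • v0 := by rw [← hyx]; abel
  have e : g y - (g x0 + A (y - x0)) = (g (x0 + t • v0) - g (x0 + t • v))
      - (F (x0 + t • v) - g (x0 + t • v)) + (F (x0 + t • v) - F x0 - A (t • v))
      + (F x0 - g x0) + A (t • (v - v0)) := by
    rw [hyx, hy', smul_sub, map_sub]; abel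
  have i1 : ‖g (x0 + t • v0) - g (x0 + t • v)‖ ≤ 2 * (t * τ) := by
    refine (hg _ _).trans ?_
    rw [add_sub_add_left_eq_sub, ← smul_sub, norm_smul, Real.norm_of_nonneg ht.le, norm_sub_rev]
    gcongr
  have i2 : ‖A (t • (v - v0))‖ ≤ 2 * (t * τ) := by
    refine (hA2 _).trans ?_
    rw [norm_smul, Real.norm_of_nonneg ht.le]
    gcongr
  have i3 := smo_close μ g hg s hspos (x0 + t • v)
  have i4 := smo_close μ g hg s hspos x0
  rw [← hF] at i3 i4
  rw [e]
  have hbt := mul_le_mul_of_nonneg_left hbud ht.le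
  calc _ ≤ ‖g (x0 + t • v0) - g (x0 + t • v)‖ + ‖F (x0 + t • v) - g (x0 + t • v)‖
        + ‖F (x0 + t • v) - F x0 - A (t • v)‖ + ‖F x0 - g x0‖ + ‖A (t • (v - v0))‖ := by
        refine (norm_add_le _ _).trans (add_le_add_left ?_ _)
        refine (norm_add_le _ _).trans (add_le_add_left ?_ _)
        refine (norm_add_le _ _).trans (add_le_add_left ?_ _)
        exact norm_sub_le _ _
    _ ≤ ε * (t / 2) := by
        rw [hs] at i3 i4
        nlinarith

end final


lemma num_budget (e n : ℕ) (he : 1 ≤ e) (hn : 0 < n) (ε : ℝ) (hε : 0 < ε)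
    (h2 : 1 / ε ≤ 2 ^ (2 * e)) :
    128 * (n : ℝ) / (ε * ((2 ^ (15 * (e * n)) : ℕ) : ℝ)) ≤ ε / 8 := by
  set w : ℝ := 2 ^ (e * n) with hw
  have hL : 1 ≤ e * n := Nat.mul_pos he hn
  have hw2 : (2 : ℝ) ≤ w := by
    calc (2 : ℝ) = 2 ^ 1 := by norm_num
      _ ≤ w := pow_le_pow_right₀ (by norm_num) hL
  have hnw : (n : ℝ) ≤ w := by
    have h1 : (n : ℝ) ≤ 2 ^ n := by exact_mod_cast Nat.lt_two_pow_self.le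
    exact h1.trans (pow_le_pow_right₀ (by norm_num) (Nat.le_mul_of_pos_left n he))
  have hεw : 1 / ε ≤ w ^ 2 := by
    refine h2.trans ?_
    rw [hw, ← pow_mul]
    apply pow_le_pow_right₀ (by norm_num)
    nlinarith
  have h1 : 1 ≤ ε * w ^ 2 := by
    rw [div_le_iff₀ hε] at hεw; linarith
  have hm : ((2 ^ (15 * (e * n)) : ℕ) : ℝ) = w ^ 15 := by
    rw [hw, ← pow_mul]; push_cast; ring
  rw [hm, div_le_iff₀ (by positivity)]
  have h3 : (1024 : ℝ) ≤ w ^ 10 := by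
    calc (1024 : ℝ) = 2 ^ 10 := by norm_num
      _ ≤ w ^ 10 := by gcongr
  have h4 : 1024 * (n : ℝ) * 1 ≤ w ^ 10 * w * (ε * w ^ 2) ^ 2 := by
    have : (1 : ℝ) ≤ (ε * w ^ 2) ^ 2 := one_le_pow₀ h1
    gcongr
  have h5 : ε / 8 * (ε * w ^ 15) = (w ^ 10 * w * (ε * w ^ 2) ^ 2) / 8 := by ring
  rw [h5]; linarith

lemma num_sel (e n C0 : ℕ) (he : 1 ≤ e) (hn : 0 < n) (ε a b V : ℝ) (hε : 0 < ε) (ha : 0 < a)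
    (h2 : 1 / ε ≤ 2 ^ (2 * e)) (h1 : 1 / ε ≤ 2 ^ (e + 1)) (hV : 0 < V)
    (hC : 16 * 256 * b ^ 2 / a ^ 2 ≤ 2 ^ C0) :
    ((2 ^ (15 * (e * n)) : ℕ) : ℝ) * ((16 * b ^ 2) * (V * ((1 / 4) ^ n * V))
      / 4 ^ ((28 + C0) * (e * n))) / ((1 / 16) ^ n * V) / ((ε / 32) ^ n * V) ≤
      (a * ε / 16) ^ 2 := by
  set w : ℝ := 2 ^ (e * n) with hw
  have hL : 1 ≤ e * n := Nat.mul_pos he hn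
  have hw2 : (2 : ℝ) ≤ w := by
    calc (2 : ℝ) = 2 ^ 1 := by norm_num
      _ ≤ w := pow_le_pow_right₀ (by norm_num) hL
  have hnw : (2 : ℝ) ^ n ≤ w := pow_le_pow_right₀ (by norm_num) (Nat.le_mul_of_pos_left n he)
  have hεw : 1 / ε ≤ w ^ 2 := by
    refine h2.trans ?_
    rw [hw, ← pow_mul]
    apply pow_le_pow_right₀ (by norm_num)
    nlinarith
  have hεn : (1 / ε) ^ n ≤ w ^ 2 := by
    calc (1 / ε) ^ n ≤ (2 ^ (2 * e)) ^ n := by gcongr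
      _ = w ^ 2 := by rw [hw, ← pow_mul, ← pow_mul]; ring
  have hm : ((2 ^ (15 * (e * n)) : ℕ) : ℝ) = w ^ 15 := by
    rw [hw, ← pow_mul]; push_cast; ring
  have hr : w ^ (28 + C0) ≤ (4 : ℝ) ^ ((28 + C0) * (e * n)) := by
    rw [hw, ← pow_mul, mul_comm (e * n)]
    gcongr; norm_num
  have key : w ^ 15 * (16 * 256 * b ^ 2 / a ^ 2) * ((2 ^ n) ^ 2 * (2 ^ n) ^ 5 * (1 / ε) ^ n)
      * (1 / ε) ^ 2 ≤ (4 : ℝ) ^ ((28 + C0) * (e * n)) := by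
    calc _ ≤ w ^ 15 * w ^ C0 * (w ^ 2 * w ^ 5 * w ^ 2) * (w ^ 2) ^ 2 := by
          have : 16 * 256 * b ^ 2 / a ^ 2 ≤ w ^ C0 := hC.trans (by gcongr)
          gcongr
      _ = w ^ (28 + C0) := by ring
      _ ≤ _ := hr
  rw [hm]
  set D : ℝ := (4 : ℝ) ^ ((28 + C0) * (e * n)) with hD
  have hDp : 0 < D := by positivity
  have e1 : w ^ 15 * ((16 * b ^ 2) * (V * ((1 / 4) ^ n * V)) / D) / ((1 / 16) ^ n * V)
      / ((ε / 32) ^ n * V) = (a * ε / 16) ^ 2 * ((w ^ 15 * (16 * 256 * b ^ 2 / a ^ 2) *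
        ((2 ^ n) ^ 2 * (2 ^ n) ^ 5 * (1 / ε) ^ n) * (1 / ε) ^ 2) / D) := by
    have p16 : (1 / 16 : ℝ) ^ n = 1 / (2 ^ n) ^ 4 := by
      rw [one_div_pow, ← pow_mul, mul_comm n 4, pow_mul]; norm_num
    have p4 : (1 / 4 : ℝ) ^ n = 1 / (2 ^ n) ^ 2 := by
      rw [one_div_pow, ← pow_mul, mul_comm n 2, pow_mul]; norm_num
    have p32 : (ε / 32 : ℝ) ^ n = ε ^ n / (2 ^ n) ^ 5 := by
      rw [div_pow, ← pow_mul, mul_comm n 5, pow_mul]; norm_num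
    rw [p16, p4, p32, one_div_pow]
    field_simp
    ring
  rw [e1]
  exact mul_le_of_le_one_right (by positivity) ((div_le_one hDp).2 key)

lemma num_exp (e n C0 h k : ℕ) (he : 1 ≤ e) (hn : 0 < n) (ε : ℝ) (hε : 0 < ε)
    (h1 : 2 ^ e ≤ 1 / ε) (hk : k < (4 ^ h) ^ ((28 + C0) * (e * n))) :
    Real.exp (-1 / ε ^ (((15 + 2 * h * (28 + C0) : ℕ) : ℝ) * n)) ≤
      1 / (8 * ((2 ^ (15 * (e * n)) : ℕ) : ℝ) ^ k) / 2 := by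
  set L := e * n with hLd
  have hL : 1 ≤ L := Nat.mul_pos he hn
  set c := 15 + 2 * h * (28 + C0) with hc
  have e1 : ε ^ ((c : ℝ) * n) = ε ^ (c * n) := by
    rw [← Nat.cast_mul, Real.rpow_natCast]
  have hN : 15 * L * (k + 1) ≤ 2 ^ (c * L) := by
    calc 15 * L * (k + 1) ≤ 2 ^ (15 * L) * (4 ^ h) ^ ((28 + C0) * L) :=
          Nat.mul_le_mul Nat.lt_two_pow_self.le hk
      _ = 2 ^ (c * L) := by
          rw [show (4 : ℕ) = 2 ^ 2 by norm_num, ← pow_mul, ← pow_mul, ← pow_add, hc]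
          congr 1; ring
  have hR : (((15 * L * (k + 1) : ℕ)) : ℝ) ≤ 1 / ε ^ (c * n) := by
    calc (((15 * L * (k + 1) : ℕ)) : ℝ) ≤ ((2 ^ (c * L) : ℕ) : ℝ) := by exact_mod_cast hN
      _ = (2 ^ e) ^ (c * n) := by
          push_cast; rw [← pow_mul, hLd]; congr 1; ring
      _ ≤ (1 / ε) ^ (c * n) := by gcongr
      _ = _ := by rw [one_div_pow]
  have h16 : 16 * ((2 ^ (15 * L) : ℕ) : ℝ) ^ k ≤ Real.exp (1 / ε ^ (c * n)) := by
    calc 16 * ((2 ^ (15 * L) : ℕ) : ℝ) ^ k = 2 ^ (4 + 15 * L * k) := by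
          rw [Nat.cast_pow, ← pow_mul, pow_add]; norm_num
      _ ≤ 2 ^ (15 * L * (k + 1)) := pow_le_pow_right₀ (by norm_num) (by nlinarith)
      _ ≤ (Real.exp 1) ^ (15 * L * (k + 1)) := by
          gcongr
          linarith [Real.add_one_le_exp (1 : ℝ)]
      _ = Real.exp ((15 * L * (k + 1) : ℕ) : ℝ) := by rw [← Real.exp_nat_mul, mul_one]
      _ ≤ _ := Real.exp_le_exp.2 hR
  rw [e1, neg_div, Real.exp_neg, div_div, one_div (8 * _ * 2)]
  exact inv_anti₀ (by positivity) (by linarith)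

/-- **Theorem (quantitative differentiation for uniformly convexifiable targets).**
If `Y` admits an equivalent uniformly convex norm, then there is `c = c(Y) > 0` such that
for every `n ∈ ℕ`, every `n`-dimensional normed space `X` and every `ε ∈ (0,1/2]` one has
`r^{X→Y}(ε) ≥ exp(-1/ε^{cn})`. -/
theorem statement0 (Y : Type*) [NormedAddCommGroup Y] [NormedSpace ℝ Y] [CompleteSpace Y]
    (hY : AdmitsEquivUniformlyConvexNorm Y) :
    ∃ c : ℝ, 0 < c ∧
      ∀ (n : ℕ), 0 < n → ∀ (X : Type) [NormedAddCommGroup X] [NormedSpace ℝ X],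
        FiniteDimensional ℝ X → Module.finrank ℝ X = n →
        ∀ ε ∈ Set.Ioc (0 : ℝ) (1 / 2),
          Real.exp (-1 / ε ^ (c * n)) ≤ sSup (uaapSet X Y ε) := by
  obtain ⟨N, hN, ⟨a, b, ha, hb, hab⟩, hU⟩ := hY
  obtain ⟨δ, hδ, h2⟩ := two_point hN hU
  have hNc : Continuous N := by
    refine (LipschitzWith.of_dist_le' (K := b) fun x y => ?_).continuous
    rw [Real.dist_eq, dist_eq_norm, abs_le]
    have i1 := hN.2.2 (x - y) y
    have i2 := hN.2.2 (y - x) x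
    rw [sub_add_cancel] at i1 i2
    have i3 := (hab (x - y)).2
    have i4 := (hab (y - x)).2
    rw [norm_sub_rev] at i4
    constructor <;> linarith
  obtain ⟨h, hh⟩ := pow_unbounded_of_one_lt (8 / (2 * δ)) (by norm_num : (1 : ℝ) < 4)
  obtain ⟨C0, hC0⟩ := pow_unbounded_of_one_lt (16 * 256 * b ^ 2 / a ^ 2)
    (by norm_num : (1 : ℝ) < 2)
  refine ⟨((15 + 2 * h * (28 + C0) : ℕ) : ℝ), by positivity, ?_⟩
  intro n hn X _ _ hfd hfr ε hε
  obtain ⟨hε0, hε1⟩ := hε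
  letI : MeasurableSpace X := borel X
  haveI : BorelSpace X := ⟨rfl⟩
  let μ : Measure X := Measure.addHaar
  have hinv : 2 ≤ 1 / ε := by rw [le_div_iff₀ hε0]; linarith
  obtain ⟨e, he1, he2⟩ := exists_nat_pow_near (by linarith : (1 : ℝ) ≤ 1 / ε)
    (by norm_num : (1 : ℝ) < 2)
  have he : 1 ≤ e := by
    rcases Nat.eq_zero_or_pos e with h0 | h0
    · subst h0; norm_num at he2 hinv; linarith
    · exact h0
  have he3 : 1 / ε ≤ 2 ^ (2 * e) :=
    he2.le.trans (pow_le_pow_right₀ (by norm_num) (by omega))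
  have hmem : Real.exp (-1 / ε ^ (((15 + 2 * h * (28 + C0) : ℕ) : ℝ) * n)) ∈ uaapSet X Y ε := by
    refine ⟨⟨Real.exp_pos _, ?_⟩, ?_⟩
    · rw [Real.exp_lt_one_iff, neg_div]
      have : 0 < 1 / ε ^ (((15 + 2 * h * (28 + C0) : ℕ) : ℝ) * n) := by positivity
      linarith
    intro f hf
    obtain ⟨g, hg, hgf⟩ := ext_lip f hf
    set m : ℕ := 2 ^ (15 * (e * n)) with hm
    have hm0 : 0 < m := by positivity
    have hm1 : (1 : ℝ) ≤ m := by exact_mod_cast hm0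
    obtain ⟨k, hk, hI⟩ := energy_scale μ hN hNc hδ h2 b hb (fun y => (hab y).2) g hg m hm0
      (4 ^ h) (by push_cast; exact hh.le) ((28 + C0) * (e * n))
    have hkm : (1 : ℝ) ≤ (m : ℝ) ^ k := one_le_pow₀ hm1
    set t : ℝ := 1 / (8 * (m : ℝ) ^ k) with ht
    have ht0 : 0 < t := by positivity
    have ht1 : t ≤ 1 / 8 := by rw [ht]; gcongr; linarith
    have hgc := lip_cont hg
    obtain ⟨x0, hx0, hsel⟩ := select μ (fun v y => N (Gd g m t v y) ^ 2)
      (by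
        have : (Function.uncurry fun v y => N (Gd g m t v y) ^ 2) =
          fun z : X × X => N (Gd g m t z.1 z.2) ^ 2 := rfl
        rw [this]; unfold Gd; fun_prop)
      (fun _ _ => sq_nonneg _) _ hI (ε / 32 * t) (by nlinarith) (ε / 32) (by positivity)
    have hV := vol_pos μ (0 : X) one_pos
    have hns := num_sel e n C0 he hn ε a b _ hε0 ha he3 he2.le hV hC0.le
    obtain ⟨A, hA⟩ := affine_from μ hN hNc a ha (fun y => (hab y).1) g hg (by rw [hfr]; exact hn)
      m hm0 t (ε / 32) (ε / 32) (a * ε / 16) ε ht0 (by positivity) (by positivity) (by linarith)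
      (by positivity) x0
      (by
        intro v0 hv0
        obtain ⟨v, hv, hle⟩ := hsel v0 hv0
        refine ⟨v, hv, hle.trans ?_⟩
        rw [mul_div_assoc, mul_div_assoc]
        refine mul_le_mul_of_nonneg_left ?_ measureReal_nonneg
        rw [vol_scale μ (0 : X) (s := 1 / 4) (by norm_num),
          vol_scale μ (0 : X) (s := 1 / 16) (by norm_num),
          vol_scale μ (0 : X) (s := ε / 32) (by positivity), hfr]
        exact hns)
      (by
        have hb := num_budget e n he hn ε hε0 he3
        rw [hfr]
        have i1 : 4 * (n : ℝ) / (ε / 32 * m) = 128 * n / (ε * m) := by field_simp; norm_num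
        have i2 : 2 * (a * ε / 16) / a = ε / 8 := by field_simp; norm_num
        rw [i1, i2]
        linarith)
    have hsub : closedBall x0 (t / 2) ⊆ closedBall (0 : X) 1 := by
      refine closedBall_subset_closedBall' ?_
      rw [mem_closedBall] at hx0
      linarith
    refine ⟨t / 2, num_exp e n C0 h k he hn ε hε0 he1 hk, x0, hsub,
      (A : X →ₗ[ℝ] Y).toAffineMap + AffineMap.const ℝ X (g x0 - A x0), fun y hy => ?_⟩
    have := hA y hy
    rw [← hgf y (hsub hy)]
    convert this using 3
    simp
    abel
  exact le_csSup ⟨1, fun r hr => hr.1.2.le⟩ hmem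
end
end

section
/- There exists a universal constant a ∈ (0,1) with the following property. For every q ∈ [2,∞), every n ∈ ℕ, every n-dimensional normed space (X,‖·‖_X), every Banach space (Y,‖·‖_Y) with m_q(Y) < ∞, every Hilbertian norm |·| on X (identifying X with ℝ^n), and every ε ∈ (0,1/2), one has r^{X→Y}(ε) ≥ exp(−(n^{5/4}·√(I_q(X)M(X))·m_q(Y))^q / (aε)^{n+q}). -/
open MeasureTheory Metric Set ENNReal

noncomputable section

universe u

/-- `m` is an upper bound for the martingale cotype `q` constant `𝔪_q(Y)` of `Y`:
for every martingale `(M_k)` on a probability space, `Σ_k ∫‖M_{k+1}-M_k‖^q ≤ m^q·sup_k ∫‖M_k‖^q`. -/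
def MartCotypeBound (q : ℝ) (Y : Type*) [NormedAddCommGroup Y] [NormedSpace ℝ Y]
    [CompleteSpace Y] (m : ℝ) : Prop :=
  ∀ (Ω : Type) [MeasurableSpace Ω] (μ : Measure Ω) [IsProbabilityMeasure μ]
    (ℱ : Filtration ℕ ‹MeasurableSpace Ω›) (M : ℕ → Ω → Y), Martingale M ℱ μ →
    ∀ B : ℝ≥0∞, (∀ k, ∫⁻ ω, (‖M k ω‖₊ : ℝ≥0∞) ^ q ∂μ ≤ B) →
      ∑' k : ℕ, ∫⁻ ω, (‖M (k + 1) ω - M k ω‖₊ : ℝ≥0∞) ^ q ∂μ ≤ ENNReal.ofReal m ^ q * B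

/-- The average of `N` over the Euclidean unit sphere `S^{n-1}` (normalized surface measure):
the quantity `M(X)`. -/
def MX {n : ℕ} (N : EuclideanSpace ℝ (Fin n) → ℝ) : ℝ :=
  ⨍ σ : sphere (0 : EuclideanSpace ℝ (Fin n)) 1, N σ
    ∂((volume : Measure (EuclideanSpace ℝ (Fin n))).toSphere)

/-- The quantity `I_q(X) = (⨍_{B_X} |x|^q dx)^{1/q}`, where `B_X = {N ≤ 1}` and `|·|`
is the Euclidean norm. -/
def IqX {n : ℕ} (q : ℝ) (N : EuclideanSpace ℝ (Fin n) → ℝ) : ℝ :=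
  (⨍ x in {x : EuclideanSpace ℝ (Fin n) | N x ≤ 1}, ‖x‖ ^ q) ^ (1 / q)

/-- The set of admissible radii `r ∈ (0,1)` in the definition of `r^{X→Y}(ε)`, where the
`n`-dimensional normed space `X` is `ℝⁿ` with the norm `N`. -/
def uaapSetN {n : ℕ} (N : EuclideanSpace ℝ (Fin n) → ℝ) (Y : Type*)
    [NormedAddCommGroup Y] [NormedSpace ℝ Y] (ε : ℝ) : Set ℝ :=
  {r : ℝ | r ∈ Set.Ioo (0 : ℝ) 1 ∧
    ∀ f : EuclideanSpace ℝ (Fin n) → Y,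
      (∀ x, N x ≤ 1 → ∀ y, N y ≤ 1 → ‖f x - f y‖ ≤ N (x - y)) →
      ∃ ρ : ℝ, r ≤ ρ ∧ ∃ x : EuclideanSpace ℝ (Fin n),
        {y : EuclideanSpace ℝ (Fin n) | N (y - x) ≤ ρ} ⊆ {y | N y ≤ 1} ∧
        ∃ Λ : EuclideanSpace ℝ (Fin n) →ᵃ[ℝ] Y,
          ∀ y, N (y - x) ≤ ρ → ‖f y - Λ y‖ ≤ ε * ρ}

namespace Pf

/-- left endpoint of the dyadic interval of generation `k` coded by `ω` -/
def sk {T : ℕ} (ω : Fin T → Bool) (k : ℕ) : ℝ :=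
  ∑ i : Fin T, if (i : ℕ) < k ∧ ω i = true then (1 / 2 : ℝ) ^ ((i : ℕ) + 1) else 0

def proj {T : ℕ} (k : ℕ) (ω : Fin T → Bool) : Fin T → Bool :=
  fun i => if (i : ℕ) < k then ω i else false

lemma sk_proj {T : ℕ} (ω : Fin T → Bool) (k : ℕ) : sk (proj k ω) k = sk ω k := by
  unfold sk proj
  apply Finset.sum_congr rfl
  intro i _
  by_cases h : (i : ℕ) < k <;> simp [h]

lemma proj_proj {T : ℕ} {j k : ℕ} (h : j ≤ k) (ω : Fin T → Bool) :
    proj j (proj k ω) = proj j ω := by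
  unfold proj
  funext i
  by_cases h1 : (i : ℕ) < j
  · simp [h1, lt_of_lt_of_le h1 h]
  · simp [h1]

lemma sk_succ {T : ℕ} (ω : Fin T → Bool) {k : ℕ} (hk : k < T) :
    sk ω (k + 1) = sk ω k + if ω ⟨k, hk⟩ = true then (1 / 2 : ℝ) ^ (k + 1) else 0 := by
  unfold sk
  have : ∀ i : Fin T, (if (i : ℕ) < k + 1 ∧ ω i = true then (1 / 2 : ℝ) ^ ((i : ℕ) + 1) else 0)
      = (if (i : ℕ) < k ∧ ω i = true then (1 / 2 : ℝ) ^ ((i : ℕ) + 1) else 0)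
        + if i = ⟨k, hk⟩ then (if ω ⟨k, hk⟩ = true then (1 / 2 : ℝ) ^ (k + 1) else 0) else 0 := by
    intro i
    by_cases h : i = ⟨k, hk⟩
    · subst h; simp
    · have h' : (i : ℕ) ≠ k := fun hh => h (Fin.ext hh)
      have : ((i : ℕ) < k + 1) ↔ (i : ℕ) < k := by omega
      simp [h, this]
  simp_rw [this]
  rw [Finset.sum_add_distrib]
  simp

lemma sk_bounds {T : ℕ} (ω : Fin T → Bool) (k : ℕ) (hk : k ≤ T) :
    0 ≤ sk ω k ∧ sk ω k + (1 / 2 : ℝ) ^ k ≤ 1 := by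
  induction k with
  | zero => simp [sk]
  | succ k ih =>
    obtain ⟨h1, h2⟩ := ih (by omega)
    rw [sk_succ ω (by omega)]
    have : (0 : ℝ) < (1 / 2) ^ (k + 1) := by positivity
    have e : (1 / 2 : ℝ) ^ k = 2 * (1 / 2) ^ (k + 1) := by ring
    split_ifs <;> constructor <;> linarith

def flip {T : ℕ} (k : Fin T) : (Fin T → Bool) ≃ (Fin T → Bool) where
  toFun ω := Function.update ω k (!(ω k))
  invFun ω := Function.update ω k (!(ω k))
  left_inv ω := by simp
  right_inv ω := by simp

def umeas (T : ℕ) : Measure (Fin T → Bool) := ((2 : ℝ≥0∞) ^ T)⁻¹ • Measure.count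

instance (T : ℕ) : IsProbabilityMeasure (umeas T) := by
  constructor
  simp only [umeas, Measure.smul_apply, smul_eq_mul]
  rw [Measure.count_apply_finite _ (Set.finite_univ)]
  simp
  exact ENNReal.inv_mul_cancel (by simp) (by simp)

def filt (T : ℕ) : Filtration ℕ (inferInstance : MeasurableSpace (Fin T → Bool)) where
  seq k := MeasurableSpace.comap (proj k) inferInstance
  mono' := by
    intro j k h
    have : (proj j : (Fin T → Bool) → _) = proj j ∘ proj k := by
      funext ω; simp [proj_proj h]
    show MeasurableSpace.comap (proj j) inferInstance ≤ MeasurableSpace.comap (proj k) inferInstance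
    rw [this, ← MeasurableSpace.comap_comp]
    exact MeasurableSpace.comap_mono (Measurable.of_discrete).comap_le
  le' := by
    intro k
    exact (Measurable.of_discrete).comap_le

variable {Y : Type u} [NormedAddCommGroup Y] [NormedSpace ℝ Y] [CompleteSpace Y]

def mart (F : ℝ → Y) (T k : ℕ) (ω : Fin T → Bool) : Y :=
  (2 : ℝ) ^ (min k T) • (F (sk ω (min k T) + (1 / 2) ^ (min k T)) - F (sk ω (min k T)))

lemma mart_diff (F : ℝ → Y) (T k : ℕ) (hk : k < T) (ω : Fin T → Bool) :
    mart F T (k + 1) ω - mart F T k ω = (if ω ⟨k, hk⟩ = true then (1 : ℝ) else -1) •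
      ((2 : ℝ) ^ k • (F (sk ω k) + F (sk ω k + (1 / 2) ^ k) - (2 : ℝ) • F (sk ω k + (1 / 2) ^ (k + 1)))) := by
  unfold mart
  rw [min_eq_left (by omega : k + 1 ≤ T), min_eq_left hk.le, sk_succ ω hk]
  have e : (1 / 2 : ℝ) ^ k = (1 / 2) ^ (k + 1) + (1 / 2) ^ (k + 1) := by ring
  split_ifs with h
  · rw [e, ← add_assoc]
    module
  · rw [e, add_zero]
    module

lemma mart_martingale (F : ℝ → Y) (T : ℕ) : Martingale (mart F T) (filt T) (umeas T) := by
  apply martingale_of_setIntegral_eq_succ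
  · intro k
    have : mart F T k = (fun ω => mart F T k ω) ∘ proj k := by
      funext ω
      simp only [mart, Function.comp]
      have : sk (proj k ω) (min k T) = sk ω (min k T) := by
        rw [← sk_proj ω, ← proj_proj (min_le_left k T) ω, sk_proj]
      rw [this]
    rw [this]
    refine StronglyMeasurable.comp_measurable (StronglyMeasurable.of_discrete) ?_
    exact comap_measurable _
  · intro k
    exact Integrable.of_finite
  · intro k s hs
    rw [← sub_eq_zero, ← integral_sub Integrable.of_finite.integrableOn Integrable.of_finite.integrableOn]
    by_cases hk : k < T
    swap
    · have : ∀ ω, mart F T k ω = mart F T (k+1) ω := by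
        intro ω; unfold mart
        rw [min_eq_right (by omega : T ≤ k), min_eq_right (by omega : T ≤ k+1)]
      simp [this]
    obtain ⟨s', -, rfl⟩ := hs
    rw [← integral_indicator (MeasurableSet.of_discrete)]
    set g := (proj k ⁻¹' s').indicator (fun ω => mart F T k ω - mart F T (k+1) ω) with hg
    have hp : ∀ ω, proj k (flip ⟨k, hk⟩ ω) = proj k ω := by
      intro ω; funext i
      simp only [proj, flip, Equiv.coe_fn_mk]
      split_ifs with h
      · rw [Function.update_of_ne]
        intro h'; simp [h'] at h
      · rfl
    have h1 : ∀ ω, g (flip ⟨k, hk⟩ ω) = - g ω := by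
      intro ω
      rw [hg]
      have hm : (flip ⟨k, hk⟩ ω ∈ proj k ⁻¹' s') = (ω ∈ proj k ⁻¹' s') := by
        simp only [mem_preimage, hp]
      by_cases h : ω ∈ proj k ⁻¹' s'
      · rw [indicator_of_mem h, indicator_of_mem (hm ▸ h)]
        have e1 : mart F T k ω - mart F T (k+1) ω = -(mart F T (k+1) ω - mart F T k ω) := by abel
        have e2 : mart F T k (flip ⟨k, hk⟩ ω) - mart F T (k+1) (flip ⟨k, hk⟩ ω)
          = -(mart F T (k+1) (flip ⟨k, hk⟩ ω) - mart F T k (flip ⟨k, hk⟩ ω)) := by abel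
        rw [e1, e2, mart_diff F T k hk, mart_diff F T k hk, ← sk_proj (flip _ _), hp, sk_proj]
        have : (flip ⟨k, hk⟩ ω) ⟨k, hk⟩ = !(ω ⟨k, hk⟩) := by simp [flip]
        rw [this]
        cases ω ⟨k, hk⟩ <;> simp
      · rw [indicator_of_notMem h, indicator_of_notMem (hm ▸ h)]; simp
    have h2 : ∫ ω, g (flip ⟨k, hk⟩ ω) ∂(umeas T) = ∫ ω, g ω ∂(umeas T) := by
      unfold umeas
      rw [integral_smul_measure, integral_smul_measure, integral_count, integral_count]
      congr 1
      exact Equiv.sum_comp (flip ⟨k, hk⟩) g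
    simp_rw [h1] at h2
    rw [integral_neg] at h2
    have h3 : (2 : ℝ) • ∫ ω, g ω ∂(umeas T) = 0 := by
      rw [two_smul]; nth_rewrite 1 [← h2]; simp
    simpa using h3

/-- one-dimensional estimate -/
lemma oneD {q m : ℝ} (hq : 0 < q) (hY : MartCotypeBound q Y m) (F : ℝ → Y) (L : ℝ)
    (hF : ∀ s t, ‖F s - F t‖ ≤ L * |s - t|) (T : ℕ) :
    ∑ k ∈ Finset.range T, ∑ ω : Fin T → Bool, ((2 : ℝ≥0∞) ^ T)⁻¹ *
      ‖(2 : ℝ) ^ k • (F (sk ω k) + F (sk ω k + (1 / 2) ^ k) - (2 : ℝ) • F (sk ω k + (1 / 2) ^ (k + 1)))‖ₑ ^ q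
      ≤ ENNReal.ofReal m ^ q * ENNReal.ofReal L ^ q := by
  have h := hY (Fin T → Bool) (umeas T) (filt T) (mart F T) (mart_martingale F T)
    (ENNReal.ofReal L ^ q) ?_
  · refine le_trans ?_ h
    refine le_trans ?_ (ENNReal.sum_le_tsum (Finset.range T))
    apply Finset.sum_le_sum
    intro k hk
    have hk' : k < T := Finset.mem_range.mp hk
    rw [umeas, lintegral_smul_measure, lintegral_count, tsum_fintype, smul_eq_mul, Finset.mul_sum]
    apply Finset.sum_le_sum
    intro ω _
    rw [mart_diff F T k hk']
    gcongr
    rw [← enorm_eq_nnnorm]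
    split_ifs <;> simp
  · intro k
    have : ∀ ω, (‖mart F T k ω‖₊ : ℝ≥0∞) ≤ ENNReal.ofReal L := by
      intro ω
      rw [← enorm_eq_nnnorm, ← ofReal_norm]
      apply ENNReal.ofReal_le_ofReal
      unfold mart
      rw [norm_smul]
      refine (mul_le_mul_of_nonneg_left (hF _ _) (norm_nonneg _)).trans ?_
      rw [add_sub_cancel_left, abs_of_pos (by positivity), Real.norm_of_nonneg (by positivity)]
      rw [mul_left_comm, ← mul_pow]; norm_num
    calc ∫⁻ ω, (‖mart F T k ω‖₊ : ℝ≥0∞) ^ q ∂(umeas T) ≤ ∫⁻ ω, ENNReal.ofReal L ^ q ∂(umeas T) := by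
          gcongr with ω; exact this ω
      _ = _ := by simp

lemma one_le_m {q m : ℝ} (hq : 0 < q) (hm : 0 ≤ m) (hY : MartCotypeBound q Y m) [Nontrivial Y] : 1 ≤ m := by
  obtain ⟨y, hy⟩ := exists_ne (0 : Y)
  have h := oneD hq hY (fun t => |t - 1/2| • y) ‖y‖ (by
    intro s t
    rw [← sub_smul, norm_smul, mul_comm]
    gcongr
    refine (abs_abs_sub_abs_le_abs_sub _ _).trans (by simp)) 1
  simp [sk] at h
  have e : ‖(2:ℝ)⁻¹ • y + |1 - (2:ℝ)⁻¹| • y‖ₑ = ‖y‖ₑ := by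
    rw [← add_smul]; norm_num
  rw [e, ← ofReal_norm] at h
  have h2 : ENNReal.ofReal ‖y‖ ^ q ≤ ENNReal.ofReal m ^ q * ENNReal.ofReal ‖y‖ ^ q := by
    refine le_trans (le_of_eq ?_) h
    rw [← mul_assoc, ENNReal.mul_inv_cancel (by simp) (by simp), one_mul]
  rw [← ENNReal.mul_rpow_of_nonneg _ _ hq.le, ENNReal.rpow_le_rpow_iff hq, ← ENNReal.ofReal_mul hm,
    ENNReal.ofReal_le_ofReal_iff (by positivity)] at h2
  have : 0 < ‖y‖ := norm_pos_iff.mpr hy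
  nlinarith
end Pf

namespace Pf

variable {Y : Type u} [NormedAddCommGroup Y] [NormedSpace ℝ Y] [CompleteSpace Y]
variable {X : Type*} [NormedAddCommGroup X] [NormedSpace ℝ X] [FiniteDimensional ℝ X]
  [MeasurableSpace X] [BorelSpace X] (μ : Measure X) [μ.IsAddHaarMeasure]

lemma shift_le (V : X → ℝ≥0∞) (z : X) (r R : ℝ) (hz : ‖z‖ + r ≤ R) :
    ∫⁻ x in closedBall (0 : X) r, V x ∂μ ≤ ∫⁻ x in closedBall (0 : X) R, V (x + z) ∂μ := by
  rw [← lintegral_indicator measurableSet_closedBall, ← lintegral_indicator measurableSet_closedBall,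
    ← lintegral_add_right_eq_self (fun x => (closedBall (0 : X) r).indicator V x) z]
  apply lintegral_mono
  intro x
  by_cases h : x + z ∈ closedBall (0 : X) r
  · have h' : x ∈ closedBall (0 : X) R := by
      rw [mem_closedBall_zero_iff] at h ⊢
      have := norm_sub_le (x + z) z
      rw [add_sub_cancel_right] at this
      linarith
    simp only [indicator_of_mem h, indicator_of_mem h']
    exact le_rfl
  · simp only [indicator_of_notMem h]
    exact zero_le

/-- central second difference -/
def D (f : X → Y) (w x : X) : Y := f (x + w) + f (x - w) - (2 : ℝ) • f x

def Vk (q : ℝ) (f : X → Y) (k : ℕ) (w x : X) : ℝ≥0∞ :=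
  ‖(2 : ℝ) ^ k • D f ((1 / 2 : ℝ) ^ k • w) x‖ₑ ^ q

lemma lip_cont {f : X → Y} {L : ℝ} (hf : ∀ x y, ‖f x - f y‖ ≤ L * ‖x - y‖) : Continuous f := by
  have : LipschitzWith (Real.toNNReal L) f := by
    apply LipschitzWith.of_dist_le_mul
    intro x y
    rw [dist_eq_norm, dist_eq_norm]
    refine (hf x y).trans ?_
    gcongr
    exact Real.le_coe_toNNReal L
  exact this.continuous

lemma Vk_meas {q : ℝ} {f : X → Y} (hf : Continuous f) (k : ℕ) :
    Measurable (fun p : X × X => Vk q f k p.1 p.2) := by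
  unfold Vk D
  apply Measurable.pow_const
  apply Continuous.measurable
  fun_prop

lemma Vk_meas' {q : ℝ} {f : X → Y} (hf : Continuous f) (k : ℕ) (w : X) :
    Measurable (Vk q f k w) := by
  unfold Vk D
  apply Measurable.pow_const
  apply Continuous.measurable
  fun_prop

lemma Vk_line (q : ℝ) (f : X → Y) (k : ℕ) (w x : X) (s : ℝ) :
    Vk q f k w (x + (s + (1 / 2) ^ (k + 1)) • ((2 : ℝ) • w)) =
    ‖(2 : ℝ) ^ k • (f (x + s • ((2 : ℝ) • w)) + f (x + (s + (1 / 2) ^ k) • ((2 : ℝ) • w))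
      - (2 : ℝ) • f (x + (s + (1 / 2) ^ (k + 1)) • ((2 : ℝ) • w)))‖ₑ ^ q := by
  unfold Vk D
  have e : (1 / 2 : ℝ) ^ k = 2 * (1 / 2) ^ (k + 1) := by ring
  have e1 : x + (s + (1 / 2) ^ (k + 1)) • ((2 : ℝ) • w) + (1 / 2 : ℝ) ^ k • w
      = x + (s + (1 / 2) ^ k) • ((2 : ℝ) • w) := by
    rw [e]; module
  have e2 : x + (s + (1 / 2) ^ (k + 1)) • ((2 : ℝ) • w) - (1 / 2 : ℝ) ^ k • w
      = x + s • ((2 : ℝ) • w) := by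
    rw [e]; module
  rw [e1, e2, add_comm (f (x + s • ((2 : ℝ) • w)))]

lemma integrated {q m : ℝ} (hq : 0 < q) (hY : MartCotypeBound q Y m) (f : X → Y) (L : ℝ)
    (hL : 0 ≤ L) (hf : ∀ x y, ‖f x - f y‖ ≤ L * ‖x - y‖) (T : ℕ) (w : X) (hw : ‖w‖ ≤ 4) :
    ∑ k ∈ Finset.range T, ∫⁻ x in closedBall (0 : X) 2, Vk q f k w x ∂μ
      ≤ (ENNReal.ofReal m ^ q * ENNReal.ofReal (8 * L) ^ q) * μ (closedBall 0 10) := by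
  have hfc := lip_cont hf
  have hV : ∀ k, Measurable (Vk q f k w) := fun k => Vk_meas' hfc k w
  let z : ℕ → (Fin T → Bool) → X := fun k ω => (sk ω k + (1 / 2) ^ (k + 1)) • ((2 : ℝ) • w)
  have h1 : ∀ x : X, ∑ k ∈ Finset.range T, ∑ ω : Fin T → Bool, ((2 : ℝ≥0∞) ^ T)⁻¹ *
      Vk q f k w (x + z k ω) ≤ ENNReal.ofReal m ^ q * ENNReal.ofReal (8 * L) ^ q := by
    intro x
    have := oneD hq hY (fun t => f (x + t • ((2 : ℝ) • w))) (8 * L) (by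
      intro s t
      refine (hf _ _).trans ?_
      rw [add_sub_add_left_eq_sub, ← sub_smul, norm_smul, norm_smul, Real.norm_eq_abs]
      simp only [Real.norm_ofNat]
      have : L * (|s - t| * (2 * ‖w‖)) ≤ L * (|s - t| * (2 * 4)) := by gcongr
      linarith) T
    refine le_trans (le_of_eq ?_) this
    apply Finset.sum_congr rfl; intro k _
    apply Finset.sum_congr rfl; intro ω _
    simp only [z]
    rw [Vk_line]
  have hz : ∀ k ∈ Finset.range T, ∀ ω, ‖z k ω‖ + 2 ≤ 10 := by
    intro k hk ω
    have hk' := Finset.mem_range.mp hk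
    obtain ⟨b1, b2⟩ := sk_bounds ω k hk'.le
    simp only [z]
    rw [norm_smul, norm_smul, Real.norm_ofNat, Real.norm_of_nonneg (by positivity)]
    have e : (1 / 2 : ℝ) ^ k = 2 * (1 / 2) ^ (k + 1) := by ring
    have p : (0:ℝ) < (1 / 2) ^ (k + 1) := by positivity
    have : (sk ω k + (1 / 2) ^ (k + 1)) * (2 * ‖w‖) ≤ 1 * (2 * 4) := by
      gcongr; linarith
    linarith
  calc ∑ k ∈ Finset.range T, ∫⁻ x in closedBall (0 : X) 2, Vk q f k w x ∂μ
      = ∑ k ∈ Finset.range T, ∑ ω : Fin T → Bool, ((2 : ℝ≥0∞) ^ T)⁻¹ *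
          ∫⁻ x in closedBall (0 : X) 2, Vk q f k w x ∂μ := by
        apply Finset.sum_congr rfl; intro k _
        simp only [Finset.sum_const, Finset.card_univ, Fintype.card_pi, Fintype.card_bool,
          Finset.prod_const, Fintype.card_fin, nsmul_eq_mul]
        push_cast
        rw [← mul_assoc, ENNReal.mul_inv_cancel (by simp) (by simp), one_mul]
    _ ≤ ∑ k ∈ Finset.range T, ∑ ω : Fin T → Bool, ((2 : ℝ≥0∞) ^ T)⁻¹ *
          ∫⁻ x in closedBall (0 : X) 10, Vk q f k w (x + z k ω) ∂μ := by
        apply Finset.sum_le_sum; intro k hk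
        apply Finset.sum_le_sum; intro ω _
        exact mul_le_mul' le_rfl (shift_le μ _ _ _ _ (hz k hk ω))
    _ = ∫⁻ x in closedBall (0 : X) 10, ∑ k ∈ Finset.range T, ∑ ω : Fin T → Bool, ((2 : ℝ≥0∞) ^ T)⁻¹ *
          Vk q f k w (x + z k ω) ∂μ := by
        have hm : ∀ k ω, Measurable (fun x => Vk q f k w (x + z k ω)) :=
          fun k ω => (hV k).comp (measurable_add_const _)
        rw [lintegral_finsetSum _ (fun k _ => Finset.measurable_sum _ (fun ω _ => (hm k ω).const_mul _))]
        apply Finset.sum_congr rfl; intro k _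
        rw [lintegral_finsetSum _ (fun ω _ => (hm k ω).const_mul _)]
        apply Finset.sum_congr rfl; intro ω _
        rw [lintegral_const_mul _ (hm k ω)]
    _ ≤ ∫⁻ x in closedBall (0 : X) 10, ENNReal.ofReal m ^ q * ENNReal.ofReal (8 * L) ^ q ∂μ := by
        gcongr with x; exact h1 x
    _ = _ := by simp
end Pf

namespace Pf

variable {Y : Type u} [NormedAddCommGroup Y] [NormedSpace ℝ Y] [CompleteSpace Y]
variable {X : Type*} [NormedAddCommGroup X] [NormedSpace ℝ X] [FiniteDimensional ℝ X]
  [MeasurableSpace X] [BorelSpace X] (μ : Measure X) [μ.IsAddHaarMeasure]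

instance : ProperSpace X := FiniteDimensional.proper ℝ X

/-- double ball average (with `μ (closedBall 0 1) = 1`) -/
def AA (f : X → Y) (x : X) : Y :=
  ∫ p in closedBall (0 : X) 1 ×ˢ closedBall (0 : X) 1, f (x + (p.1 + p.2)) ∂(μ.prod μ)

def chi (u : X) : ℝ := (closedBall (0 : X) 1).indicator (fun _ => (1 : ℝ)) u

lemma chi_neg (u : X) : chi (-u) = chi u := by
  simp [chi, indicator]

lemma chi_meas : Measurable (chi : X → ℝ) :=
  measurable_const.indicator measurableSet_closedBall

lemma chi_smul (g : X × X → Y) (α β : X) :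
    (fun p : X × X => (chi (p.1 - α) * chi (p.2 - β)) • g p) =
      (closedBall α 1 ×ˢ closedBall β 1).indicator g := by
  funext p
  by_cases h1 : p.1 ∈ closedBall α 1 <;> by_cases h2 : p.2 ∈ closedBall β 1 <;>
    simp_all [chi, indicator, mem_closedBall, dist_eq_norm] <;>
    split_ifs <;> first | rfl | (exfalso; linarith) | (rename_i h3; exfalso; linarith [h3.1])

lemma int_chi (g : X × X → Y) (hg : Continuous g) (α β : X) :
    Integrable (fun p : X × X => (chi (p.1 - α) * chi (p.2 - β)) • g p) (μ.prod μ) := by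
  rw [chi_smul, integrable_indicator_iff (measurableSet_closedBall.prod measurableSet_closedBall)]
  exact hg.continuousOn.integrableOn_compact
    ((isCompact_closedBall _ _).prod (isCompact_closedBall _ _))

lemma AA_eq (f : X → Y) (c α β : X) :
    AA μ f (c + α + β) = ∫ p : X × X, (chi (p.1 - α) * chi (p.2 - β)) • f (c + (p.1 + p.2)) ∂(μ.prod μ) := by
  have h0 : AA μ f (c + α + β) = ∫ p : X × X, (chi p.1 * chi p.2) • f (c + α + β + (p.1 + p.2)) ∂(μ.prod μ) := by
    unfold AA
    rw [← integral_indicator (measurableSet_closedBall.prod measurableSet_closedBall), ← chi_smul]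
    simp
  rw [h0, ← integral_sub_right_eq_self _ ((α, β) : X × X)]
  congr 1
  funext p
  simp only [Prod.fst_sub, Prod.snd_sub]
  congr 2
  abel

lemma neginv : (μ.prod μ).IsNegInvariant :=
  Measure.IsAddHaarMeasure.isNegInvariant_of_regular _

def P (a u : X) : ℝ := chi (u - (1 / 2 : ℝ) • a) - chi (u + (1 / 2 : ℝ) • a)

lemma P_odd (a u : X) : P a (-u) = - P a u := by
  unfold P
  rw [← chi_neg (-u - _), ← chi_neg (-u + _)]
  rw [show -(-u - (1 / 2 : ℝ) • a) = u + (1 / 2 : ℝ) • a by abel,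
    show -(-u + (1 / 2 : ℝ) • a) = u - (1 / 2 : ℝ) • a by abel]
  ring

lemma P_meas (a : X) : Measurable (P a) :=
  (chi_meas.comp (measurable_sub_const _)).sub (chi_meas.comp (measurable_add_const _))

lemma PP_expand (g : X × X → Y) (a b : X) : (fun p : X × X => (P a p.1 * P b p.2) • g p) =
    fun p => (chi (p.1 - (1/2:ℝ) • a) * chi (p.2 - (1/2:ℝ) • b)) • g p
     - (chi (p.1 - (1/2:ℝ) • a) * chi (p.2 - -((1/2:ℝ) • b))) • g p
     - (chi (p.1 - -((1/2:ℝ) • a)) * chi (p.2 - (1/2:ℝ) • b)) • g p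
     + (chi (p.1 - -((1/2:ℝ) • a)) * chi (p.2 - -((1/2:ℝ) • b))) • g p := by
  funext p
  unfold P
  rw [sub_neg_eq_add, sub_neg_eq_add]
  module

lemma int_PP (g : X × X → Y) (hg : Continuous g) (a b : X) :
    Integrable (fun p : X × X => (P a p.1 * P b p.2) • g p) (μ.prod μ) := by
  rw [PP_expand]
  exact (((int_chi μ g hg _ _).sub (int_chi μ g hg _ _)).sub (int_chi μ g hg _ _)).add
    (int_chi μ g hg _ _)

lemma AA_diff (f : X → Y) (hf : Continuous f) (x a b : X) :
    AA μ f (x + a + b) - AA μ f (x + a) - AA μ f (x + b) + AA μ f x =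
      ∫ p : X × X, (P a p.1 * P b p.2) • f ((x + (1/2:ℝ) • (a + b)) + (p.1 + p.2)) ∂(μ.prod μ) := by
  set c := x + (1/2:ℝ) • (a + b) with hc
  set g : X × X → Y := fun p => f (c + (p.1 + p.2)) with hg
  have hgc : Continuous g := by fun_prop
  have e1 : x + a + b = c + (1/2:ℝ) • a + (1/2:ℝ) • b := by rw [hc]; module
  have e2 : x + a = c + (1/2:ℝ) • a + -((1/2:ℝ) • b) := by rw [hc]; module
  have e3 : x + b = c + -((1/2:ℝ) • a) + (1/2:ℝ) • b := by rw [hc]; module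
  have e4 : x = c + -((1/2:ℝ) • a) + -((1/2:ℝ) • b) := by rw [hc]; module
  have i1 := AA_eq μ f c ((1/2:ℝ) • a) ((1/2:ℝ) • b)
  have i2 := AA_eq μ f c ((1/2:ℝ) • a) (-((1/2:ℝ) • b))
  have i3 := AA_eq μ f c (-((1/2:ℝ) • a)) ((1/2:ℝ) • b)
  have i4 := AA_eq μ f c (-((1/2:ℝ) • a)) (-((1/2:ℝ) • b))
  rw [← e1] at i1
  rw [← e2] at i2
  rw [← e3] at i3
  rw [← e4] at i4
  rw [i1, i2, i3, i4]
  rw [show (fun p : X × X => (P a p.1 * P b p.2) • f (c + (p.1 + p.2)))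
    = fun p : X × X => (P a p.1 * P b p.2) • g p from rfl, PP_expand]
  rw [integral_add, integral_sub, integral_sub]
  · exact int_chi μ g hgc _ _
  · exact int_chi μ g hgc _ _
  · exact (int_chi μ g hgc _ _).sub (int_chi μ g hgc _ _)
  · exact int_chi μ g hgc _ _
  · exact ((int_chi μ g hgc _ _).sub (int_chi μ g hgc _ _)).sub (int_chi μ g hgc _ _)
  · exact int_chi μ g hgc _ _

lemma AA_diff2 (f : X → Y) (hf : Continuous f) (x a b : X) :
    (2 : ℝ) • (AA μ f (x + a + b) - AA μ f (x + a) - AA μ f (x + b) + AA μ f x) =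
      ∫ p : X × X, (P a p.1 * P b p.2) • D f (p.1 + p.2) (x + (1/2:ℝ) • (a + b)) ∂(μ.prod μ) := by
  set c := x + (1/2:ℝ) • (a + b) with hc
  have h1 := AA_diff μ f hf x a b
  rw [← hc] at h1
  have h2 : ∫ p : X × X, (P a p.1 * P b p.2) • f (c + (p.1 + p.2)) ∂(μ.prod μ)
     = ∫ p : X × X, (P a p.1 * P b p.2) • f (c - (p.1 + p.2)) ∂(μ.prod μ) := by
    haveI := neginv μ
    rw [← integral_neg_eq_self]
    congr 1
    funext p
    simp only [Prod.fst_neg, Prod.snd_neg, P_odd, neg_mul_neg]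
    congr 2
    abel
  have h3 : ∫ p : X × X, (P a p.1 * P b p.2) • f c ∂(μ.prod μ) = 0 := by
    rw [← AA_diff μ (fun _ => f c) continuous_const x a b]
    unfold AA
    abel
  have e : (fun p : X × X => (P a p.1 * P b p.2) • D f (p.1 + p.2) c) = fun p : X × X =>
      (P a p.1 * P b p.2) • f (c + (p.1 + p.2)) + (P a p.1 * P b p.2) • f (c - (p.1 + p.2))
       - (2 : ℝ) • ((P a p.1 * P b p.2) • f c) := by
    funext p; unfold D; module
  rw [e, integral_sub, integral_add, integral_smul, h3, ← h2, ← h1]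
  · module
  · exact int_PP μ _ (by fun_prop) _ _
  · exact int_PP μ _ (by fun_prop) _ _
  · exact (int_PP μ _ (by fun_prop) _ _).add (int_PP μ _ (by fun_prop) _ _)
  · exact (int_PP μ (fun _ => f c) (by fun_prop) _ _).smul (2 : ℝ)

lemma AA_sub (hμ : μ (closedBall 0 1) = 1) (f : X → Y) (hf : Continuous f) (x : X) :
    (2 : ℝ) • (AA μ f x - f x) =
      ∫ p in closedBall (0 : X) 1 ×ˢ closedBall (0 : X) 1, D f (p.1 + p.2) x ∂(μ.prod μ) := by
  have hi : ∀ g : X × X → Y, Continuous g →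
      IntegrableOn g (closedBall (0 : X) 1 ×ˢ closedBall (0 : X) 1) (μ.prod μ) := fun g hg =>
    hg.continuousOn.integrableOn_compact ((isCompact_closedBall _ _).prod (isCompact_closedBall _ _))
  haveI := neginv μ
  have h2 : AA μ f x = ∫ p in closedBall (0 : X) 1 ×ˢ closedBall (0 : X) 1, f (x - (p.1 + p.2)) ∂(μ.prod μ) := by
    unfold AA
    rw [← integral_indicator (measurableSet_closedBall.prod measurableSet_closedBall),
      ← integral_indicator (measurableSet_closedBall.prod measurableSet_closedBall),
      ← chi_smul, ← chi_smul, ← integral_neg_eq_self]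
    congr 1
    funext p
    simp only [Prod.fst_neg, Prod.snd_neg, sub_zero, chi_neg]
    congr 2
    abel
  have h3 : ∫ p in closedBall (0 : X) 1 ×ˢ closedBall (0 : X) 1, f x ∂(μ.prod μ) = f x := by
    simp [measureReal_def, Measure.prod_prod, hμ]
  unfold D
  rw [integral_sub, integral_add, integral_smul, h3, ← h2]
  · unfold AA; module
  · exact hi _ (by fun_prop)
  · exact hi _ (by fun_prop)
  · exact hi _ (by fun_prop)
  · exact hi _ (by fun_prop)

lemma P_mass (hμ : μ (closedBall 0 1) = 1) (a : X) (ha : ‖a‖ ≤ 2) :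
    ∫⁻ u, ‖P a u‖ₑ ∂μ ≤ ENNReal.ofReal (Module.finrank ℝ X * ‖a‖) := by
  set n := Module.finrank ℝ X
  set h := (1/2:ℝ) • a with hh
  have hn : ‖h‖ = ‖a‖ / 2 := by rw [hh, norm_smul]; norm_num; ring
  have hn1 : ‖h‖ ≤ 1 := by linarith
  set S := closedBall (0 : X) (1 - ‖h‖)
  have hs1 : S ⊆ closedBall h 1 := by
    intro u hu
    rw [mem_closedBall_zero_iff] at hu
    rw [mem_closedBall, dist_eq_norm]
    linarith [norm_sub_le u h]
  have hs2 : S ⊆ closedBall (-h) 1 := by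
    intro u hu
    rw [mem_closedBall_zero_iff] at hu
    rw [mem_closedBall, dist_eq_norm]
    have := norm_sub_le u (-h)
    rw [norm_neg] at this
    linarith
  have hv : ∀ z : X, μ (closedBall z 1) = 1 := fun z => by
    rw [Measure.addHaar_closedBall_center, hμ]
  have hpt : ∀ u, ‖P a u‖ₑ ≤ (closedBall h 1 \ S).indicator (fun _ => (1 : ℝ≥0∞)) u
      + (closedBall (-h) 1 \ S).indicator (fun _ => (1 : ℝ≥0∞)) u := by
    intro u
    have c1 : chi (u - h) = (closedBall h 1).indicator (fun _ => (1:ℝ)) u := by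
      simp [chi, indicator, dist_eq_norm]
    have c2 : chi (u + h) = (closedBall (-h) 1).indicator (fun _ => (1:ℝ)) u := by
      simp [chi, indicator, dist_eq_norm]
    unfold P
    rw [← hh, c1, c2]
    by_cases h0 : u ∈ S
    · rw [indicator_of_mem (hs1 h0), indicator_of_mem (hs2 h0)]; simp
    · by_cases h1 : u ∈ closedBall h 1 <;> by_cases h2 : u ∈ closedBall (-h) 1
      · rw [indicator_of_mem h1, indicator_of_mem h2]; simp
      · rw [indicator_of_mem h1, indicator_of_notMem h2, indicator_of_mem (s := closedBall h 1 \ S) ⟨h1, h0⟩]; simp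
      · rw [indicator_of_notMem h1, indicator_of_mem h2]
        rw [indicator_of_mem (s := closedBall (-h) 1 \ S) ⟨h2, h0⟩]; simp
      · rw [indicator_of_notMem h1, indicator_of_notMem h2]; simp
  have hS : μ S = ENNReal.ofReal ((1 - ‖h‖) ^ n) := by
    rw [Measure.addHaar_closedBall' _ _ (by linarith), hμ, mul_one]
  have hSm : MeasurableSet S := measurableSet_closedBall
  have hd : ∀ z, S ⊆ closedBall z 1 → μ (closedBall z 1 \ S) = ENNReal.ofReal (1 - (1 - ‖h‖) ^ n) := by
    intro z hz
    rw [measure_sdiff hz hSm.nullMeasurableSet (by rw [hS]; simp), hv, hS,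
      ENNReal.ofReal_sub _ (by have : 0 ≤ 1 - ‖h‖ := by linarith
                               positivity), ENNReal.ofReal_one]
  calc ∫⁻ u, ‖P a u‖ₑ ∂μ ≤ ∫⁻ u, ((closedBall h 1 \ S).indicator (fun _ => (1 : ℝ≥0∞)) u
      + (closedBall (-h) 1 \ S).indicator (fun _ => (1 : ℝ≥0∞)) u) ∂μ := lintegral_mono hpt
    _ = μ (closedBall h 1 \ S) + μ (closedBall (-h) 1 \ S) := by
      rw [lintegral_add_left (measurable_const.indicator (measurableSet_closedBall.diff hSm)),
        lintegral_indicator (measurableSet_closedBall.diff hSm),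
        lintegral_indicator (measurableSet_closedBall.diff hSm)]
      simp
    _ ≤ _ := by
      have hp : (1 - ‖h‖) ^ n ≤ 1 := pow_le_one₀ (by linarith) (by linarith [norm_nonneg h])
      rw [hd h hs1, hd _ hs2, ← ENNReal.ofReal_add (by linarith) (by linarith)]
      apply ENNReal.ofReal_le_ofReal
      have := one_add_mul_le_pow (a := -‖h‖) (by linarith) n
      rw [← sub_eq_add_neg] at this
      rw [hn] at *
      linarith

end Pf

namespace Pf

variable {Y : Type u} [NormedAddCommGroup Y] [NormedSpace ℝ Y] [CompleteSpace Y]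
variable {X : Type*} [NormedAddCommGroup X] [NormedSpace ℝ X] [FiniteDimensional ℝ X]
  [MeasurableSpace X] [BorelSpace X] (μ : Measure X) [μ.IsAddHaarMeasure]

lemma P_supp (a u : X) (ha : ‖a‖ ≤ 2) (h : P a u ≠ 0) : ‖u‖ ≤ 2 := by
  have hn : ‖(1/2:ℝ) • a‖ ≤ 1 := by rw [norm_smul]; norm_num; linarith
  by_contra hu
  apply h
  unfold P chi
  rw [indicator_of_notMem, indicator_of_notMem, sub_zero]
  · rw [mem_closedBall_zero_iff]
    have := norm_sub_le (u + (1/2:ℝ) • a) ((1/2:ℝ) • a)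
    rw [add_sub_cancel_right] at this
    linarith
  · rw [mem_closedBall_zero_iff]
    have := norm_add_le (u - (1/2:ℝ) • a) ((1/2:ℝ) • a)
    rw [sub_add_cancel] at this
    linarith

lemma D_meas {f : X → Y} (hf : Continuous f) : Measurable (fun z : X × X => ‖D f z.1 z.2‖ₑ) := by
  unfold D
  apply Continuous.measurable
  fun_prop

lemma supp_meas : MeasurableSet {z : X × X | ‖z.1‖ ≤ 4 ∧ ‖z.2‖ ≤ 1} :=
  (measurableSet_le measurable_fst.norm measurable_const).inter
    (measurableSet_le measurable_snd.norm measurable_const)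

/-- the first piece -/
lemma piece0 (hμ : μ (closedBall 0 1) = 1) (y : X) (hy : ‖y‖ ≤ 1) :
    ∃ ν : Measure (X × X), ν univ ≤ 1 ∧ (∀ᵐ z ∂ν, ‖z.1‖ ≤ 4 ∧ ‖z.2‖ ≤ 1) ∧
      ∀ f : X → Y, Continuous f → ‖(2:ℝ) • (AA μ f y - f y)‖ₑ ≤ ∫⁻ z, ‖D f z.1 z.2‖ₑ ∂ν := by
  have hφ : Measurable (fun p : X × X => (p.1 + p.2, y)) := by fun_prop
  refine ⟨((μ.prod μ).restrict (closedBall (0 : X) 1 ×ˢ closedBall (0 : X) 1)).map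
    (fun p : X × X => (p.1 + p.2, y)), ?_, ?_, ?_⟩
  · rw [Measure.map_apply hφ MeasurableSet.univ]
    simp [Measure.prod_prod, hμ]
  · rw [ae_map_iff hφ.aemeasurable]
    · filter_upwards [ae_restrict_mem (measurableSet_closedBall.prod measurableSet_closedBall)]
        with p hp
      rw [mem_prod, mem_closedBall_zero_iff, mem_closedBall_zero_iff] at hp
      exact ⟨by linarith [norm_add_le p.1 p.2], hy⟩
    · exact supp_meas
  · intro f hf
    rw [AA_sub μ hμ f hf, lintegral_map (D_meas hf) hφ]
    exact enorm_integral_le_lintegral_enorm _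

lemma piece1 (hμ : μ (closedBall 0 1) = 1) (a b : X) (ha : ‖a‖ ≤ 1) (hb : ‖b‖ ≤ 1) :
    ∃ ν : Measure (X × X), ν univ ≤ ENNReal.ofReal (Module.finrank ℝ X * ‖a‖) *
        ENNReal.ofReal (Module.finrank ℝ X * ‖b‖) ∧ (∀ᵐ z ∂ν, ‖z.1‖ ≤ 4 ∧ ‖z.2‖ ≤ 1) ∧
      ∀ f : X → Y, Continuous f →
        ‖(2:ℝ) • (AA μ f (a + b) - AA μ f a - AA μ f b + AA μ f 0)‖ₑ
          ≤ ∫⁻ z, ‖D f z.1 z.2‖ₑ ∂ν := by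
  set c := (1/2:ℝ) • (a + b) with hc
  have hcn : ‖c‖ ≤ 1 := by
    rw [hc, norm_smul]; norm_num; linarith [norm_add_le a b]
  have hφ : Measurable (fun p : X × X => (p.1 + p.2, c)) := by fun_prop
  have hw : Measurable (fun p : X × X => ‖P a p.1 * P b p.2‖ₑ) :=
    (((P_meas a).comp measurable_fst).mul ((P_meas b).comp measurable_snd)).enorm
  refine ⟨((μ.prod μ).withDensity (fun p : X × X => ‖P a p.1 * P b p.2‖ₑ)).map
    (fun p : X × X => (p.1 + p.2, c)), ?_, ?_, ?_⟩
  · rw [Measure.map_apply hφ MeasurableSet.univ, preimage_univ, withDensity_apply _ MeasurableSet.univ,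
      setLIntegral_univ]
    simp_rw [enorm_mul]
    rw [lintegral_prod_mul (P_meas a).enorm.aemeasurable (P_meas b).enorm.aemeasurable]
    exact mul_le_mul' (P_mass μ hμ a (by linarith)) (P_mass μ hμ b (by linarith))
  · rw [ae_map_iff hφ.aemeasurable]
    · rw [ae_withDensity_iff hw]
      filter_upwards with p hp
      have hp' : P a p.1 * P b p.2 ≠ 0 := by simpa using hp
      have h1 := P_supp a p.1 (by linarith) (left_ne_zero_of_mul hp')
      have h2 := P_supp b p.2 (by linarith) (right_ne_zero_of_mul hp')
      exact ⟨by linarith [norm_add_le p.1 p.2], hcn⟩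
    · exact supp_meas
  · intro f hf
    have := AA_diff2 μ f hf 0 a b
    rw [zero_add, zero_add, zero_add] at this
    have h2 := lintegral_withDensity_eq_lintegral_mul (μ.prod μ) hw ((D_meas hf).comp hφ)
    simp only [Function.comp_def] at h2
    rw [this, lintegral_map (D_meas hf) hφ, h2, ← hc]
    refine (enorm_integral_le_lintegral_enorm _).trans (le_of_eq ?_)
    congr 1
    funext p
    rw [enorm_smul]
    rfl

lemma B1 (hμ : μ (closedBall 0 1) = 1) (hn : 1 ≤ Module.finrank ℝ X) (y : X)
    (hy : Module.finrank ℝ X * ‖y‖ ≤ 1) (J : ℕ) (hJ : 1 ≤ J) :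
    ∃ ν : Measure (X × X), ν univ ≤ 2 ∧ (∀ᵐ z ∂ν, ‖z.1‖ ≤ 4 ∧ ‖z.2‖ ≤ 1) ∧
      ∀ f : X → Y, Continuous f →
        ‖(2:ℝ) • (f y - AA μ f 0 - (J : ℝ) • (AA μ f ((J : ℝ)⁻¹ • y) - AA μ f 0))‖ₑ
          ≤ ∫⁻ z, ‖D f z.1 z.2‖ₑ ∂ν := by
  set n := Module.finrank ℝ X with hnn
  have hn' : (1:ℝ) ≤ n := by exact_mod_cast hn
  have hJ' : (1:ℝ) ≤ J := by exact_mod_cast hJ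
  have hJ0 : (0:ℝ) < J := by linarith
  have hy1 : ‖y‖ ≤ 1 := by nlinarith [norm_nonneg y]
  have hfr : ∀ i : ℕ, i ≤ J → n * ‖((i:ℝ) * (J:ℝ)⁻¹) • y‖ ≤ i * (J:ℝ)⁻¹ := by
    intro i _
    rw [norm_smul, Real.norm_of_nonneg (by positivity)]
    have : 0 ≤ (i:ℝ) * (J:ℝ)⁻¹ := by positivity
    nlinarith
  have hfr1 : ∀ i : ℕ, i ≤ J → ‖((i:ℝ) * (J:ℝ)⁻¹) • y‖ ≤ 1 := by
    intro i hi
    rw [norm_smul, Real.norm_of_nonneg (by positivity)]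
    have h1 : (i:ℝ) * (J:ℝ)⁻¹ ≤ 1 := by
      rw [← div_eq_mul_inv, div_le_one hJ0]; exact_mod_cast hi
    have : 0 ≤ (i:ℝ) * (J:ℝ)⁻¹ := by positivity
    nlinarith [norm_nonneg y]
  have ha1 : ‖(J:ℝ)⁻¹ • y‖ ≤ 1 := by simpa using hfr1 1 hJ
  have ha2 : n * ‖(J:ℝ)⁻¹ • y‖ ≤ (J:ℝ)⁻¹ := by simpa using hfr 1 hJ
  obtain ⟨ν0, h01, h02, h03⟩ := piece0 (Y := Y) μ hμ y hy1
  have key : ∀ i : Fin J, _ := fun i =>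
    piece1 (Y := Y) μ hμ ((J:ℝ)⁻¹ • y) ((((i:ℕ):ℝ) * (J:ℝ)⁻¹) • y) ha1 (hfr1 i i.2.le)
  choose ν h11 h12 h13 using key
  refine ⟨ν0 + Measure.sum ν, ?_, ?_, ?_⟩
  · rw [Measure.add_apply, Measure.sum_apply _ MeasurableSet.univ, tsum_fintype]
    have : ∑ i, ν i univ ≤ 1 := by
      calc ∑ i, ν i univ ≤ ∑ i : Fin J, ENNReal.ofReal ((J:ℝ)⁻¹) := by
            refine Finset.sum_le_sum fun i _ => (h11 i).trans ?_
            rw [← ENNReal.ofReal_mul (by positivity)]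
            apply ENNReal.ofReal_le_ofReal
            have h1 : ((i:ℕ):ℝ) * (J:ℝ)⁻¹ ≤ 1 := by
              rw [← div_eq_mul_inv, div_le_one hJ0]; exact_mod_cast i.2.le
            have h2 := hfr i i.2.le
            have : 0 ≤ (J:ℝ)⁻¹ := by positivity
            calc _ ≤ (J:ℝ)⁻¹ * 1 := by
                  apply mul_le_mul ha2 (h2.trans h1) (by positivity) this
              _ = _ := mul_one _
        _ = 1 := by
            rw [Finset.sum_const, Finset.card_univ, Fintype.card_fin, nsmul_eq_mul,
              ← ENNReal.ofReal_natCast, ← ENNReal.ofReal_mul hJ0.le, mul_inv_cancel₀ hJ0.ne']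
            simp
    calc _ ≤ (1:ℝ≥0∞) + 1 := add_le_add h01 this
      _ = 2 := by norm_num
  · rw [ae_add_measure_iff]
    refine ⟨h02, ?_⟩
    rw [Measure.ae_sum_iff]
    exact h12
  · intro f hf
    rw [lintegral_add_measure, lintegral_sum_measure, tsum_fintype]
    have tele : (2:ℝ) • (f y - AA μ f 0 - (J : ℝ) • (AA μ f ((J : ℝ)⁻¹ • y) - AA μ f 0)) =
        -((2:ℝ) • (AA μ f y - f y)) + ∑ i : Fin J, (2:ℝ) • (AA μ f ((J:ℝ)⁻¹ • y + ((((i:ℕ):ℝ) * (J:ℝ)⁻¹) • y))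
          - AA μ f ((J:ℝ)⁻¹ • y) - AA μ f ((((i:ℕ):ℝ) * (J:ℝ)⁻¹) • y) + AA μ f 0) := by
      rw [Fin.sum_univ_eq_sum_range (fun i => (2:ℝ) • (AA μ f ((J:ℝ)⁻¹ • y + (((i:ℝ) * (J:ℝ)⁻¹) • y))
          - AA μ f ((J:ℝ)⁻¹ • y) - AA μ f (((i:ℝ) * (J:ℝ)⁻¹) • y) + AA μ f 0)) J]
      have e : ∀ T : ℕ, ∑ i ∈ Finset.range T, (2:ℝ) • (AA μ f ((J:ℝ)⁻¹ • y + (((i:ℝ) * (J:ℝ)⁻¹) • y))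
          - AA μ f ((J:ℝ)⁻¹ • y) - AA μ f (((i:ℝ) * (J:ℝ)⁻¹) • y) + AA μ f 0)
          = (2:ℝ) • (AA μ f (((T:ℝ) * (J:ℝ)⁻¹) • y) - AA μ f 0)
            - (2 * T : ℝ) • (AA μ f ((J:ℝ)⁻¹ • y) - AA μ f 0) := by
        intro T
        induction T with
        | zero => simp
        | succ T ih =>
          rw [Finset.sum_range_succ, ih]
          rw [show (J:ℝ)⁻¹ • y + (((T:ℝ) * (J:ℝ)⁻¹) • y) = (((T+1:ℕ):ℝ) * (J:ℝ)⁻¹) • y by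
            push_cast; module]
          push_cast
          module
      rw [e, mul_inv_cancel₀ hJ0.ne', one_smul]
      module
    rw [tele]
    refine (enorm_add_le _ _).trans (add_le_add ?_ ((enorm_sum_le _ _).trans
      (Finset.sum_le_sum fun i _ => h13 i f hf)))
    rw [enorm_neg]
    exact h03 f hf

end Pf

namespace Pf

variable {Y : Type u} [NormedAddCommGroup Y] [NormedSpace ℝ Y] [CompleteSpace Y]
variable {X : Type*} [NormedAddCommGroup X] [NormedSpace ℝ X] [FiniteDimensional ℝ X]
  [MeasurableSpace X] [BorelSpace X] (μ : Measure X) [μ.IsAddHaarMeasure]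

lemma jensen2 {α : Type*} [MeasurableSpace α] (ν : Measure α) (hν : ν univ ≤ 2) {q : ℝ} (hq : 1 ≤ q)
    (g : α → ℝ≥0∞) (hg : Measurable g) :
    (∫⁻ z, g z ∂ν) ^ q ≤ (2 : ℝ≥0∞) ^ q * ∫⁻ z, g z ^ q ∂ν := by
  have h := eLpNorm'_le_eLpNorm'_mul_rpow_measure_univ (μ := ν) (f := g) one_pos hq
    hg.aestronglyMeasurable
  have hq0 : 0 < q := by linarith
  unfold eLpNorm' at h
  simp only [enorm_eq_self, ENNReal.rpow_one, div_one, one_div] at h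
  have e : (0:ℝ) ≤ 1 - q⁻¹ := by
    have := inv_le_one_of_one_le₀ hq
    linarith
  calc (∫⁻ z, g z ∂ν) ^ q ≤ ((∫⁻ z, g z ^ q ∂ν) ^ q⁻¹ * 2) ^ q := by
        refine ENNReal.rpow_le_rpow (h.trans ?_) hq0.le
        gcongr
        calc ν univ ^ (1 - q⁻¹) ≤ (2:ℝ≥0∞) ^ (1 - q⁻¹) := ENNReal.rpow_le_rpow hν e
          _ ≤ (2:ℝ≥0∞) ^ (1:ℝ) := ENNReal.rpow_le_rpow_of_exponent_le (by norm_num)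
              (by have := inv_pos.mpr hq0; linarith)
          _ = 2 := by simp
    _ = _ := by
        rw [ENNReal.mul_rpow_of_nonneg _ _ hq0.le, ← ENNReal.rpow_mul, inv_mul_cancel₀ hq0.ne',
          ENNReal.rpow_one, mul_comm]

/-- smoothed function at scale `2^{-k}` -/
def Fk (f : X → Y) (k : ℕ) (x : X) : Y :=
  ∫ p in closedBall (0 : X) 1 ×ˢ closedBall (0 : X) 1,
    f (x + (1/2:ℝ) ^ k • (p.1 + p.2)) ∂(μ.prod μ)

lemma Fk_eq (f : X → Y) (k : ℕ) (x w : X) :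
    AA μ (fun z => f (x + (1/2:ℝ) ^ k • z)) w = Fk μ f k (x + (1/2:ℝ) ^ k • w) := by
  unfold AA Fk
  congr 1
  funext p
  show f (x + (1/2:ℝ) ^ k • (w + (p.1 + p.2))) = _
  rw [smul_add _ w, add_assoc]

lemma Fk_cont {f : X → Y} (hf : Continuous f) (k : ℕ) : Continuous (Fk μ f k) := by
  unfold Fk
  apply continuous_parametric_integral_of_continuous
  · unfold Function.uncurry
    fun_prop
  · exact (isCompact_closedBall _ _).prod (isCompact_closedBall _ _)

lemma C1 (hμ : μ (closedBall 0 1) = 1) (hn : 1 ≤ Module.finrank ℝ X) {q m : ℝ} (hq : 1 ≤ q)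
    (hY : MartCotypeBound q Y m) (f : X → Y) (hf : ∀ x y, ‖f x - f y‖ ≤ 2 * ‖x - y‖) (T : ℕ)
    (y : X) (hy : Module.finrank ℝ X * ‖y‖ ≤ 1) (J : ℕ) (hJ : 1 ≤ J) :
    ∑ k ∈ Finset.range T, ∫⁻ x in closedBall (0 : X) (1/2),
      ‖(2:ℝ) ^ k • (f (x + (1/2:ℝ) ^ k • y) - Fk μ f k x -
        (J:ℝ) • (Fk μ f k (x + (J:ℝ)⁻¹ • (1/2:ℝ) ^ k • y) - Fk μ f k x))‖ₑ ^ q ∂μ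
      ≤ 2 * ((ENNReal.ofReal m ^ q * ENNReal.ofReal (8 * 2) ^ q) * μ (closedBall 0 10)) := by
  have hfc : Continuous f := lip_cont hf
  have hq0 : 0 < q := by linarith
  obtain ⟨ν, h1, h2, h3⟩ := B1 (Y := Y) μ hμ hn y hy J hJ
  haveI : IsFiniteMeasure ν := ⟨h1.trans_lt (by norm_num)⟩
  have hVm : ∀ k : ℕ, Measurable (fun p : X × (X × X) => Vk q f k p.2.1 (p.1 + (1/2:ℝ) ^ k • p.2.2)) := by
    intro k
    exact (Vk_meas (q := q) hfc k).comp (g := fun p : X × X => Vk q f k p.1 p.2)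
      (f := fun p : X × (X × X) => (p.2.1, p.1 + (1/2:ℝ) ^ k • p.2.2)) (by fun_prop)
  have pt : ∀ (k : ℕ) (x : X), ‖(2:ℝ) ^ k • (f (x + (1/2:ℝ) ^ k • y) - Fk μ f k x -
        (J:ℝ) • (Fk μ f k (x + (J:ℝ)⁻¹ • (1/2:ℝ) ^ k • y) - Fk μ f k x))‖ₑ ^ q
      ≤ ∫⁻ z, Vk q f k z.1 (x + (1/2:ℝ) ^ k • z.2) ∂ν := by
    intro k x
    set g : X → Y := fun z => f (x + (1/2:ℝ) ^ k • z) with hg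
    have hgc : Continuous g := by fun_prop
    have h := h3 g hgc
    rw [Fk_eq, Fk_eq, smul_zero, add_zero, smul_comm ((1/2:ℝ)^k)] at h
    set e := (f (x + (1/2:ℝ) ^ k • y) - Fk μ f k x -
        (J:ℝ) • (Fk μ f k (x + (J:ℝ)⁻¹ • (1/2:ℝ) ^ k • y) - Fk μ f k x)) with he
    have hD : ∀ z : X × X, D g z.1 z.2 = D f ((1/2:ℝ)^k • z.1) (x + (1/2:ℝ)^k • z.2) := by
      intro z
      simp only [D, hg, smul_add, smul_sub]
      rw [← add_assoc, ← add_sub_assoc]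
    have h' : (2:ℝ≥0∞) * ‖(2:ℝ) ^ k • e‖ₑ ≤
        ∫⁻ z, ‖(2:ℝ)^k • D f ((1/2:ℝ)^k • z.1) (x + (1/2:ℝ)^k • z.2)‖ₑ ∂ν := by
      simp_rw [enorm_smul]
      rw [lintegral_const_mul]
      · rw [mul_left_comm]
        gcongr
        have : ‖(2:ℝ)‖ₑ = 2 := by
          rw [Real.enorm_eq_ofReal (by norm_num)]; norm_num
        rw [enorm_smul, this] at h
        simpa only [hD] using h
      · have := D_meas hgc
        simpa only [hD] using this
    have h'' := (ENNReal.rpow_le_rpow h' hq0.le).trans (jensen2 ν h1 hq _ ?_)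
    · rw [ENNReal.mul_rpow_of_nonneg _ _ hq0.le] at h''
      rw [ENNReal.mul_le_mul_iff_right] at h''
      · exact h''
      · simp
      · simp [hq0.le]
    · have : Continuous fun z : X × X => (2:ℝ)^k • D f ((1/2:ℝ)^k • z.1) (x + (1/2:ℝ)^k • z.2) := by
        unfold D; fun_prop
      exact this.enorm.measurable
  calc _ ≤ ∑ k ∈ Finset.range T, ∫⁻ x in closedBall (0 : X) (1/2),
        ∫⁻ z, Vk q f k z.1 (x + (1/2:ℝ) ^ k • z.2) ∂ν ∂μ :=
          Finset.sum_le_sum fun k _ => lintegral_mono fun x => pt k x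
    _ = ∑ k ∈ Finset.range T, ∫⁻ z, ∫⁻ x in closedBall (0 : X) (1/2),
        Vk q f k z.1 (x + (1/2:ℝ) ^ k • z.2) ∂μ ∂ν := by
          refine Finset.sum_congr rfl fun k _ => ?_
          rw [lintegral_lintegral_swap]
          exact (hVm k).aemeasurable
    _ = ∫⁻ z, ∑ k ∈ Finset.range T, ∫⁻ x in closedBall (0 : X) (1/2),
        Vk q f k z.1 (x + (1/2:ℝ) ^ k • z.2) ∂μ ∂ν := by
          rw [lintegral_finsetSum]
          intro k _
          exact Measurable.lintegral_prod_left' (hVm k)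
    _ ≤ ∫⁻ z, ((ENNReal.ofReal m ^ q * ENNReal.ofReal (8 * 2) ^ q) * μ (closedBall 0 10)) ∂ν := by
          apply lintegral_mono_ae
          filter_upwards [h2] with z hz
          refine le_trans (Finset.sum_le_sum fun k _ => ?_)
            (integrated μ hq0 hY f 2 (by norm_num) hf T z.1 hz.1)
          have hsm : ‖-((1/2:ℝ)^k • z.2)‖ ≤ 1 := by
            rw [norm_neg, norm_smul, Real.norm_of_nonneg (by positivity)]
            have : (1/2:ℝ)^k ≤ 1 := pow_le_one₀ (by norm_num) (by norm_num)
            nlinarith [norm_nonneg z.2, hz.2]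
          have := shift_le μ (fun x => Vk q f k z.1 (x + (1/2:ℝ) ^ k • z.2)) (-((1/2:ℝ)^k • z.2))
            (1/2) 2 (by linarith)
          simpa using this
    _ ≤ _ := by
          rw [lintegral_const, mul_comm]
          gcongr

end Pf

namespace Pf

variable {Y : Type u} [NormedAddCommGroup Y] [NormedSpace ℝ Y] [CompleteSpace Y]
variable {X : Type*} [NormedAddCommGroup X] [NormedSpace ℝ X] [FiniteDimensional ℝ X]
  [MeasurableSpace X] [BorelSpace X] (μ : Measure X) [μ.IsAddHaarMeasure]

def Lam (f : X → Y) (k : ℕ) (x : X) : X →L[ℝ] Y :=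
  ∫ p in closedBall (0 : X) 1 ×ˢ closedBall (0 : X) 1,
    fderiv ℝ f (x + (1/2:ℝ) ^ k • (p.1 + p.2)) ∂(μ.prod μ)

lemma Lam_cont {f : X → Y} (hf : ContDiff ℝ 1 f) (k : ℕ) : Continuous (Lam μ f k) := by
  have hc : Continuous (fderiv ℝ f) := hf.continuous_fderiv (by norm_num)
  unfold Lam
  apply continuous_parametric_integral_of_continuous
  · unfold Function.uncurry
    fun_prop
  · exact (isCompact_closedBall _ _).prod (isCompact_closedBall _ _)

lemma fderiv_bound {f : X → Y} (hf : ∀ x y, ‖f x - f y‖ ≤ 2 * ‖x - y‖) (x : X) :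
    ‖fderiv ℝ f x‖ ≤ 2 := by
  have : LipschitzWith 2 f := by
    apply LipschitzWith.of_dist_le_mul
    intro x y
    rw [dist_eq_norm, dist_eq_norm]
    exact hf x y
  exact norm_fderiv_le_of_lipschitz ℝ this

lemma BBmass (hμ : μ (closedBall 0 1) = 1) :
    (μ.prod μ) (closedBall (0 : X) 1 ×ˢ closedBall (0 : X) 1) = 1 := by
  rw [Measure.prod_prod, hμ, mul_one]

lemma Lam_norm (hμ : μ (closedBall 0 1) = 1) {f : X → Y}
    (hf : ∀ x y, ‖f x - f y‖ ≤ 2 * ‖x - y‖) (k : ℕ) (x : X) : ‖Lam μ f k x‖ ≤ 2 := by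
  have := norm_setIntegral_le_of_norm_le_const (μ := μ.prod μ)
    (s := closedBall (0 : X) 1 ×ˢ closedBall (0 : X) 1) (C := 2)
    (f := fun p => fderiv ℝ f (x + (1/2:ℝ) ^ k • (p.1 + p.2)))
    (by rw [BBmass μ hμ]; norm_num) (fun p _ => fderiv_bound hf _)
  rw [measureReal_def, BBmass μ hμ] at this
  simpa [Lam] using this

lemma Fk_deriv (hμ : μ (closedBall 0 1) = 1) {f : X → Y} (hd : ContDiff ℝ 1 f)
    (hf : ∀ x y, ‖f x - f y‖ ≤ 2 * ‖x - y‖) (k : ℕ) (x : X) :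
    HasFDerivAt (Fk μ f k) (Lam μ f k x) x := by
  have hc : Continuous (fderiv ℝ f) := hd.continuous_fderiv (by norm_num)
  have hfc : Continuous f := hd.continuous
  have hK := (isCompact_closedBall (0 : X) 1).prod (isCompact_closedBall (0 : X) 1)
  unfold Fk Lam
  refine hasFDerivAt_integral_of_dominated_of_fderiv_le
    (F := fun x (p : X × X) => f (x + (1/2:ℝ) ^ k • (p.1 + p.2)))
    (F' := fun x (p : X × X) => fderiv ℝ f (x + (1/2:ℝ) ^ k • (p.1 + p.2)))
    (bound := fun _ => 2) (s := univ) Filter.univ_mem ?_ ?_ ?_ ?_ ?_ ?_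
  · filter_upwards with x
    exact Continuous.aestronglyMeasurable (by fun_prop)
  · exact ContinuousOn.integrableOn_compact hK (by fun_prop)
  · exact Continuous.aestronglyMeasurable (by fun_prop)
  · filter_upwards with p
    exact fun x _ => fderiv_bound hf _
  · exact ContinuousOn.integrableOn_compact hK (by fun_prop)
  · filter_upwards with p x _
    exact (hasFDerivAt_comp_add_right _).mpr ((hd.differentiable (by norm_num)) _).hasFDerivAt

lemma C2 (hμ : μ (closedBall 0 1) = 1) (hn : 1 ≤ Module.finrank ℝ X) {q m : ℝ} (hq : 1 ≤ q)
    (hY : MartCotypeBound q Y m) (f : X → Y) (hd : ContDiff ℝ 1 f)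
    (hf : ∀ x y, ‖f x - f y‖ ≤ 2 * ‖x - y‖) (T : ℕ)
    (y : X) (hy : Module.finrank ℝ X * ‖y‖ ≤ 1) :
    ∫⁻ x in closedBall (0 : X) (1/2), ∑ k ∈ Finset.range T,
      ‖(2:ℝ) ^ k • (f (x + (1/2:ℝ) ^ k • y) - Fk μ f k x - Lam μ f k x ((1/2:ℝ) ^ k • y))‖ₑ ^ q ∂μ
      ≤ 2 * ((ENNReal.ofReal m ^ q * ENNReal.ofReal (8 * 2) ^ q) * μ (closedBall 0 10)) := by
  have hq0 : 0 < q := by linarith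
  have hfc : Continuous f := hd.continuous
  have hFc := fun k => Fk_cont μ hfc k
  set C := 2 * ((ENNReal.ofReal m ^ q * ENNReal.ofReal (8 * 2) ^ q) * μ (closedBall 0 10)) with hC
  set G : ℕ → X → ℝ≥0∞ := fun J x => ∑ k ∈ Finset.range T,
      ‖(2:ℝ) ^ k • (f (x + (1/2:ℝ) ^ k • y) - Fk μ f k x -
        (J:ℝ) • (Fk μ f k (x + (J:ℝ)⁻¹ • (1/2:ℝ) ^ k • y) - Fk μ f k x))‖ₑ ^ q with hG
  have hmk : ∀ J k : ℕ, Measurable fun x : X => ‖(2:ℝ) ^ k • (f (x + (1/2:ℝ) ^ k • y) - Fk μ f k x -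
        (J:ℝ) • (Fk μ f k (x + (J:ℝ)⁻¹ • (1/2:ℝ) ^ k • y) - Fk μ f k x))‖ₑ ^ q := by
    intro J k
    have := hFc k
    apply Measurable.pow_const
    apply Continuous.measurable
    fun_prop
  have hGm : ∀ J, Measurable (G J) := fun J => Finset.measurable_fun_sum _ fun k _ => hmk J k
  have hlim : ∀ x, Filter.Tendsto (fun J => G J x) Filter.atTop (nhds (∑ k ∈ Finset.range T,
      ‖(2:ℝ) ^ k • (f (x + (1/2:ℝ) ^ k • y) - Fk μ f k x - Lam μ f k x ((1/2:ℝ) ^ k • y))‖ₑ ^ q)) := by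
    intro x
    apply tendsto_finsetSum
    intro k _
    have h1 := ((Fk_deriv μ hμ hd hf k x).lim_real ((1/2:ℝ) ^ k • y)).comp
      (tendsto_natCast_atTop_atTop (R := ℝ))
    have h2 := (h1.const_sub (f (x + (1/2:ℝ) ^ k • y) - Fk μ f k x)).const_smul ((2:ℝ)^k)
    exact ((ENNReal.continuous_rpow_const (y := q)).tendsto _).comp h2.enorm
  calc _ = ∫⁻ x in closedBall (0 : X) (1/2), Filter.liminf (fun J => G J x) Filter.atTop ∂μ := by
        congr 1
        funext x
        exact (hlim x).liminf_eq.symm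
    _ ≤ Filter.liminf (fun J => ∫⁻ x in closedBall (0 : X) (1/2), G J x ∂μ) Filter.atTop :=
        lintegral_liminf_le hGm
    _ ≤ Filter.liminf (fun _ : ℕ => C) Filter.atTop := by
        refine Filter.liminf_le_liminf ?_
        filter_upwards [Filter.eventually_ge_atTop 1] with J hJ
        rw [hG, lintegral_finsetSum _ fun k _ => hmk J k]
        exact C1 μ hμ hn hq hY f hf T y hy J hJ
    _ = C := by simp

lemma core1 (hμ : μ (closedBall 0 1) = 1) (hn : 1 ≤ Module.finrank ℝ X) {q m : ℝ} (hq : 1 ≤ q)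
    (hm : 0 ≤ m)
    (hY : MartCotypeBound q Y m) (f : X → Y) (hd : ContDiff ℝ 1 f)
    (hf : ∀ x y, ‖f x - f y‖ ≤ 2 * ‖x - y‖) (ε : ℝ) (h0 : 0 < ε) (h1 : ε ≤ 1) (T : ℕ)
    (hT : 2 * (64 * Module.finrank ℝ X * m / ε) ^ q * (320 / ε) ^ (Module.finrank ℝ X) < T) :
    ∃ k < T, ∃ x : X, ‖x‖ ≤ 1/2 ∧ ∀ y : X, ‖y‖ ≤ 1 →
      ‖f (x + ((1/2:ℝ) ^ k * (1 / (2 * Module.finrank ℝ X))) • y) - Fk μ f k x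
        - Lam μ f k x (((1/2:ℝ) ^ k * (1 / (2 * Module.finrank ℝ X))) • y)‖
        ≤ ε * ((1/2:ℝ) ^ k * (1 / (2 * Module.finrank ℝ X))) := by
  set n := Module.finrank ℝ X with hnn
  have hn' : (1:ℝ) ≤ n := by exact_mod_cast hn
  have hq0 : 0 < q := by linarith
  have hfc : Continuous f := hd.continuous
  set ρ : ℕ → ℝ := fun k => (1/2:ℝ) ^ k * (1 / (2 * n)) with hρ
  have hρ0 : ∀ k, 0 < ρ k := fun k => by positivity
  set E : ℕ → X → X → Y := fun k x y => f (x + ρ k • y) - Fk μ f k x - Lam μ f k x (ρ k • y) with hE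
  have hElip : ∀ k x y z, ‖E k x y - E k x z‖ ≤ 4 * ρ k * ‖y - z‖ := by
    intro k x y z
    have e1 : E k x y - E k x z = (f (x + ρ k • y) - f (x + ρ k • z)) - Lam μ f k x (ρ k • (y - z)) := by
      simp only [hE, smul_sub, map_sub]; abel
    rw [e1]
    refine (norm_sub_le _ _).trans ?_
    have a1 := hf (x + ρ k • y) (x + ρ k • z)
    rw [add_sub_add_left_eq_sub, ← smul_sub, norm_smul, Real.norm_of_nonneg (hρ0 k).le] at a1
    have a2 := (Lam μ f k x).le_of_opNorm_le (Lam_norm μ hμ hf k x) (ρ k • (y - z))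
    rw [norm_smul, Real.norm_of_nonneg (hρ0 k).le] at a2
    linarith
  have hEc : ∀ k, Continuous fun p : X × X => E k p.1 p.2 := by
    intro k
    have := Fk_cont μ hfc k
    have h2 := Lam_cont μ hd k
    simp only [hE]
    fun_prop
  by_contra hcon
  push Not at hcon
  set C := 2 * ((ENNReal.ofReal m ^ q * ENNReal.ofReal (8 * 2) ^ q) * μ (closedBall 0 10)) with hC
  set V : X → X → ℝ≥0∞ := fun y x => ∑ k ∈ Finset.range T, ‖(2:ℝ) ^ k • E k x y‖ₑ ^ q with hV
  have hVm : Measurable (Function.uncurry V) := by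
    unfold Function.uncurry
    apply Finset.measurable_fun_sum
    intro k _
    apply Measurable.pow_const
    apply Continuous.measurable
    have : Continuous fun p : X × X => E k p.2 p.1 := (hEc k).comp continuous_swap
    fun_prop
  have up : ∫⁻ y in closedBall (0 : X) 1, ∫⁻ x in closedBall (0 : X) (1/2), V y x ∂μ ∂μ ≤ C := by
    calc _ ≤ ∫⁻ y in closedBall (0 : X) 1, C ∂μ := by
          apply setLIntegral_mono measurable_const
          intro y hy
          rw [mem_closedBall_zero_iff] at hy
          have h := C2 μ hμ hn hq hY f hd hf T ((1 / (2 * n) : ℝ) • y) (by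
            rw [norm_smul, Real.norm_of_nonneg (by positivity), ← mul_assoc]
            rw [show ((Module.finrank ℝ X : ℕ) : ℝ) * (1 / (2 * n)) = 1 / 2 by
              rw [← hnn]; field_simp]
            linarith)
          simp only [smul_smul] at h
          exact h
      _ = C := by simp [hμ]
  rw [lintegral_lintegral_swap hVm.aemeasurable] at up
  set s := ε / 16 with hs
  have lo : ∀ x : X, ‖x‖ ≤ 1/2 → ∀ k < T,
      ENNReal.ofReal (ε / (4 * n)) ^ q * ENNReal.ofReal (s ^ n) ≤
        ∫⁻ y in closedBall (0 : X) 1, ‖(2:ℝ) ^ k • E k x y‖ₑ ^ q ∂μ := by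
    intro x hx k hk
    obtain ⟨y0, hy0, hy1⟩ := hcon k hk x hx
    have hsub : closedBall ((1 - s) • y0) s ⊆ closedBall (0 : X) 1 := by
      apply closedBall_subset_closedBall'
      rw [dist_zero_right, norm_smul, Real.norm_of_nonneg (by linarith)]
      nlinarith [norm_nonneg y0]
    calc _ = ∫⁻ y in closedBall ((1 - s) • y0) s, ENNReal.ofReal (ε / (4 * n)) ^ q ∂μ := by
          rw [lintegral_const, Measure.restrict_apply_univ, Measure.addHaar_closedBall' _ _ (by linarith),
            hμ, mul_one]
      _ ≤ ∫⁻ y in closedBall ((1 - s) • y0) s, ‖(2:ℝ) ^ k • E k x y‖ₑ ^ q ∂μ := by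
          apply setLIntegral_mono'  measurableSet_closedBall
          intro y hy
          apply ENNReal.rpow_le_rpow _ hq0.le
          rw [← ofReal_norm]
          apply ENNReal.ofReal_le_ofReal
          rw [norm_smul, Real.norm_of_nonneg (by positivity)]
          have d1 : ‖y - y0‖ ≤ 2 * s := by
            rw [mem_closedBall, dist_eq_norm] at hy
            have : y - y0 = (y - (1 - s) • y0) - s • y0 := by module
            rw [this]
            refine (norm_sub_le _ _).trans ?_
            rw [norm_smul, Real.norm_of_nonneg (by linarith)]
            nlinarith [norm_nonneg y0]
          have d2 := hElip k x y0 y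
          rw [norm_sub_rev y0 y] at d2
          have d3 : ‖E k x y0‖ ≤ ‖E k x y‖ + ‖E k x y0 - E k x y‖ := by
            have := norm_add_le (E k x y) (E k x y0 - E k x y)
            rwa [add_sub_cancel] at this
          have d4 : 4 * ρ k * ‖y - y0‖ ≤ 4 * ρ k * (2 * s) := by
            have := hρ0 k
            gcongr
          have d5 : ε * ρ k < ‖E k x y0‖ := hy1
          have d6 : ε * ρ k / 2 ≤ ‖E k x y‖ := by
            have : 4 * ρ k * (2 * s) = ε * ρ k / 2 := by rw [hs]; ring
            linarith
          have d7 : ε / (4 * n) = 2 ^ k * (ε * ρ k / 2) := by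
            simp only [hρ]
            rw [one_div_pow]
            field_simp
            norm_num
          rw [d7]
          gcongr
      _ ≤ _ := lintegral_mono_set hsub
  have tot : (T : ℝ≥0∞) * (ENNReal.ofReal (ε / (4 * n)) ^ q * ENNReal.ofReal (s ^ n)) *
      ENNReal.ofReal ((1/2)^n) ≤ C := by
    refine le_trans ?_ up
    calc _ = ∫⁻ x in closedBall (0 : X) (1/2),
          (T : ℝ≥0∞) * (ENNReal.ofReal (ε / (4 * n)) ^ q * ENNReal.ofReal (s ^ n)) ∂μ := by
          rw [lintegral_const, Measure.restrict_apply_univ, Measure.addHaar_closedBall' _ _ (by norm_num),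
            hμ, mul_one]
      _ ≤ _ := by
          apply setLIntegral_mono' measurableSet_closedBall
          intro x hx
          rw [mem_closedBall_zero_iff] at hx
          simp only [hV]
          rw [lintegral_finsetSum]
          · calc _ = ∑ k ∈ Finset.range T, (ENNReal.ofReal (ε / (4 * n)) ^ q * ENNReal.ofReal (s ^ n)) := by
                  simp
              _ ≤ _ := Finset.sum_le_sum fun k hk => lo x hx k (Finset.mem_range.mp hk)
          · intro k _
            apply Measurable.pow_const
            apply Continuous.measurable
            have : Continuous fun y : X => E k x y := (hEc k).comp (Continuous.prodMk_right x)
            fun_prop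
  have hCr : C = ENNReal.ofReal (2 * ((m ^ q * 16 ^ q) * 10 ^ n)) := by
    rw [hC, show (8 * 2 : ℝ) = 16 by norm_num, Measure.addHaar_closedBall' _ _ (by norm_num), hμ, mul_one,
      ENNReal.ofReal_mul (by norm_num), ENNReal.ofReal_mul (by positivity),
      ENNReal.ofReal_mul (by positivity), ENNReal.ofReal_rpow_of_nonneg hm hq0.le,
      ENNReal.ofReal_rpow_of_nonneg (by norm_num) hq0.le]
    norm_num
    rfl
  rw [hCr, ← ENNReal.ofReal_natCast, ENNReal.ofReal_rpow_of_nonneg (by positivity) hq0.le,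
    ← ENNReal.ofReal_mul (by positivity), ← ENNReal.ofReal_mul (by positivity),
    ← ENNReal.ofReal_mul (by positivity), ENNReal.ofReal_le_ofReal_iff (by positivity)] at tot
  have key : 2 * (64 * n * m / ε) ^ q * (320 / ε) ^ n * (((ε / (4 * n)) ^ q * s ^ n) * (1/2) ^ n)
      = 2 * ((m ^ q * 16 ^ q) * 10 ^ n) := by
    have k1 : (64 * n * m / ε) ^ q * (ε / (4 * n)) ^ q = m ^ q * 16 ^ q := by
      rw [← Real.mul_rpow (by positivity) (by positivity), ← Real.mul_rpow hm (by norm_num)]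
      congr 1
      field_simp
      ring
    have k2 : (320 / ε) ^ n * (s ^ n * (1/2) ^ n) = 10 ^ n := by
      rw [← mul_pow, ← mul_pow]
      congr 1
      rw [hs]
      field_simp
      norm_num
    calc _ = 2 * (((64 * n * m / ε) ^ q * (ε / (4 * n)) ^ q) * ((320 / ε) ^ n * (s ^ n * (1/2) ^ n))) := by
          ring
      _ = _ := by rw [k1, k2]
  have hpos : 0 < ((ε / (4 * n)) ^ q * s ^ n) * (1/2:ℝ) ^ n := by positivity
  have := mul_lt_mul_of_pos_right hT hpos
  rw [key] at this
  linarith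

end Pf

namespace Pf

variable {Y : Type u} [NormedAddCommGroup Y] [NormedSpace ℝ Y] [CompleteSpace Y]

section ext
variable {X : Type*} [NormedAddCommGroup X] [NormedSpace ℝ X]

def rad (x : X) : X := (max 1 ‖x‖)⁻¹ • x

lemma rad_norm (x : X) : ‖rad x‖ ≤ 1 := by
  unfold rad
  have h1 : (1:ℝ) ≤ max 1 ‖x‖ := le_max_left _ _
  rw [norm_smul, Real.norm_of_nonneg (by positivity), inv_mul_le_iff₀ (by linarith), mul_one]
  exact le_max_right _ _

lemma rad_of_le (x : X) (hx : ‖x‖ ≤ 1) : rad x = x := by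
  unfold rad
  rw [max_eq_left hx]; simp

lemma rad_lip (x y : X) : ‖rad x - rad y‖ ≤ 2 * ‖x - y‖ := by
  unfold rad
  set a := max 1 ‖x‖ with ha
  set b := max 1 ‖y‖ with hb
  have h1 : (1:ℝ) ≤ a := le_max_left _ _
  have h2 : (1:ℝ) ≤ b := le_max_left _ _
  have h3 : ‖y‖ ≤ b := le_max_right _ _
  have h4 : |b - a| ≤ ‖x - y‖ := by
    rw [hb, ha, max_comm 1 ‖y‖, max_comm 1 ‖x‖]
    calc _ ≤ |‖y‖ - ‖x‖| := abs_max_sub_max_le_abs _ _ _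
      _ ≤ ‖y - x‖ := abs_norm_sub_norm_le y x
      _ = _ := norm_sub_rev _ _
  have ha0 : a ≠ 0 := by linarith
  have hb0 : b ≠ 0 := by linarith
  have e : a⁻¹ • x - b⁻¹ • y = a⁻¹ • (x - y) + (a⁻¹ * (b - a) * b⁻¹) • y := by
    have : a⁻¹ * (b - a) * b⁻¹ = a⁻¹ - b⁻¹ := by field_simp
    rw [this]; module
  rw [e]
  refine (norm_add_le _ _).trans ?_
  have hai : a⁻¹ ≤ 1 := inv_le_one_of_one_le₀ h1
  have hai0 : 0 ≤ a⁻¹ := by positivity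
  have k1 : ‖a⁻¹ • (x - y)‖ ≤ ‖x - y‖ := by
    rw [norm_smul, Real.norm_of_nonneg hai0]
    nlinarith [norm_nonneg (x - y)]
  have k2 : ‖(a⁻¹ * (b - a) * b⁻¹) • y‖ ≤ ‖x - y‖ := by
    rw [norm_smul, norm_mul, norm_mul, Real.norm_of_nonneg hai0, Real.norm_eq_abs (b - a),
      Real.norm_of_nonneg (by positivity : 0 ≤ b⁻¹)]
    have k3 : b⁻¹ * ‖y‖ ≤ 1 := by rw [inv_mul_le_iff₀ (by linarith), mul_one]; exact h3
    calc a⁻¹ * |b - a| * b⁻¹ * ‖y‖ = (a⁻¹ * |b - a|) * (b⁻¹ * ‖y‖) := by ring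
      _ ≤ (1 * |b - a|) * 1 := by gcongr
      _ ≤ _ := by linarith
  linarith

end ext

section moll
variable {X : Type*} [NormedAddCommGroup X] [NormedSpace ℝ X] [FiniteDimensional ℝ X]
  [MeasurableSpace X] [BorelSpace X]

lemma mollify (μ : Measure X) [μ.IsAddHaarMeasure] (h : X → Y) (hh : ∀ x y, ‖h x - h y‖ ≤ 2 * ‖x - y‖) (δ : ℝ) (hδ : 0 < δ) :
    ∃ g : X → Y, ContDiff ℝ 1 g ∧ (∀ x y, ‖g x - g y‖ ≤ 2 * ‖x - y‖) ∧ ∀ x, ‖g x - h x‖ ≤ δ := by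
  have hc : Continuous h := lip_cont hh
  let φ : ContDiffBump (0 : X) := ⟨δ / 4, δ / 2, by linarith, by linarith⟩
  have hφc : Continuous (φ.normed μ) := φ.continuous_normed
  have hφs : HasCompactSupport (φ.normed μ) := φ.hasCompactSupport_normed
  have hIntg : ∀ x, Integrable (fun t => φ.normed μ t • h (x - t)) μ := by
    intro x
    exact Continuous.integrable_of_hasCompactSupport (by fun_prop) hφs.smul_right
  refine ⟨MeasureTheory.convolution (φ.normed μ) h (ContinuousLinearMap.lsmul ℝ ℝ) μ, ?_, ?_, ?_⟩
  · exact hφs.contDiff_convolution_left _ φ.contDiff_normed hc.locallyIntegrable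
  · intro x y
    unfold MeasureTheory.convolution
    simp only [ContinuousLinearMap.lsmul_apply]
    rw [← integral_sub (hIntg x) (hIntg y)]
    calc _ ≤ ∫ t, φ.normed μ t * (2 * ‖x - y‖) ∂μ := by
          apply norm_integral_le_of_norm_le
          · exact φ.integrable_normed.mul_const _
          · filter_upwards with t
            rw [← smul_sub, norm_smul, Real.norm_of_nonneg (φ.nonneg_normed t)]
            have := hh (x - t) (y - t)
            rw [sub_sub_sub_cancel_right] at this
            have h2 := φ.nonneg_normed (μ := μ) t
            gcongr
      _ = _ := by
          rw [integral_mul_const, φ.integral_normed, one_mul]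
  · intro x
    rw [← dist_eq_norm]
    apply φ.dist_normed_convolution_le hc.aestronglyMeasurable
    intro z hz
    rw [mem_ball, dist_eq_norm] at hz
    rw [dist_eq_norm]
    have := hh z x
    have h3 : φ.rOut = δ / 2 := rfl
    linarith

end moll

lemma core2 {X : Type*} [NormedAddCommGroup X] [NormedSpace ℝ X] [FiniteDimensional ℝ X]
    (hn : 1 ≤ Module.finrank ℝ X) {q m : ℝ} (hq : 1 ≤ q)
    (hm : 0 ≤ m) (hY : MartCotypeBound q Y m) (f : X → Y)
    (hf : ∀ x y, ‖x‖ ≤ 1 → ‖y‖ ≤ 1 → ‖f x - f y‖ ≤ ‖x - y‖) (ε : ℝ) (h0 : 0 < ε) (h1 : ε ≤ 1) (T : ℕ)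
    (hT : 2 * (128 * Module.finrank ℝ X * m / ε) ^ q * (640 / ε) ^ (Module.finrank ℝ X) < T) :
    ∃ ρ : ℝ, (1/2:ℝ) ^ T * (1 / (2 * Module.finrank ℝ X)) ≤ ρ ∧ ρ ≤ 1/2 ∧
      ∃ x : X, ‖x‖ ≤ 1/2 ∧ ∃ Λ : X →ᵃ[ℝ] Y, ∀ z : X, ‖z - x‖ ≤ ρ → ‖f z - Λ z‖ ≤ ε * ρ := by
  letI : MeasurableSpace X := borel X
  haveI : BorelSpace X := ⟨rfl⟩
  set n := Module.finrank ℝ X with hnn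
  have hn' : (1:ℝ) ≤ n := by exact_mod_cast hn
  let K : TopologicalSpace.PositiveCompacts X := ⟨⟨closedBall 0 1, isCompact_closedBall 0 1⟩, by
    refine ⟨0, ?_⟩
    exact ball_subset_interior_closedBall (by simp)⟩
  let μ : Measure X := Measure.addHaarMeasure K
  have hμ : μ (closedBall 0 1) = 1 := Measure.addHaarMeasure_self
  set δ := (ε / 2) * ((1/2:ℝ) ^ T * (1 / (2 * n))) with hδ
  have hδ0 : 0 < δ := by positivity
  obtain ⟨g, g1, g2, g3⟩ := mollify μ (fun x => f (rad x))
    (fun x y => (hf _ _ (rad_norm x) (rad_norm y)).trans (rad_lip x y)) δ hδ0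
  obtain ⟨k, hk, x, hx, hxy⟩ := core1 μ hμ hn hq hm hY g g1 g2 (ε / 2) (by positivity) (by linarith) T (by
    have e1 : 64 * (n:ℝ) * m / (ε / 2) = 128 * n * m / ε := by field_simp; ring
    have e2 : 320 / (ε / 2) = 640 / ε := by field_simp; norm_num
    rw [← hnn, e1, e2]
    exact hT)
  set ρ := (1/2:ℝ) ^ k * (1 / (2 * n)) with hρ
  have hρ0 : 0 < ρ := by positivity
  have hle : (1/2:ℝ) ^ T * (1 / (2 * n)) ≤ ρ := by
    apply mul_le_mul_of_nonneg_right _ (by positivity)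
    exact pow_le_pow_of_le_one (by norm_num) (by norm_num) hk.le
  have hρ2 : ρ ≤ 1/2 := by
    have e1 : (1/2:ℝ)^k ≤ 1 := pow_le_one₀ (by norm_num) (by norm_num)
    have e2 : 1 / (2 * (n:ℝ)) ≤ 1 / 2 := by
      apply one_div_le_one_div_of_le (by norm_num); linarith
    calc ρ ≤ 1 * (1/2) := mul_le_mul e1 e2 (by positivity) (by norm_num)
      _ = _ := one_mul _
  refine ⟨ρ, hle, hρ2, x, hx, ?_⟩
  refine ⟨((Lam μ g k x : X →L[ℝ] Y) : X →ₗ[ℝ] Y).toAffineMap +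
    AffineMap.const ℝ X (Fk μ g k x - Lam μ g k x x), ?_⟩
  intro z hz
  have hz1 : ‖z‖ ≤ 1 := by
    have := norm_add_le (z - x) x
    rw [sub_add_cancel] at this
    linarith
  have h := hxy (ρ⁻¹ • (z - x)) (by
    rw [norm_smul, Real.norm_of_nonneg (by positivity), inv_mul_le_iff₀ hρ0, mul_one]; exact hz)
  rw [smul_smul, mul_inv_cancel₀ hρ0.ne', one_smul, add_sub_cancel] at h
  have h' := g3 z
  simp only [rad_of_le z hz1] at h'
  have hδρ : δ ≤ ε / 2 * ρ := by rw [hδ]; gcongr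
  have e : f z - (((Lam μ g k x : X →L[ℝ] Y) : X →ₗ[ℝ] Y).toAffineMap +
    AffineMap.const ℝ X (Fk μ g k x - Lam μ g k x x)) z =
      (g z - Fk μ g k x - Lam μ g k x (z - x)) - (g z - f z) := by
    simp only [AffineMap.coe_add, Pi.add_apply, LinearMap.coe_toAffineMap,
      ContinuousLinearMap.coe_coe, AffineMap.const_apply, map_sub]
    abel
  rw [e]
  refine (norm_sub_le _ _).trans ?_
  linarith

end Pf

namespace Pf
open scoped Pointwise

section syn
variable {n : ℕ} {N : EuclideanSpace ℝ (Fin n) → ℝ}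

lemma N_zero (h : IsNorm N) : N 0 = 0 := by
  have := h.2.1 0 0
  simpa using this

lemma N_neg (h : IsNorm N) (x) : N (-x) = N x := by
  have := h.2.1 (-1) x
  simpa using this

lemma N_nonneg (h : IsNorm N) (x) : 0 ≤ N x := by
  have := h.2.2 x (-x)
  rw [add_neg_cancel, N_zero h, N_neg h] at this
  linarith

/-- `ℝⁿ` with the norm `N`. -/
def NX (_ : IsNorm N) : Type := EuclideanSpace ℝ (Fin n)

variable (h : IsNorm N)

instance : AddCommGroup (NX h) := inferInstanceAs (AddCommGroup (EuclideanSpace ℝ (Fin n)))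
instance : Module ℝ (NX h) := inferInstanceAs (Module ℝ (EuclideanSpace ℝ (Fin n)))
instance : FiniteDimensional ℝ (NX h) :=
  inferInstanceAs (FiniteDimensional ℝ (EuclideanSpace ℝ (Fin n)))

def gn : AddGroupNorm (NX h) where
  toFun := N
  map_zero' := N_zero h
  add_le' := h.2.2
  neg' := N_neg h
  eq_zero_of_map_eq_zero' := h.1

instance : NormedAddCommGroup (NX h) := (gn h).toNormedAddCommGroup

lemma norm_NX (x : NX h) : ‖x‖ = N x := rfl

instance : NormedSpace ℝ (NX h) where
  norm_smul_le a x := by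
    rw [norm_NX, norm_NX, Real.norm_eq_abs]
    exact (h.2.1 a x).le

def toNX : EuclideanSpace ℝ (Fin n) ≃ₗ[ℝ] NX h := LinearEquiv.refl ℝ _

lemma finrank_NX : Module.finrank ℝ (NX h) = n := by
  rw [← (toNX h).finrank_eq, finrank_euclideanSpace_fin]

end syn
section syn2
variable {n : ℕ} {N : EuclideanSpace ℝ (Fin n) → ℝ}

lemma N_cont (h : IsNorm N) : Continuous N := by
  have h1 : Continuous (toNX h) := (toNX h).toLinearMap.continuous_of_finiteDimensional
  exact h1.norm

lemma N_coer (h : IsNorm N) : ∃ C : ℝ, ∀ x, ‖x‖ ≤ C * N x := by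
  let L : NX h →L[ℝ] EuclideanSpace ℝ (Fin n) :=
    LinearMap.toContinuousLinearMap (toNX h).symm.toLinearMap
  exact ⟨‖L‖, fun x => L.le_opNorm (toNX h x)⟩

lemma K_compact (h : IsNorm N) : IsCompact {x | N x ≤ 1} := by
  obtain ⟨C, hC⟩ := N_coer h
  apply Metric.isCompact_of_isClosed_isBounded (isClosed_le (N_cont h) continuous_const)
  rw [isBounded_iff_forall_norm_le]
  refine ⟨|C|, fun x hx => (hC x).trans ?_⟩
  have h0 := N_nonneg h x
  have hx' : N x ≤ 1 := hx
  nlinarith [le_abs_self C, abs_nonneg C]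

lemma K_pos (h : IsNorm N) : 0 < volume {x | N x ≤ 1} := by
  have ho : IsOpen {x | N x < 1} := isOpen_lt (N_cont h) continuous_const
  refine (ho.measure_pos volume ⟨0, ?_⟩).trans_le (measure_mono (fun x (hx : N x < 1) => (le_of_lt hx : N x ≤ 1)))
  show N 0 < 1
  rw [N_zero h]; norm_num

lemma pick (hn : 0 < n) {c : ℝ} (hc : 0 < c) : ∃ s : ℝ, 0 < s ∧ s ^ n = c := by
  refine ⟨c ^ ((n:ℝ)⁻¹), by positivity, ?_⟩
  rw [← Real.rpow_natCast, ← Real.rpow_mul hc.le, inv_mul_cancel₀ (by positivity), Real.rpow_one]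

lemma MX_lower (h : IsNorm N) (hn : 0 < n) (s : ℝ) (hs : 0 < s)
    (hsv : s ^ n * volume.real {x | N x ≤ 1} ≤ volume.real (ball (0 : EuclideanSpace ℝ (Fin n)) 1) / 2) :
    s / 2 ≤ MX N := by
  haveI : NeZero n := ⟨hn.ne'⟩
  set b := volume.real (ball (0 : EuclideanSpace ℝ (Fin n)) 1) with hb
  have hbpos : 0 < b := by
    rw [hb, measureReal_def]
    exact ENNReal.toReal_pos (measure_ball_pos _ _ one_pos).ne' measure_ball_lt_top.ne
  set S := (volume : Measure (EuclideanSpace ℝ (Fin n))).toSphere with hS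
  have htot : S.real univ = n * b := by
    rw [hS, Measure.toSphere_real_apply_univ, finrank_euclideanSpace_fin]
  have hNc : Continuous fun σ : sphere (0 : EuclideanSpace ℝ (Fin n)) 1 => N σ :=
    (N_cont h).comp continuous_subtype_val
  have hIntg : Integrable (fun σ : sphere (0 : EuclideanSpace ℝ (Fin n)) 1 => N σ) S :=
    hNc.integrable_of_hasCompactSupport (HasCompactSupport.of_compactSpace _)
  have hA : MeasurableSet {σ : sphere (0 : EuclideanSpace ℝ (Fin n)) 1 | N σ < s} :=
    (isOpen_lt hNc continuous_const).measurableSet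
  have hsmall : S.real {σ : sphere (0 : EuclideanSpace ℝ (Fin n)) 1 | N σ < s} ≤ n * (b / 2) := by
    rw [measureReal_def, hS, Measure.toSphere_apply' _ hA, ENNReal.toReal_mul, ENNReal.toReal_natCast,
      finrank_euclideanSpace_fin]
    gcongr
    refine le_trans ?_ hsv
    have hsub : Ioo (0:ℝ) 1 • (Subtype.val '' {σ : sphere (0 : EuclideanSpace ℝ (Fin n)) 1 | N σ < s})
        ⊆ s • {x | N x ≤ 1} := by
      rintro _ ⟨c, hc, _, ⟨σ, hσ, rfl⟩, rfl⟩
      rw [mem_smul_set_iff_inv_smul_mem₀ hs.ne']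
      show N (s⁻¹ • c • (σ : EuclideanSpace ℝ (Fin n))) ≤ 1
      have hσ' : N σ < s := hσ
      rw [h.2.1, h.2.1, abs_of_pos (inv_pos.mpr hs), abs_of_pos hc.1, inv_mul_le_iff₀ hs, mul_one]
      have := N_nonneg h σ
      nlinarith [hc.1, hc.2]
    have hfin : volume (s • {x | N x ≤ 1}) ≠ ⊤ :=
      (((K_compact h).smul s).measure_lt_top).ne
    calc _ ≤ volume.real (s • {x | N x ≤ 1}) := ENNReal.toReal_mono hfin (measure_mono hsub)
      _ = _ := by
        rw [measureReal_def, Measure.addHaar_smul, ENNReal.toReal_mul,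
          ENNReal.toReal_ofReal (abs_nonneg _), finrank_euclideanSpace_fin, abs_of_pos (by positivity)]
        rfl
  have hbig : n * (b / 2) ≤ S.real {σ : sphere (0 : EuclideanSpace ℝ (Fin n)) 1 | s ≤ N σ} := by
    have hc := measureReal_compl (μ := S) hA
    rw [htot] at hc
    have he : ({σ : sphere (0 : EuclideanSpace ℝ (Fin n)) 1 | N σ < s}ᶜ : Set (sphere (0 : EuclideanSpace ℝ (Fin n)) 1)) =
        {σ : sphere (0 : EuclideanSpace ℝ (Fin n)) 1 | s ≤ N σ} := by
      ext σ; simp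
    rw [he] at hc
    rw [hc]; linarith
  have hmar := mul_meas_ge_le_integral_of_nonneg (μ := S) (Filter.Eventually.of_forall
    (fun σ => N_nonneg h (σ : EuclideanSpace ℝ (Fin n)))) hIntg s
  unfold MX
  rw [average_eq, ← hS, htot, smul_eq_mul, ← div_eq_inv_mul, le_div_iff₀ (by positivity)]
  calc s / 2 * (n * b) = s * (n * (b / 2)) := by ring
    _ ≤ _ := by gcongr
    _ ≤ _ := hmar

lemma Iq_lower (h : IsNorm N) {q : ℝ} (hq : 1 ≤ q) (hn : 0 < n) (t : ℝ) (ht : 0 < t)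
    (htv : t ^ n * volume.real (ball (0 : EuclideanSpace ℝ (Fin n)) 1) ≤ volume.real {x | N x ≤ 1} / 2) :
    t / 2 ≤ IqX q N := by
  haveI : NeZero n := ⟨hn.ne'⟩
  have hq0 : 0 < q := by linarith
  set K := {x | N x ≤ 1} with hK
  set v := volume.real K with hv
  have hKf : volume K ≠ ⊤ := (K_compact h).measure_lt_top.ne
  have hvpos : 0 < v := ENNReal.toReal_pos (K_pos h).ne' hKf
  have hIntg : IntegrableOn (fun x : EuclideanSpace ℝ (Fin n) => ‖x‖ ^ q) K volume := by
    refine ContinuousOn.integrableOn_compact (K_compact h) ?_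
    exact (continuous_norm.rpow_const (fun x => Or.inr hq0.le)).continuousOn
  have hmar := mul_meas_ge_le_integral_of_nonneg (μ := volume.restrict K) (Filter.Eventually.of_forall
    (fun x => by positivity)) hIntg (t ^ q)
  have hset : {x : EuclideanSpace ℝ (Fin n) | t ^ q ≤ ‖x‖ ^ q} = (ball 0 t)ᶜ := by
    ext x
    simp only [mem_ofPred_eq, mem_compl_iff, mem_ball, dist_zero_right, not_lt]
    exact Real.rpow_le_rpow_iff ht.le (norm_nonneg _) hq0
  rw [hset] at hmar
  have hbt : volume.real (ball (0 : EuclideanSpace ℝ (Fin n)) t) ≤ v / 2 := by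
    refine le_trans (le_of_eq ?_) htv
    rw [measureReal_def, Measure.addHaar_ball _ _ ht.le, ENNReal.toReal_mul,
      ENNReal.toReal_ofReal (by positivity), finrank_euclideanSpace_fin]
    rfl
  haveI : IsFiniteMeasure (volume.restrict K) := ⟨by
    rw [Measure.restrict_apply_univ]; exact hKf.lt_top⟩
  have hbig : v / 2 ≤ (volume.restrict K).real (ball (0 : EuclideanSpace ℝ (Fin n)) t)ᶜ := by
    rw [measureReal_compl measurableSet_ball]
    have e1 : (volume.restrict K).real univ = v := by
      rw [measureReal_def, Measure.restrict_apply_univ]; rfl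
    have e2 : (volume.restrict K).real (ball (0 : EuclideanSpace ℝ (Fin n)) t) ≤ v / 2 := by
      refine le_trans ?_ hbt
      exact ENNReal.toReal_mono measure_ball_lt_top.ne (Measure.restrict_apply_le _ _)
    rw [e1]; linarith
  have hav : t ^ q / 2 ≤ ⨍ x in K, ‖x‖ ^ q := by
    rw [setAverage_eq, smul_eq_mul, ← div_eq_inv_mul, le_div_iff₀ hvpos]
    calc t ^ q / 2 * v = t ^ q * (v / 2) := by ring
      _ ≤ _ := by gcongr
      _ ≤ _ := hmar
  unfold IqX
  calc t / 2 = ((t / 2) ^ q) ^ (1 / q) := by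
        rw [← Real.rpow_mul (by positivity), mul_one_div_cancel hq0.ne', Real.rpow_one]
    _ ≤ _ := by
        apply Real.rpow_le_rpow (by positivity) _ (by positivity)
        refine le_trans ?_ hav
        rw [Real.div_rpow ht.le (by norm_num)]
        have : (2:ℝ) ≤ 2 ^ q := by
          calc (2:ℝ) = 2 ^ (1:ℝ) := by simp
            _ ≤ _ := Real.rpow_le_rpow_of_exponent_le (by norm_num) hq
        gcongr

lemma IM_lower (h : IsNorm N) {q : ℝ} (hq : 1 ≤ q) (hn : 0 < n) : 1 / 16 ≤ IqX q N * MX N := by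
  haveI : NeZero n := ⟨hn.ne'⟩
  set b := volume.real (ball (0 : EuclideanSpace ℝ (Fin n)) 1) with hb
  have hbpos : 0 < b :=
    ENNReal.toReal_pos (measure_ball_pos _ _ one_pos).ne' measure_ball_lt_top.ne
  set v := volume.real {x | N x ≤ 1} with hv
  have hvpos : 0 < v := ENNReal.toReal_pos (K_pos h).ne' (K_compact h).measure_lt_top.ne
  obtain ⟨s, hs, hs'⟩ := pick hn (c := b / (2 * v)) (by positivity)
  obtain ⟨t, ht, ht'⟩ := pick hn (c := v / (2 * b)) (by positivity)
  have h1 := MX_lower h hn s hs (by rw [hs', ← hv, ← hb]; apply le_of_eq; field_simp)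
  have h2 := Iq_lower h hq hn t ht (by rw [ht', ← hv, ← hb]; apply le_of_eq; field_simp)
  have h3 : (s * t) ^ n = 1 / 4 := by
    rw [mul_pow, hs', ht']; field_simp; norm_num
  have h4 : 1 / 4 ≤ s * t := by
    by_contra hlt
    push Not at hlt
    have := pow_le_of_le_one (by positivity) (by linarith : s * t ≤ 1) hn.ne'
    linarith
  calc (1:ℝ) / 16 ≤ (t / 2) * (s / 2) := by linarith
    _ ≤ _ := mul_le_mul h2 h1 (by positivity) (by linarith)

end syn2
end Pf

namespace Pf

lemma num_bound {q n m ε w a Z : ℝ} (hq : 2 ≤ q) (hn : 1 ≤ n) (hm : 1 ≤ m) (h0 : 0 < ε)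
    (hw : 1 / 16 ≤ w) (ha : a = 1 / 10240)
    (hZ : Z = 640 ^ (n + q) * (n * m) ^ q / ε ^ (n + q)) :
    4 * Z ≤ (n ^ ((5 : ℝ) / 4) * Real.sqrt w * m) ^ q / (a * ε) ^ (n + q) := by
  have hs : 1 / 4 ≤ Real.sqrt w := by
    apply Real.le_sqrt_of_sq_le; linarith
  have hn5 : n ≤ n ^ ((5 : ℝ) / 4) := by
    calc n = n ^ (1:ℝ) := by simp
      _ ≤ _ := Real.rpow_le_rpow_of_exponent_le hn (by norm_num)
  have h1 : (1 / 4 * (n * m)) ^ q ≤ (n ^ ((5 : ℝ) / 4) * Real.sqrt w * m) ^ q := by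
    apply Real.rpow_le_rpow (by positivity) _ (by linarith)
    calc 1 / 4 * (n * m) = n * (1 / 4) * m := by ring
      _ ≤ _ := by gcongr
  have h2 : 4 * Z ≤ (1 / 4 * (n * m)) ^ q / (a * ε) ^ (n + q) := by
    have hε : 0 < ε ^ (n + q) := by positivity
    have hnm : 0 < (n * m) ^ q := by positivity
    have ha' : a ^ (n + q) = (640 ^ (n + q) * 16 ^ (n + q))⁻¹ := by
      rw [← Real.mul_rpow (by norm_num) (by norm_num), ← Real.inv_rpow (by norm_num), ha]
      norm_num
    have h16 : (4:ℝ) * 4 ^ q ≤ 16 ^ (n + q) := by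
      calc (4:ℝ) * 4 ^ q ≤ 16 ^ n * 16 ^ q := by
            apply mul_le_mul _ _ (by positivity) (by positivity)
            · calc (4:ℝ) ≤ 16 ^ (1:ℝ) := by norm_num
                _ ≤ _ := Real.rpow_le_rpow_of_exponent_le (by norm_num) hn
            · exact Real.rpow_le_rpow (by norm_num) (by norm_num) (by linarith)
        _ = _ := (Real.rpow_add (by norm_num) _ _).symm
    rw [Real.mul_rpow (by norm_num) (by positivity),
      Real.mul_rpow (x := a) (by rw [ha]; norm_num) h0.le, ha', hZ,
      Real.div_rpow (by norm_num) (by norm_num), Real.one_rpow]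
    have h4 : (0:ℝ) < 4 ^ q := by positivity
    have h640 : (0:ℝ) < 640 ^ (n + q) := by positivity
    have e : 1 / 4 ^ q * (n * m) ^ q / ((640 ^ (n + q) * 16 ^ (n + q))⁻¹ * ε ^ (n + q)) =
        (16 ^ (n + q) / 4 ^ q) * (640 ^ (n + q) * (n * m) ^ q / ε ^ (n + q)) := by
      field_simp
    rw [e]
    have : (4:ℝ) ≤ 16 ^ (n + q) / 4 ^ q := by rwa [le_div_iff₀ h4]
    gcongr
  refine h2.trans ?_
  have : 0 < (a * ε) ^ (n + q) := by
    have : 0 < a := by rw [ha]; norm_num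
    positivity
  gcongr

lemma Z_bound {q m ε : ℝ} {n : ℕ} (hq : 2 ≤ q) (hm : 1 ≤ m) (h0 : 0 < ε) :
    2 * (128 * n * m / ε) ^ q * (640 / ε) ^ n ≤
      640 ^ ((n:ℝ) + q) * (n * m) ^ q / ε ^ ((n:ℝ) + q) := by
  have e1 : (128 * n * m / ε) ^ q = 128 ^ q * (n * m) ^ q / ε ^ q := by
    rw [Real.div_rpow (by positivity) h0.le, mul_assoc, Real.mul_rpow (by norm_num) (by positivity)]
  rw [e1, Real.rpow_add (by norm_num), Real.rpow_add h0, Real.rpow_natCast, Real.rpow_natCast,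
    div_pow]
  have h2 : (2:ℝ) * 128 ^ q ≤ 640 ^ q := by
    calc (2:ℝ) * 128 ^ q ≤ 2 ^ q * 128 ^ q := by
          gcongr
          calc (2:ℝ) = 2 ^ (1:ℝ) := by simp
            _ ≤ _ := Real.rpow_le_rpow_of_exponent_le (by norm_num) (by linarith)
      _ = 256 ^ q := by rw [← Real.mul_rpow (by norm_num) (by norm_num)]; norm_num
      _ ≤ _ := Real.rpow_le_rpow (by norm_num) (by norm_num) (by linarith)
  calc 2 * (128 ^ q * (n * m) ^ q / ε ^ q) * (640 ^ n / ε ^ n)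
      = (2 * 128 ^ q) * ((n * m) ^ q * 640 ^ n / (ε ^ n * ε ^ q)) := by field_simp
    _ ≤ 640 ^ q * ((n * m) ^ q * 640 ^ n / (ε ^ n * ε ^ q)) := by gcongr
    _ = _ := by ring

lemma Z_ge {q m ε n : ℝ} (hq : 2 ≤ q) (hn : 1 ≤ n) (hm : 1 ≤ m) (h0 : 0 < ε) (h1 : ε ≤ 1) :
    640 * n ≤ 640 ^ (n + q) * (n * m) ^ q / ε ^ (n + q) := by
  have hε : 0 < ε ^ (n + q) := by positivity
  have hε1 : ε ^ (n + q) ≤ 1 := Real.rpow_le_one h0.le h1 (by linarith)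
  rw [le_div_iff₀ hε]
  have a1 : (640:ℝ) ≤ 640 ^ (n + q) := by
    calc (640:ℝ) = 640 ^ (1:ℝ) := by simp
      _ ≤ _ := Real.rpow_le_rpow_of_exponent_le (by norm_num) (by linarith)
  have a2 : n ≤ (n * m) ^ q := by
    have : 1 ≤ n * m := by nlinarith
    calc n ≤ n * m := by nlinarith
      _ = (n * m) ^ (1:ℝ) := by simp
      _ ≤ _ := Real.rpow_le_rpow_of_exponent_le this (by linarith)
  calc 640 * n * ε ^ (n + q) ≤ 640 * n * 1 := by gcongr
    _ = 640 * n := by ring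
    _ ≤ _ := by gcongr

lemma uaap_bdd {n : ℕ} (N : EuclideanSpace ℝ (Fin n) → ℝ) (Y : Type u)
    [NormedAddCommGroup Y] [NormedSpace ℝ Y] (ε : ℝ) : BddAbove (uaapSetN N Y ε) :=
  ⟨1, fun _ hr => hr.1.2.le⟩

lemma main_nontriv {q : ℝ} (hq : 2 ≤ q) {n : ℕ} (hn : 0 < n)
    {N : EuclideanSpace ℝ (Fin n) → ℝ} (h : IsNorm N)
    (Y : Type u) [NormedAddCommGroup Y] [NormedSpace ℝ Y] [CompleteSpace Y] [Nontrivial Y]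
    {m : ℝ} (hm0 : 0 ≤ m) (hY : MartCotypeBound q Y m) {ε : ℝ} (h0 : 0 < ε) (h1 : ε ≤ 1) :
    Real.exp (-((n : ℝ) ^ ((5 : ℝ) / 4) * Real.sqrt (IqX q N * MX N) * m) ^ q
            / ((1 / 10240) * ε) ^ ((n : ℝ) + q)) ≤ sSup (uaapSetN N Y ε) := by
  have hm : 1 ≤ m := one_le_m (by linarith) hm0 hY
  have hn1 : (1:ℝ) ≤ n := by exact_mod_cast hn
  obtain ⟨Z, hZ⟩ : ∃ Z : ℝ, Z = 640 ^ ((n:ℝ) + q) * (n * m) ^ q / ε ^ ((n:ℝ) + q) := ⟨_, rfl⟩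
  have hb := num_bound hq hn1 hm h0 (IM_lower h (by linarith : 1 ≤ q) hn) rfl hZ
  have hz := Z_ge hq hn1 hm h0 h1
  have hz2 := Z_bound (n := n) hq hm h0
  rw [← hZ] at hz hz2
  obtain ⟨T, hT⟩ : ∃ T : ℕ, T = ⌊Z⌋₊ + 1 := ⟨_, rfl⟩
  have hT1 : Z < T := by rw [hT]; push_cast; exact Nat.lt_floor_add_one Z
  have hT2 : (T:ℝ) ≤ Z + 1 := by
    rw [hT]; push_cast
    linarith [Nat.floor_le (by linarith : 0 ≤ Z)]
  have hr : Real.exp (-(4 * Z)) ≤ (1/2:ℝ)^T * (1/(2*n)) := by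
    have e1 : Real.exp (-(T:ℝ)) ≤ (1/2:ℝ)^T := by
      have : Real.exp (-(T:ℝ)) = (Real.exp (-1)) ^ T := by
        rw [← Real.exp_nat_mul]; ring_nf
      rw [this]
      gcongr
      rw [Real.exp_neg, one_div]
      gcongr
      linarith [Real.add_one_le_exp 1]
    have e2 : Real.exp (-(2*n:ℝ)) ≤ 1/(2*n) := by
      rw [Real.exp_neg, one_div]
      gcongr
      linarith [Real.add_one_le_exp (2*n:ℝ)]
    calc Real.exp (-(4 * Z)) ≤ Real.exp (-(T:ℝ) + -(2*n:ℝ)) := by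
          apply Real.exp_le_exp.mpr; linarith
      _ = Real.exp (-(T:ℝ)) * Real.exp (-(2*n:ℝ)) := Real.exp_add _ _
      _ ≤ _ := by gcongr
  have hmem : (1/2:ℝ)^T * (1/(2*n)) ∈ uaapSetN N Y ε := by
    refine ⟨⟨by positivity, ?_⟩, fun f hf => ?_⟩
    · have a1 : (1/2:ℝ)^T ≤ 1 := pow_le_one₀ (by norm_num) (by norm_num)
      have a2 : (1:ℝ)/(2*n) ≤ 1/2 := by
        apply one_div_le_one_div_of_le <;> linarith
      have a3 : (0:ℝ) < 1/(2*n) := by positivity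
      nlinarith
    · have hfr := finrank_NX h
      have := core2 (X := NX h) (by rw [hfr]; exact hn) (by linarith : 1 ≤ q) hm0 hY
        (fun x => f ((toNX h).symm x)) (fun x y hx hy => hf _ hx _ hy) ε h0 h1 T
        (by rw [hfr]; exact hz2.trans_lt hT1)
      rw [hfr] at this
      obtain ⟨ρ, h1, h2, x, hx, Λ, hΛ⟩ := this
      refine ⟨ρ, h1, (toNX h).symm x, ?_, Λ.comp (toNX h).toLinearMap.toAffineMap, ?_⟩
      · intro y (hy : N (y - (toNX h).symm x) ≤ ρ)
        show N y ≤ 1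
        have hx' : N ((toNX h).symm x) ≤ 1 / 2 := hx
        have := h.2.2 (y - (toNX h).symm x) ((toNX h).symm x)
        rw [sub_add_cancel] at this
        linarith
      · intro y hy
        exact hΛ (toNX h y) hy
  refine le_trans ?_ ((hr).trans (le_csSup (uaap_bdd N Y ε) hmem))
  apply Real.exp_le_exp.mpr
  rw [neg_div]
  linarith

lemma main_triv {n : ℕ} {N : EuclideanSpace ℝ (Fin n) → ℝ}
    (Y : Type u) [NormedAddCommGroup Y] [NormedSpace ℝ Y] [Subsingleton Y]
    {ε : ℝ} (h0 : 0 < ε) : 1 ≤ sSup (uaapSetN N Y ε) := by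
  apply le_of_forall_lt_imp_le_of_dense
  intro r hr
  have hmem : max r (1/2) ∈ uaapSetN N Y ε := by
    have hp : (0:ℝ) < max r (1/2) := lt_max_of_lt_right (by norm_num)
    have hp1 : max r (1/2) < 1 := max_lt hr (by norm_num)
    refine ⟨⟨hp, hp1⟩, fun f _ => ⟨_, le_rfl, 0, ?_, 0, ?_⟩⟩
    · intro y (hy : N (y - 0) ≤ _)
      show N y ≤ 1
      rw [sub_zero] at hy
      linarith
    · intro y _
      rw [Subsingleton.elim (f y - _) 0, norm_zero]
      positivity
  exact (le_max_left _ _).trans (le_csSup (uaap_bdd N Y ε) hmem)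

end Pf

/-- **Refined quantitative differentiation.** There is a universal `a ∈ (0,1)` such that for
every `q ∈ [2,∞)`, `n ∈ ℕ`, every `n`-dimensional normed space `X = (ℝⁿ, N)` endowed with a
Hilbertian norm (the Euclidean one), every Banach space `Y` of martingale cotype `q`
(with constant `m`), and every `ε ∈ (0,1/2)`:
`r^{X→Y}(ε) ≥ exp(−(n^{5/4}·√(I_q(X)M(X))·𝔪_q(Y))^q / (aε)^{n+q})`. -/
theorem statement1 :
    ∃ a : ℝ, 0 < a ∧ a < 1 ∧
      ∀ (q : ℝ), 2 ≤ q → ∀ (n : ℕ), 0 < n →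
      ∀ (N : EuclideanSpace ℝ (Fin n) → ℝ), IsNorm N →
      ∀ (Y : Type u) [NormedAddCommGroup Y] [NormedSpace ℝ Y] [CompleteSpace Y],
      ∀ m : ℝ, 0 ≤ m → MartCotypeBound q Y m →
      ∀ ε : ℝ, ε ∈ Set.Ioo (0 : ℝ) (1 / 2) →
        Real.exp (-((n : ℝ) ^ ((5 : ℝ) / 4) * Real.sqrt (IqX q N * MX N) * m) ^ q
            / (a * ε) ^ ((n : ℝ) + q))
          ≤ sSup (uaapSetN N Y ε) := by
  refine ⟨1 / 10240, by norm_num, by norm_num, ?_⟩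
  intro q hq n hn N h Y _ _ _ m hm hY ε hε
  rcases subsingleton_or_nontrivial Y with hs | hs
  · refine le_trans ?_ (Pf.main_triv (N := N) Y hε.1)
    have h0 := hε.1
    rw [Real.exp_le_one_iff, neg_div]
    have hI : 1 / 16 ≤ IqX q N * MX N := Pf.IM_lower h (by linarith) hn
    have := Real.sqrt_nonneg (IqX q N * MX N)
    have : 0 ≤ ((n : ℝ) ^ ((5 : ℝ) / 4) * Real.sqrt (IqX q N * MX N) * m) ^ q
            / ((1 / 10240) * ε) ^ ((n : ℝ) + q) := by positivity
    linarith
  · exact Pf.main_nontriv hq hn h Y hm hY hε.1 (by linarith [hε.2])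
end
end
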